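/- arXiv:2403.11471 — 18 statements merged into one kernel-verified Lean document; each statement's English description precedes it below -/
import Mathlib

section
/- Let ℓ > 1, m > 0 and k > 0 be reals, and let v : [0,1] → ℝ be continuously differentiable with v(0) = 0 and |v(Z)| < 1 for all Z ∈ [0,1]. If ((1 − Z·v(Z))² − ℓ·(v(Z) − Z)²)·v′(Z) = (1 − v(Z)²)·(m·(1 − v(Z)²) − k·v(Z)·(1/Z − v(Z))) for every Z ∈ (0,1], then k > m·(1 + 1/√ℓ). -/
open Set

/-- Necessary restriction on the parameters: any `C¹` solution `v : [0,1] → (-1,1)` of the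
self-similar relativistic Euler ODE with `v(0) = 0` forces `k > m (1 + 1/√ℓ)`. -/
theorem parameter_range_of_solution (ℓ m k : ℝ) (hℓ : 1 < ℓ) (hm : 0 < m) (hk : 0 < k)
    (v v' : ℝ → ℝ)
    (hderiv : ∀ Z ∈ Icc (0 : ℝ) 1, HasDerivWithinAt v (v' Z) (Icc 0 1) Z)
    (hcont : ContinuousOn v' (Icc 0 1))
    (hv0 : v 0 = 0)
    (hbound : ∀ Z ∈ Icc (0 : ℝ) 1, |v Z| < 1)
    (hode : ∀ Z ∈ Ioc (0 : ℝ) 1,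
      ((1 - Z * v Z) ^ 2 - ℓ * (v Z - Z) ^ 2) * v' Z
        = (1 - (v Z) ^ 2) * (m * (1 - (v Z) ^ 2) - k * v Z * (1 / Z - v Z))) :
    k > m * (1 + 1 / Real.sqrt ℓ) := by
  have hvc : ContinuousOn v (Icc 0 1) := fun Z hZ => (hderiv Z hZ).continuousWithinAt
  obtain ⟨s, hs⟩ : ∃ s, s = 1 / Real.sqrt ℓ := ⟨_, rfl⟩
  have hq1 : 1 < Real.sqrt ℓ := by
    rw [Real.lt_sqrt (by norm_num)]; simpa using hℓ
  have hs0 : 0 < s := by rw [hs]; positivity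
  have hs1 : s < 1 := by rw [hs, div_lt_one (by linarith)]; exact hq1
  have hsl : ℓ * s ^ 2 = 1 := by
    rw [hs, div_pow, Real.sq_sqrt (by linarith)]; field_simp
  rw [← hs]
  have hlt : ∀ Z ∈ Icc (0 : ℝ) 1, -1 < v Z ∧ v Z < 1 := fun Z hZ => abs_lt.mp (hbound Z hZ)
  -- the derivative at zero
  have hd0 : 0 < v' 0 := by
    have h0 : (0 : ℝ) ∈ Icc (0 : ℝ) 1 := by simp
    have hsub : Ioc (0 : ℝ) 1 ⊆ Icc 0 1 := Ioc_subset_Icc_self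
    have hA : Filter.Tendsto v (nhdsWithin 0 (Ioc 0 1)) (nhds 0) := by
      have := ((hvc 0 h0).mono hsub).tendsto
      rwa [hv0] at this
    have hB : Filter.Tendsto v' (nhdsWithin 0 (Ioc 0 1)) (nhds (v' 0)) :=
      ((hcont 0 h0).mono hsub).tendsto
    have hI : Filter.Tendsto (fun Z : ℝ => Z) (nhdsWithin 0 (Ioc 0 1)) (nhds 0) :=
      Filter.tendsto_id.mono_left nhdsWithin_le_nhds
    have hS : Filter.Tendsto (slope v 0) (nhdsWithin 0 (Ioc 0 1)) (nhds (v' 0)) :=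
      (hasDerivWithinAt_iff_tendsto_slope' (by simp)).mp ((hderiv 0 h0).mono hsub)
    have hL : Filter.Tendsto (fun Z => ((1 - Z * v Z) ^ 2 - ℓ * (v Z - Z) ^ 2) * v' Z)
        (nhdsWithin 0 (Ioc 0 1)) (nhds (((1 - 0 * 0) ^ 2 - ℓ * (0 - 0) ^ 2) * v' 0)) :=
      ((((hI.mul hA).const_sub 1).pow 2).sub (((hA.sub hI).pow 2).const_mul ℓ)).mul hB
    have hR : Filter.Tendsto (fun Z => (1 - (v Z) ^ 2) * (m * (1 - (v Z) ^ 2)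
          - k * (slope v 0 Z - v Z ^ 2)))
        (nhdsWithin 0 (Ioc 0 1))
        (nhds ((1 - (0 : ℝ) ^ 2) * (m * (1 - 0 ^ 2) - k * (v' 0 - 0 ^ 2)))) :=
      ((hA.pow 2).const_sub 1).mul
        ((((hA.pow 2).const_sub 1).const_mul m).sub ((hS.sub (hA.pow 2)).const_mul k))
    have hR' := hR.congr' (f₂ := fun Z => ((1 - Z * v Z) ^ 2 - ℓ * (v Z - Z) ^ 2) * v' Z) (by
      filter_upwards [self_mem_nhdsWithin] with Z hZ
      rw [hode Z hZ, slope_def_field, hv0]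
      ring)
    have hne : (nhdsWithin (0 : ℝ) (Ioc 0 1)).NeBot := by
      rw [nhdsWithin_Ioc_eq_nhdsGT (by norm_num : (0 : ℝ) < 1)]; infer_instance
    have heq := tendsto_nhds_unique hL hR'
    have h1 : v' 0 * (1 + k) = m := by linarith
    by_contra hneg
    nlinarith
  -- first crossing of the sonic curve
  have hFc : ContinuousOn (fun Z => Z - v Z - s * (1 - Z * v Z)) (Icc 0 1) := by fun_prop
  obtain ⟨Z1, ⟨hZ1, hF1⟩, hmin⟩ : ∃ Z1, IsLeast
      {Z | Z ∈ Icc (0 : ℝ) 1 ∧ 0 ≤ Z - v Z - s * (1 - Z * v Z)} Z1 := by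
    have hcl := hFc.preimage_isClosed_of_isClosed isClosed_Icc (isClosed_Ici (a := (0 : ℝ)))
    refine (isCompact_Icc.of_isClosed_subset hcl inter_subset_left).exists_isLeast ⟨1, ?_⟩
    refine ⟨by simp, ?_⟩
    have := (hlt 1 (by simp)).2
    show (0 : ℝ) ≤ 1 - v 1 - s * (1 - 1 * v 1)
    nlinarith
  have hsub : Icc 0 Z1 ⊆ Icc (0 : ℝ) 1 := Icc_subset_Icc_right hZ1.2
  have hFz : Z1 - v Z1 - s * (1 - Z1 * v Z1) = 0 := by
    have := intermediate_value_Icc hZ1.1 (hFc.mono hsub)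
    obtain ⟨z, hz, hz0⟩ := this ⟨by simp [hv0, hs0.le], hF1⟩
    have hz0' : z - v z - s * (1 - z * v z) = 0 := hz0
    have : Z1 ≤ z := hmin ⟨hsub hz, hz0'.ge⟩
    have : z = Z1 := le_antisymm hz.2 this
    rwa [this] at hz0'
  have hZpos : 0 < Z1 := by
    rcases hZ1.1.eq_or_lt with h | h
    · rw [← h, hv0] at hFz; linarith
    · exact h
  have hnn : 0 ≤ v Z1 := by
    have := image_le_of_deriv_right_lt_deriv_boundary' (f := fun x => - v x)
      (f' := fun x => - v' x) (a := 0) (b := Z1) (B := fun _ => 0) (B' := fun _ => 0)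
      (hvc.mono hsub).neg
      (fun x hx => by
        have hx1 : x < 1 := lt_of_lt_of_le hx.2 hZ1.2
        refine ((hderiv x ⟨hx.1, hx1.le⟩).mono_of_mem_nhdsWithin ?_).neg
        exact Filter.mem_of_superset (Icc_mem_nhdsGE hx1) (Icc_subset_Icc_left hx.1))
      (by simp [hv0]) continuousOn_const (fun x _ => hasDerivWithinAt_const _ _ _)
      (fun x hx h0 => by
        have hv : v x = 0 := by simpa using h0
        rcases hx.1.eq_or_lt with h | h
        · rw [← h]; simpa using hd0
        have hx1 : x < 1 := lt_of_lt_of_le hx.2 hZ1.2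
        have hxs : x < s := by
          by_contra hc
          have : Z1 ≤ x := hmin ⟨⟨hx.1, hx1.le⟩, by rw [hv]; linarith⟩
          linarith [hx.2]
        have ho := hode x ⟨h, hx1.le⟩
        rw [hv] at ho
        have hD : 0 < 1 - ℓ * x ^ 2 := by
          have : x ^ 2 < s ^ 2 := by nlinarith
          nlinarith
        have ho' : (1 - ℓ * x ^ 2) * v' x = m := by linarith
        have : 0 < v' x := by
          by_contra hc
          nlinarith
        linarith)
    have := this ⟨hZ1.1, le_rfl⟩
    simpa using this
  -- algebra at the sonic point
  obtain ⟨hl, hu⟩ := hlt Z1 hZ1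
  have ho := hode Z1 ⟨hZpos, hZ1.2⟩
  generalize v Z1 = w at *
  have hZe : Z1 * (1 + s * w) = w + s := by linarith
  have hD : (1 - Z1 * w) ^ 2 - ℓ * (w - Z1) ^ 2 = 0 := by
    have : w - Z1 = - (s * (1 - Z1 * w)) := by linarith
    rw [this]
    linear_combination (-(1 - Z1 * w) ^ 2) * hsl
  rw [hD, zero_mul] at ho
  have hw2 : 0 < 1 - w ^ 2 := by nlinarith
  have h2 : m * (1 - w ^ 2) - k * w * (1 / Z1 - w) = 0 := by
    rcases mul_eq_zero.mp ho.symm with h | h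
    · linarith
    · exact h
  have h3 : m * (1 - w ^ 2) * Z1 = k * w * (1 - Z1 * w) := by
    field_simp at h2
    linarith
  have h4 : (1 - Z1 * w) * (1 + s * w) = 1 - w ^ 2 := by linear_combination (-w) * hZe
  have h5 : (1 - w ^ 2) * (m * (w + s)) = (1 - w ^ 2) * (k * w) := by
    linear_combination (1 + s * w) * h3 + k * w * h4 - m * (1 - w ^ 2) * hZe
  have h6 : m * (w + s) = k * w := mul_left_cancel₀ hw2.ne' h5
  have hms : 0 < m * s := mul_pos hm hs0
  have hw : 0 < w := by
    rcases hnn.eq_or_lt with h | h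
    · rw [← h] at h6; linarith
    · exact h
  have h7 : w * (m * (1 + s)) < w * k := by nlinarith
  exact lt_of_mul_lt_mul_left h7 hw.le
end

section
/- Assume m > 0, ℓ > 1 and k is a positive integer with k > m·(1 + 1/√ℓ); set Z₁ := k√ℓ/(ℓ(k−m) + m) and v₁ := m/((k−m)√ℓ). Then there exists exactly one function v : [0, Z₁) → ℝ, infinitely differentiable on [0, Z₁), with v(0) = 0, Δ_Z(Z, v(Z)) > 0 for all Z ∈ (0, Z₁) and Δ_Z(Z, v(Z))·v′(Z) = Δ_v(Z, v(Z)) for all Z ∈ [0, Z₁); moreover this solution satisfies Δ_v(Z, v(Z)) > 0 and 0 < v(Z) < 1 for all Z ∈ (0, Z₁), v′(0) = m/(k+1), and v(Z) → v₁ as Z ↑ Z₁. -/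
open Real Set Filter Topology

/-- Numerator of the self-similar relativistic Euler ODE `dv/dZ = Δ_v / Δ_Z`. -/
noncomputable def Deltav (m k Z v : ℝ) : ℝ :=
  (1 - v ^ 2) * (m * (1 - v ^ 2) * Z - k * v * (1 - v * Z))

/-- Denominator of the self-similar relativistic Euler ODE `dv/dZ = Δ_v / Δ_Z`. -/
noncomputable def DeltaZ (ℓ Z v : ℝ) : ℝ :=
  Z * ((1 - Z * v) ^ 2 - ℓ * (v - Z) ^ 2)

/-- The averaging operator `h ↦ ∫₀¹ s^n h(ts) ds` on continuous functions. -/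
noncomputable def avgFun (n : ℕ) (h : C(unitInterval, ℝ)) : C(unitInterval, ℝ) where
  toFun t := ∫ s : unitInterval, (s : ℝ) ^ n * h (t * s)
  continuous_toFun := by
    have := continuous_parametric_integral_of_continuous (μ := (MeasureTheory.volume : MeasureTheory.Measure unitInterval))
      (f := fun (t s : unitInterval) => (s : ℝ) ^ n * h (t * s)) (by
        unfold Function.uncurry; fun_prop) (s := Set.univ) isCompact_univ
    simpa using this

lemma avg_integrable (n : ℕ) (h : C(unitInterval, ℝ)) (t : unitInterval) :
    MeasureTheory.Integrable (fun s : unitInterval => (s : ℝ) ^ n * h (t * s)) := by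
  apply Continuous.integrable_of_hasCompactSupport
  · fun_prop
  · exact HasCompactSupport.of_compactSpace _

noncomputable def avgL (n : ℕ) : C(unitInterval, ℝ) →L[ℝ] C(unitInterval, ℝ) :=
  LinearMap.mkContinuous
    { toFun := avgFun n
      map_add' := by
        intro x y
        ext t
        simp only [avgFun, ContinuousMap.coe_mk, ContinuousMap.add_apply, mul_add]
        exact MeasureTheory.integral_add (avg_integrable n x t) (avg_integrable n y t)
      map_smul' := by
        intro c x
        ext t
        simp only [avgFun, ContinuousMap.coe_mk, ContinuousMap.smul_apply, smul_eq_mul,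
          RingHom.id_apply]
        rw [← MeasureTheory.integral_const_mul]
        congr 1; ext s; ring } 1 (by
      intro h
      rw [one_mul, ContinuousMap.norm_le _ (norm_nonneg _)]
      intro t
      simp only [avgFun, LinearMap.coe_mk, AddHom.coe_mk, ContinuousMap.coe_mk]
      have := MeasureTheory.norm_integral_le_of_norm_le_const
        (μ := (MeasureTheory.volume : MeasureTheory.Measure unitInterval))
        (f := fun s : unitInterval => (s : ℝ) ^ n * h (t * s)) (C := ‖h‖) (by
          refine Filter.Eventually.of_forall fun s => ?_
          rw [norm_mul]
          have h1 : ‖(s : ℝ) ^ n‖ ≤ 1 := by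
            rw [norm_pow]
            apply pow_le_one₀ (norm_nonneg _)
            rw [Real.norm_eq_abs, abs_le]; constructor <;> linarith [s.2.1, s.2.2]
          have h2 := h.norm_coe_le_norm (t * s)
          have := norm_nonneg (h (t * s))
          nlinarith)
      simpa using this)

lemma avgL_apply (n : ℕ) (h : C(unitInterval, ℝ)) (t : unitInterval) :
    avgL n h t = ∫ s : unitInterval, (s : ℝ) ^ n * h (t * s) := rfl

noncomputable def scaleF (r : unitInterval) (h : C(unitInterval, ℝ)) : C(unitInterval, ℝ) where
  toFun t := h (r * t)
  continuous_toFun := by fun_prop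

lemma avgL_scale (n : ℕ) (r : unitInterval) (h : C(unitInterval, ℝ)) (t : unitInterval) :
    avgL n (scaleF r h) t = avgL n h (r * t) := by
  simp only [avgL_apply, scaleF, ContinuousMap.coe_mk, mul_assoc]

/-- the identity map of `[0,1]` as an element of `C([0,1])`. -/
def idF : C(unitInterval, ℝ) := ⟨fun t => (t : ℝ), by fun_prop⟩

noncomputable def Phi (m ℓ κ : ℝ) (n : ℕ) (p : ℝ × C(unitInterval, ℝ)) : C(unitInterval, ℝ) :=
  ((1 - (p.1 • idF) * avgL n p.2) ^ 2 - ℓ • (avgL n p.2 - p.1 • idF) ^ 2) * (p.2 - κ • avgL n p.2)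
   - (1 - (avgL n p.2) ^ 2) * (m • ((1 - (avgL n p.2) ^ 2) * (p.1 • idF))
       - κ • (avgL n p.2 * (1 - avgL n p.2 * (p.1 • idF)))) + m • p.1 • idF

lemma Phi_contDiff (m ℓ κ : ℝ) (n : ℕ) : ContDiff ℝ (⊤ : ℕ∞) (Phi m ℓ κ n) := by
  unfold Phi; fun_prop

lemma Phi_apply (m ℓ κ : ℝ) (n : ℕ) (e : ℝ) (h : C(unitInterval, ℝ)) (t : unitInterval) :
    Phi m ℓ κ n (e, h) t =
    ((1 - (e * t) * avgL n h t) ^ 2 - ℓ * (avgL n h t - e * t) ^ 2) * (h t - κ * avgL n h t)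
     - Deltav m κ (e * t) (avgL n h t) + m * (e * t) := by
  simp [Phi, idF, Deltav]; ring

lemma Phi_hasFDerivAt (m ℓ κ : ℝ) (n : ℕ) :
    HasFDerivAt (Phi m ℓ κ n) (ContinuousLinearMap.snd ℝ ℝ C(unitInterval, ℝ)) 0 := by
  have hx : HasFDerivAt (fun p : ℝ × C(unitInterval, ℝ) => p.1 • idF)
      ((ContinuousLinearMap.fst ℝ ℝ C(unitInterval, ℝ)).smulRight idF) 0 :=
    ((ContinuousLinearMap.fst ℝ ℝ C(unitInterval, ℝ)).smulRight idF).hasFDerivAt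
  have hV : HasFDerivAt (fun p : ℝ × C(unitInterval, ℝ) => avgL n p.2)
      ((avgL n).comp (ContinuousLinearMap.snd ℝ ℝ C(unitInterval, ℝ))) 0 :=
    ((avgL n).comp (ContinuousLinearMap.snd ℝ ℝ C(unitInterval, ℝ))).hasFDerivAt
  have hh : HasFDerivAt (fun p : ℝ × C(unitInterval, ℝ) => p.2)
      (ContinuousLinearMap.snd ℝ ℝ C(unitInterval, ℝ)) 0 :=
    (ContinuousLinearMap.snd ℝ ℝ C(unitInterval, ℝ)).hasFDerivAt
  have h1 := (((((hx.mul hV).const_sub 1).pow 2).sub (((hV.sub hx).pow 2).const_smul ℓ)).mul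
    (hh.sub (hV.const_smul κ))).sub
    (((hV.pow 2).const_sub 1).mul (((((hV.pow 2).const_sub 1).mul hx).const_smul m).sub
      ((hV.mul ((hV.mul hx).const_sub 1)).const_smul κ)))|>.add (hx.const_smul m)
  refine h1.congr_fderiv ?_
  apply ContinuousLinearMap.ext
  intro p
  simp

lemma scaleF_norm_le (r : unitInterval) (h : C(unitInterval, ℝ)) : ‖scaleF r h‖ ≤ ‖h‖ := by
  rw [ContinuousMap.norm_le _ (norm_nonneg _)]
  intro t
  exact ContinuousMap.norm_coe_le_norm h (r * t)

lemma local_family (m ℓ κ : ℝ) (n : ℕ) :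
    ∃ h : ℝ → C(unitInterval, ℝ), ContDiffAt ℝ (⊤ : ℕ∞) h 0 ∧ h 0 = 0 ∧
      ∃ δ > 0, ∀ e : ℝ, |e| < δ → Phi m ℓ κ n (e, h e) = m • e • idF ∧
        ∀ r : unitInterval, scaleF r (h e) = h (e * r) := by
  set Ψ : ℝ × C(unitInterval, ℝ) → ℝ × C(unitInterval, ℝ) := fun p => (p.1, Phi m ℓ κ n p) with hΨ
  have hc : ContDiffAt ℝ (⊤ : ℕ∞) Ψ 0 :=
    (contDiff_fst.prodMk (Phi_contDiff m ℓ κ n)).contDiffAt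
  have hd : HasFDerivAt Ψ
      ((ContinuousLinearEquiv.refl ℝ (ℝ × C(unitInterval, ℝ)) :
        (ℝ × C(unitInterval, ℝ)) ≃L[ℝ] (ℝ × C(unitInterval, ℝ))) :
          (ℝ × C(unitInterval, ℝ)) →L[ℝ] (ℝ × C(unitInterval, ℝ))) 0 := by
    refine (HasFDerivAt.prodMk hasFDerivAt_fst (Phi_hasFDerivAt m ℓ κ n)).congr_fderiv ?_
    rfl
  have hn : ((⊤ : ℕ∞) : WithTop ℕ∞) ≠ 0 := by simp
  have hΨ0 : Ψ 0 = 0 := by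
    simp [hΨ, Phi]
  set P := hc.toOpenPartialHomeomorph Ψ hd hn with hP
  have hPc : ∀ x, P x = Ψ x := fun x => rfl
  have hinv : ContDiffAt ℝ (⊤ : ℕ∞) P.symm 0 := by
    have := hc.to_localInverse hd hn
    rw [hΨ0] at this
    exact this
  have hsrc : (0 : ℝ × C(unitInterval, ℝ)) ∈ P.source := hc.mem_toOpenPartialHomeomorph_source hd hn
  have htgt : (0 : ℝ × C(unitInterval, ℝ)) ∈ P.target := by
    have := P.map_source hsrc
    rwa [hPc, hΨ0] at this
  have hs0 : P.symm 0 = 0 := by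
    have := P.left_inv hsrc
    rwa [hPc, hΨ0] at this
  set γ : ℝ → ℝ × C(unitInterval, ℝ) := fun e => (e, m • e • idF) with hγ
  have hγc : ContDiff ℝ (⊤ : ℕ∞) γ := by rw [hγ]; fun_prop
  have hγ0 : γ 0 = 0 := by simp [hγ]
  have hsym : ContDiffAt ℝ (⊤ : ℕ∞) (fun e => P.symm (γ e)) 0 := by
    apply ContDiffAt.comp (g := P.symm) (f := γ)
    · rw [hγ0]; exact hinv
    · exact hγc.contDiffAt
  refine ⟨fun e => (P.symm (γ e)).2, contDiff_snd.contDiffAt.comp (0 : ℝ) hsym, ?_, ?_⟩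
  · simp only [hγ0, hs0]; rfl
  obtain ⟨r, hr, hball⟩ := Metric.isOpen_iff.1 P.open_source 0 hsrc
  have hev1 : ∀ᶠ e in 𝓝 (0 : ℝ), P.symm (γ e) ∈ Metric.ball (0 : ℝ × C(unitInterval, ℝ)) r := by
    apply hsym.continuousAt.eventually_mem
    simp only [hγ0, hs0]
    exact Metric.ball_mem_nhds _ hr
  have hev2 : ∀ᶠ e in 𝓝 (0 : ℝ), γ e ∈ P.target := by
    apply hγc.continuous.continuousAt.eventually_mem
    rw [hγ0]
    exact P.open_target.mem_nhds htgt
  obtain ⟨δ, hδ, hev⟩ := Metric.eventually_nhds_iff.1 (hev1.and hev2)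
  refine ⟨δ, hδ, ?_⟩
  intro e he
  have hmain := hev (y := e) (by simpa [Real.dist_eq] using he)
  have hkey := P.right_inv hmain.2
  rw [hPc] at hkey
  have hk1 : (P.symm (γ e)).1 = e := congrArg Prod.fst hkey
  have hk2 : Phi m ℓ κ n (P.symm (γ e)) = m • e • idF := congrArg Prod.snd hkey
  have hpe : P.symm (γ e) = (e, (P.symm (γ e)).2) := Prod.ext hk1 rfl
  have hk3 : Phi m ℓ κ n (e, (P.symm (γ e)).2) = m • e • idF := by rw [← hpe]; exact hk2
  refine ⟨hk3, ?_⟩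
  intro s
  set q : ℝ × C(unitInterval, ℝ) := (e * s, scaleF s (P.symm (γ e)).2) with hq
  have hs : |(s : ℝ)| ≤ 1 := by rw [abs_le]; constructor <;> linarith [s.2.1, s.2.2]
  have hb := hmain.1
  rw [mem_ball_zero_iff, Prod.norm_def, max_lt_iff] at hb
  have hqb : q ∈ Metric.ball (0 : ℝ × C(unitInterval, ℝ)) r := by
    rw [mem_ball_zero_iff, Prod.norm_def, max_lt_iff]
    constructor
    · have := hb.1
      rw [hk1] at this
      simp only [hq, Real.norm_eq_abs, abs_mul] at this ⊢
      nlinarith [abs_nonneg e, abs_nonneg (s : ℝ)]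
    · exact lt_of_le_of_lt (scaleF_norm_le _ _) hb.2
  have hPq : P q = γ (e * s) := by
    rw [hPc]
    apply Prod.ext
    · rfl
    · ext t
      have := congrArg (fun f : C(unitInterval, ℝ) => f (s * t)) hk3
      simp only [Phi_apply] at this
      show Phi m ℓ κ n (e * s, scaleF s (P.symm (γ e)).2) t = (m • (e * s : ℝ) • idF) t
      rw [Phi_apply, avgL_scale]
      simp only [scaleF, ContinuousMap.coe_mk]
      simp only [Set.Icc.coe_mul, ContinuousMap.smul_apply, idF, ContinuousMap.coe_mk,
        smul_eq_mul, ← mul_assoc] at this ⊢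
      exact this
  have := P.left_inv (hball hqb)
  rw [hPq] at this
  exact (congrArg Prod.snd this).symm

lemma unit_integral (f : ℝ → ℝ) : ∫ s : unitInterval, f s = ∫ s in (0 : ℝ)..1, f s := by
  rw [MeasureTheory.integral_subtype measurableSet_Icc, intervalIntegral.integral_of_le zero_le_one,
    MeasureTheory.integral_Icc_eq_integral_Ioc]

lemma local_sol (m ℓ : ℝ) (k : ℕ) (hk : 1 ≤ k) :
    ∃ u : ℝ → ℝ, ContDiffAt ℝ (⊤ : ℕ∞) u 0 ∧ u 0 = 0 ∧ deriv u 0 = m / ((k : ℝ) + 1) ∧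
      ∀ᶠ Z in 𝓝[>] (0 : ℝ), DifferentiableAt ℝ u Z ∧
        DeltaZ ℓ Z (u Z) * deriv u Z = Deltav m (k : ℝ) Z (u Z) := by
  obtain ⟨n, rfl⟩ : ∃ n, k = n + 1 := ⟨k - 1, by omega⟩
  obtain ⟨h, hc, h0, δ, hδ, hh⟩ := local_family m ℓ ((n + 1 : ℕ) : ℝ) n
  set u : ℝ → ℝ := fun e => avgL n (h e) 1 with hu
  have huc : ContDiffAt ℝ (⊤ : ℕ∞) u 0 := by
    have h1 : ContDiffAt ℝ (⊤ : ℕ∞) (fun e => avgL n (h e)) 0 :=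
      (avgL n).contDiff.contDiffAt.comp (0 : ℝ) hc
    exact ((ContinuousMap.evalCLM ℝ (1 : unitInterval)).contDiff.contDiffAt).comp (0 : ℝ) h1
  set H : ℝ → ℝ := fun e => h e 1 with hH
  have hHc : ContDiffAt ℝ (⊤ : ℕ∞) H 0 := by
    exact ((ContinuousMap.evalCLM ℝ (1 : unitInterval)).contDiff.contDiffAt).comp (0 : ℝ) hc
  have hu0 : u 0 = 0 := by simp [hu, h0]
  have hHs : ∀ e, |e| < δ → ∀ s : unitInterval, h e s = H (e * s) := by
    intro e he s
    have := congrArg (fun f : C(unitInterval, ℝ) => f 1) ((hh e he).2 s)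
    simpa [scaleF] using this
  have hint : ∀ e, |e| < δ → u e = ∫ s in (0 : ℝ)..1, s ^ n * H (e * s) := by
    intro e he
    rw [← unit_integral]
    simp only [hu, avgL_apply, one_mul]
    congr 1; ext s; rw [hHs e he]
  have halg : ∀ e, |e| < δ → ((1 - e * u e) ^ 2 - ℓ * (u e - e) ^ 2) *
      (H e - ((n + 1 : ℕ) : ℝ) * u e) = Deltav m ((n + 1 : ℕ) : ℝ) e (u e) := by
    intro e he
    have := congrArg (fun f : C(unitInterval, ℝ) => f 1) (hh e he).1
    simp only [Phi_apply, ContinuousMap.smul_apply, idF, ContinuousMap.coe_mk,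
        smul_eq_mul, Set.Icc.coe_one, mul_one] at this
    linarith
  have hHc1 : ∀ᶠ e in 𝓝 (0 : ℝ), ContinuousAt H e := by
    have := (hHc.of_le (m := 1) (by simp)).eventually (by simp)
    filter_upwards [this] with e he using he.continuousAt
  obtain ⟨δ', hδ', hHc2⟩ := Metric.eventually_nhds_iff.1 hHc1
  have hpow : ∀ e, 0 < e → e < δ → e ^ (n + 1) * u e = ∫ s in (0 : ℝ)..e, s ^ n * H s := by
    intro e he he'
    rw [hint e (by rwa [abs_of_pos he])]
    have := intervalIntegral.integral_comp_mul_left (a := 0) (b := 1)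
      (fun s => s ^ n * H s) he.ne'
    simp only [mul_zero, mul_one, smul_eq_mul] at this
    have h3 : ∫ s in (0 : ℝ)..e, s ^ n * H s = e * ∫ s in (0 : ℝ)..1, (e * s) ^ n * H (e * s) := by
      rw [this]; field_simp
    rw [h3, ← intervalIntegral.integral_const_mul, ← intervalIntegral.integral_const_mul]
    congr 1; ext s; ring
  have hdiff : ∀ᶠ e in 𝓝 (0 : ℝ), DifferentiableAt ℝ u e := by
    have := (huc.of_le (m := 1) (by simp)).eventually (by simp)
    filter_upwards [this] with e he using he.differentiableAt (by simp)
  have hode : ∀ᶠ Z in 𝓝[>] (0 : ℝ), DifferentiableAt ℝ u Z ∧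
        DeltaZ ℓ Z (u Z) * deriv u Z = Deltav m ((n + 1 : ℕ) : ℝ) Z (u Z) := by
    have e1 : ∀ᶠ Z in 𝓝[>] (0 : ℝ), Z < min δ δ' :=
      nhdsWithin_le_nhds (Iio_mem_nhds (lt_min hδ hδ'))
    filter_upwards [nhdsWithin_le_nhds hdiff, e1, self_mem_nhdsWithin] with Z hZ hZ1 hZ2
    refine ⟨hZ, ?_⟩
    have hZ2 : 0 < Z := hZ2
    have hZδ := hZ1.trans_le (min_le_left _ _)
    have hZδ' := hZ1.trans_le (min_le_right _ _)
    have hcont : ContinuousOn (fun s => s ^ n * H s) (Icc 0 Z) := by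
      intro s hs
      apply ContinuousAt.continuousWithinAt
      have : ContinuousAt H s := hHc2 (by
        rw [Real.dist_eq, sub_zero, abs_of_nonneg hs.1]; linarith [hs.2])
      fun_prop
    have hcat : ∀ᶠ s in 𝓝 Z, ContinuousAt (fun s => s ^ n * H s) s := by
      filter_upwards [Ioo_mem_nhds hZ2 hZδ'] with s hs
      have : ContinuousAt H s := hHc2 (by
        rw [Real.dist_eq, sub_zero, abs_of_nonneg hs.1.le]; linarith [hs.2])
      fun_prop
    have hsm : StronglyMeasurableAtFilter (fun s => s ^ n * H s) (𝓝 Z) MeasureTheory.volume := by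
      have hco : ContinuousOn (fun s => s ^ n * H s) (Ioo 0 δ') := by
        intro s hs
        apply ContinuousAt.continuousWithinAt
        have : ContinuousAt H s := hHc2 (by
          rw [Real.dist_eq, sub_zero, abs_of_nonneg hs.1.le]; linarith [hs.2])
        fun_prop
      exact hco.stronglyMeasurableAtFilter isOpen_Ioo Z ⟨hZ2, hZδ'⟩
    have hD := intervalIntegral.integral_hasDerivAt_right (a := 0) (b := Z)
      (f := fun s => s ^ n * H s) (by
        apply ContinuousOn.intervalIntegrable; rwa [uIcc_of_le hZ2.le]) hsm hcat.self_of_nhds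
    have hD2 : HasDerivAt (fun e => e ^ (n + 1) * u e) (Z ^ n * H Z) Z := by
      refine hD.congr_of_eventuallyEq ?_
      filter_upwards [Ioo_mem_nhds hZ2 hZδ] with s hs using hpow s hs.1 hs.2
    have hD3 := (hasDerivAt_pow (n + 1) Z).mul hZ.hasDerivAt
    have heq := hD2.unique hD3
    have hpos : Z ^ n ≠ 0 := (pow_pos hZ2 n).ne'
    have heq2 : H Z = ((n + 1 : ℕ) : ℝ) * u Z + Z * deriv u Z := by
      apply mul_left_cancel₀ hpos
      rw [heq]; simp [pow_succ]; ring
    have := halg Z (by rwa [abs_of_pos hZ2])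
    rw [← this, heq2, DeltaZ]; ring
  refine ⟨u, huc, hu0, ?_, hode⟩
  -- value of the derivative at the origin
  have hdu0 : HasDerivAt u (deriv u 0) 0 := hdiff.self_of_nhds.hasDerivAt
  have hcd : ContinuousAt (deriv u) 0 := by
    have := (huc.of_le (m := 1) (by simp)).eventually (by simp)
    obtain ⟨U, hU, hUo, hU0⟩ := eventually_nhds_iff.1 this
    have hco : ContDiffOn ℝ 1 u U := fun x hx => (hU x hx).contDiffWithinAt
    exact (hco.continuousOn_deriv_of_isOpen hUo le_rfl).continuousAt (hUo.mem_nhds hU0)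
  have hN : HasDerivAt (fun Z => Deltav m ((n + 1 : ℕ) : ℝ) Z (u Z))
      (m - ((n + 1 : ℕ) : ℝ) * deriv u 0) 0 := by
    unfold Deltav
    have := ((hdu0.pow 2).const_sub 1).mul
      (((((hdu0.pow 2).const_sub 1).const_mul m).mul (hasDerivAt_id (0 : ℝ))).sub
        ((hdu0.const_mul ((n + 1 : ℕ) : ℝ)).mul ((hdu0.mul (hasDerivAt_id (0 : ℝ))).const_sub 1)))
    refine this.congr_deriv ?_
    simp [hu0]
  have hslope := (hasDerivAt_iff_tendsto_slope.1 hN).mono_left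
    (nhdsWithin_mono 0 (fun x (hx : 0 < x) => hx.ne') : 𝓝[>] (0 : ℝ) ≤ 𝓝[≠] 0)
  have hlim : Tendsto (fun Z => ((1 - Z * u Z) ^ 2 - ℓ * (u Z - Z) ^ 2) * deriv u Z) (𝓝[>] 0)
      (𝓝 (deriv u 0)) := by
    have hcu : ContinuousAt u 0 := huc.continuousAt
    have : ContinuousAt (fun Z => ((1 - Z * u Z) ^ 2 - ℓ * (u Z - Z) ^ 2) * deriv u Z) 0 := by
      fun_prop
    have h2 := this.tendsto.mono_left (nhdsWithin_le_nhds (s := Ioi 0))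
    simpa [hu0] using h2
  have heq : (slope (fun Z => Deltav m ((n + 1 : ℕ) : ℝ) Z (u Z)) 0) =ᶠ[𝓝[>] 0]
      (fun Z => ((1 - Z * u Z) ^ 2 - ℓ * (u Z - Z) ^ 2) * deriv u Z) := by
    filter_upwards [hode, self_mem_nhdsWithin] with Z hZ hZ2
    have hZ2 : 0 < Z := hZ2
    rw [slope_def_field, ← hZ.2]
    simp only [hu0, Deltav, DeltaZ]
    rw [sub_zero, div_eq_iff hZ2.ne']
    ring
  have := tendsto_nhds_unique (hslope.congr' heq) hlim
  push_cast at this ⊢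
  have hpos : (0 : ℝ) < n + 1 + 1 := by positivity
  rw [eq_div_iff hpos.ne']
  linarith

noncomputable def Dd (ℓ Z v : ℝ) : ℝ := (1 - Z * v) ^ 2 - ℓ * (v - Z) ^ 2

noncomputable def fld (m ℓ κ Z v : ℝ) : ℝ := Deltav m κ Z v / (Z * Dd ℓ Z v)

noncomputable def Cq (m ℓ κ Z v w : ℝ) : ℝ :=
  (m * Z * (-2 * (v + w) + (v ^ 2 + w ^ 2) * (v + w))
    - κ * (1 - Z * (v + w) - (v ^ 2 + v * w + w ^ 2) + Z * ((v ^ 2 + w ^ 2) * (v + w)))) * Dd ℓ Z w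
  - Deltav m κ Z w * (-2 * Z + Z ^ 2 * (v + w) - ℓ * (v + w - 2 * Z))

lemma fld_sub (m ℓ κ Z v w : ℝ) (hZ : Z ≠ 0) (hv : Dd ℓ Z v ≠ 0) (hw : Dd ℓ Z w ≠ 0) :
    fld m ℓ κ Z v - fld m ℓ κ Z w
      = Cq m ℓ κ Z v w / (Dd ℓ Z v * Dd ℓ Z w) / Z * (v - w) := by
  have key : Deltav m κ Z v * Dd ℓ Z w - Deltav m κ Z w * Dd ℓ Z v
      = Cq m ℓ κ Z v w * (v - w) := by
    unfold Cq Deltav Dd; ring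
  unfold fld
  have : Cq m ℓ κ Z v w / (Dd ℓ Z v * Dd ℓ Z w) / Z * (v - w)
      = (Cq m ℓ κ Z v w * (v - w)) / (Z * (Dd ℓ Z v * Dd ℓ Z w)) := by
    field_simp
  rw [this, ← key]
  field_simp

lemma unique_sol (m ℓ κ : ℝ) (hκ : 0 < κ) (p q : ℝ → ℝ) (B : ℝ) (hB : 0 < B)
    (hp : ContinuousOn p (Icc 0 B)) (hp0 : p 0 = 0)
    (hpD : ∀ Z ∈ Ioc 0 B, 0 < Dd ℓ Z (p Z))
    (hpo : ∀ Z ∈ Ioo 0 B, HasDerivAt p (fld m ℓ κ Z (p Z)) Z)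
    (hq : ContinuousOn q (Icc 0 B)) (hq0 : q 0 = 0)
    (hqD : ∀ Z ∈ Ioc 0 B, 0 < Dd ℓ Z (q Z))
    (hqo : ∀ Z ∈ Ioo 0 B, HasDerivAt q (fld m ℓ κ Z (q Z)) Z) : p B = q B := by
  have hpD' : ∀ Z ∈ Icc 0 B, 0 < Dd ℓ Z (p Z) := by
    intro Z hZ
    rcases hZ.1.eq_or_lt with h | h
    · subst h; simp [Dd, hp0]
    · exact hpD Z ⟨h, hZ.2⟩
  have hqD' : ∀ Z ∈ Icc 0 B, 0 < Dd ℓ Z (q Z) := by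
    intro Z hZ
    rcases hZ.1.eq_or_lt with h | h
    · subst h; simp [Dd, hq0]
    · exact hqD Z ⟨h, hZ.2⟩
  set c : ℝ → ℝ := fun Z => Cq m ℓ κ Z (p Z) (q Z) / (Dd ℓ Z (p Z) * Dd ℓ Z (q Z)) with hc
  have hcc : ContinuousOn c (Icc 0 B) := by
    rw [hc]
    apply ContinuousOn.div
    · unfold Cq Deltav Dd; fun_prop
    · unfold Dd; fun_prop
    · intro Z hZ
      exact (mul_pos (hpD' Z hZ) (hqD' Z hZ)).ne'
  have hc0 : c 0 = -κ := by simp [hc, Cq, Deltav, Dd, hp0, hq0]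
  obtain ⟨C, hC⟩ := isCompact_Icc.exists_bound_of_continuousOn hcc
  have hneg : ∀ᶠ Z in 𝓝[Icc 0 B] (0 : ℝ), c Z < 0 := by
    have := hcc 0 ⟨le_rfl, hB.le⟩
    apply this.eventually_lt continuousWithinAt_const
    rw [hc0]; linarith
  obtain ⟨ε, hε, hεc⟩ := Metric.mem_nhdsWithin_iff.1 hneg
  set M : ℝ := |C| / ε with hM
  have hM0 : 0 ≤ M := by positivity
  have hcM : ∀ Z ∈ Ioo 0 B, c Z ≤ M * Z := by
    intro Z hZ
    by_cases h : Z < ε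
    · have : c Z < 0 := hεc ⟨by simpa [Real.dist_eq, abs_of_pos hZ.1] using h, hZ.1.le, hZ.2.le⟩
      nlinarith [hZ.1]
    · push Not at h
      have h1 := hC Z ⟨hZ.1.le, hZ.2.le⟩
      rw [Real.norm_eq_abs] at h1
      have h2 : M * ε = |C| := by rw [hM]; field_simp
      calc c Z ≤ |c Z| := le_abs_self _
        _ ≤ C := h1
        _ ≤ |C| := le_abs_self _
        _ = M * ε := h2.symm
        _ ≤ M * Z := by gcongr
  set F : ℝ → ℝ := fun Z => (p Z - q Z) ^ 2 * Real.exp (-2 * M * Z) with hF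
  have hFd : ∀ Z ∈ Ioo 0 B, HasDerivAt F
      (2 * (p Z - q Z) ^ 2 * (c Z / Z - M) * Real.exp (-2 * M * Z)) Z := by
    intro Z hZ
    have h1 := ((hpo Z hZ).sub (hqo Z hZ)).pow 2
    have h2 := ((hasDerivAt_id Z).const_mul (-2 * M)).exp
    have h3 := h1.mul h2
    refine h3.congr_deriv ?_
    have hs := fld_sub m ℓ κ Z (p Z) (q Z) hZ.1.ne' (hpD Z ⟨hZ.1, hZ.2.le⟩).ne'
      (hqD Z ⟨hZ.1, hZ.2.le⟩).ne'
    rw [hs]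
    simp only [hc, id, Pi.sub_apply, Pi.pow_apply]
    push_cast
    ring
  have hanti : AntitoneOn F (Icc 0 B) := by
    apply antitoneOn_of_deriv_nonpos (convex_Icc 0 B)
    · rw [hF]; fun_prop
    · intro Z hZ
      rw [interior_Icc] at hZ
      exact (hFd Z hZ).differentiableAt.differentiableWithinAt
    · intro Z hZ
      rw [interior_Icc] at hZ
      rw [(hFd Z hZ).deriv]
      have h1 : c Z / Z - M ≤ 0 := by
        rw [sub_nonpos, div_le_iff₀ hZ.1]; exact hcM Z hZ
      have h2 : 0 ≤ 2 * (p Z - q Z) ^ 2 := by positivity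
      exact mul_nonpos_of_nonpos_of_nonneg (mul_nonpos_of_nonneg_of_nonpos h2 h1)
        (Real.exp_pos _).le
  have hle := hanti ⟨le_rfl, hB.le⟩ ⟨hB.le, le_rfl⟩ hB.le
  simp only [hF, hp0, hq0] at hle
  have hpos := Real.exp_pos (-2 * M * B)
  have : (p B - q B) ^ 2 ≤ 0 := by
    by_contra hcon
    push Not at hcon
    have := mul_pos hcon hpos
    rw [show ((0 : ℝ) - 0) ^ 2 = 0 by norm_num, zero_mul] at hle
    linarith
  have h0 : p B - q B = 0 := pow_eq_zero_iff (two_ne_zero) |>.1 (le_antisymm this (sq_nonneg _))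
  linarith

/-! ### Barriers -/

noncomputable def Ef (a Z v : ℝ) : ℝ := 1 - Z * v - a * (Z - v)
noncomputable def E2 (a Z v : ℝ) : ℝ := 1 - Z * v + a * (Z - v)
noncomputable def Nh (m κ Z v : ℝ) : ℝ := m * (1 - v ^ 2) * Z - κ * v * (1 - v * Z)

lemma Dd_eq (a Z v : ℝ) : Dd (a ^ 2) Z v = Ef a Z v * E2 a Z v := by
  unfold Dd Ef E2; ring

lemma touch (φ : ℝ → ℝ) (p δ T : ℝ) (hT : δ < T) (hφ : HasDerivWithinAt φ p (Icc δ T) T)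
    (hpos : ∀ Z ∈ Ico δ T, 0 < φ Z) (hp : φ T ≤ 0 → 0 < p) : 0 < φ T := by
  by_contra hcon
  push Not at hcon
  have hp' := hp hcon
  rw [hasDerivWithinAt_iff_tendsto_slope] at hφ
  have hset : Icc δ T \ {T} = Ico δ T := by
    ext x; simp only [Set.mem_sdiff, mem_Icc, mem_singleton_iff, mem_Ico]
    constructor
    · rintro ⟨⟨h1, h2⟩, h3⟩; exact ⟨h1, lt_of_le_of_ne h2 h3⟩
    · rintro ⟨h1, h2⟩; exact ⟨⟨h1, h2.le⟩, h2.ne⟩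
  rw [hset] at hφ
  have hev := hφ.eventually (lt_mem_nhds hp')
  have : (𝓝[Ico δ T] T).NeBot := by
    rw [nhdsWithin_Ico_eq_nhdsLT hT]; infer_instance
  obtain ⟨Z, hZ, hZ2⟩ := (hev.and self_mem_nhdsWithin).exists
  rw [slope_def_field] at hZ
  have h1 := hpos Z hZ2
  have h2 : Z - T < 0 := by linarith [hZ2.2]
  have := div_neg_of_pos_of_neg (by linarith : 0 < φ Z - φ T) h2
  linarith

lemma eta_exists (m κ a b : ℝ) (hm : 0 < m) (ha : 1 < a) (hκ : m < κ) (hb : 0 < b) (hb1 : b < 1)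
    (hbZ : b * (a ^ 2 * (κ - m) + m) < κ * a) :
    ∃ η > 0, ∀ Z v, 0 ≤ v → v ≤ Z → Z ≤ b → 0 ≤ Ef a Z v → Ef a Z v ≤ η →
      0 < (a - Z) * ((1 - v ^ 2) * Nh m κ Z v) - Z * (a + v) * (E2 a Z v * Ef a Z v) := by
  set g : ℝ × ℝ → ℝ := fun p => (a - p.1) * ((1 - p.2 ^ 2) * Nh m κ p.1 p.2)
    - p.1 * (a + p.2) * (E2 a p.1 p.2 * Ef a p.1 p.2) with hg
  have hgc : Continuous g := by rw [hg]; unfold Nh E2 Ef; fun_prop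
  have hEc : Continuous (fun p : ℝ × ℝ => Ef a p.1 p.2) := by unfold Ef; fun_prop
  set K : Set (ℝ × ℝ) := {p | 0 ≤ p.2 ∧ p.2 ≤ p.1 ∧ p.1 ≤ b ∧ 0 ≤ Ef a p.1 p.2 ∧ g p ≤ 0} with hK
  have hKcl : IsClosed K := by
    refine (isClosed_le continuous_const continuous_snd).inter
      ((isClosed_le continuous_snd continuous_fst).inter
      ((isClosed_le continuous_fst continuous_const).inter
      ((isClosed_le continuous_const hEc).inter (isClosed_le hgc continuous_const))))
  have hKc : IsCompact K := by
    refine (isCompact_Icc.prod isCompact_Icc :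
      IsCompact (Icc (0 : ℝ) b ×ˢ Icc (0 : ℝ) b)).of_isClosed_subset hKcl ?_
    rintro ⟨Z, v⟩ ⟨h1, h2, h3, -⟩
    simp only at h1 h2 h3
    exact ⟨⟨by linarith, h3⟩, ⟨h1, by linarith⟩⟩
  have hKpos : ∀ p ∈ K, 0 < Ef a p.1 p.2 := by
    rintro ⟨Z, v⟩ ⟨h1, h2, h3, h4, h5⟩
    simp only at h1 h2 h3 h4 ⊢
    rcases h4.eq_or_lt with h | h
    · exfalso
      have hgv : g (Z, v) = (a - Z) * ((1 - v ^ 2) * Nh m κ Z v) := by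
        simp only [hg]; rw [← h]; ring
      rw [hgv] at h5
      have haZ : 0 < a - Z := by linarith
      have hv1 : 0 < 1 - v ^ 2 := by nlinarith
      have hvE : v * (a - Z) = a * Z - 1 := by unfold Ef at h; linarith
      have hN : (a - Z) ^ 2 * Nh m κ Z v
          = (1 - Z ^ 2) * (κ * a - Z * (a ^ 2 * (κ - m) + m)) := by
        have : (a - Z) ^ 2 * Nh m κ Z v = m * ((a - Z) ^ 2 - (v * (a - Z)) ^ 2) * Z
           - κ * (v * (a - Z)) * ((a - Z) - (v * (a - Z)) * Z) := by unfold Nh; ring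
        rw [this, hvE]; ring
      have hS : 0 < a ^ 2 * (κ - m) + m := by
        have : 0 < κ - m := by linarith
        positivity
      have hr : 0 < κ * a - Z * (a ^ 2 * (κ - m) + m) := by nlinarith
      have hZ2 : 0 < 1 - Z ^ 2 := by nlinarith
      have hNp : 0 < Nh m κ Z v := by
        have : 0 < (a - Z) ^ 2 * Nh m κ Z v := by rw [hN]; positivity
        exact (pos_iff_pos_of_mul_pos this).1 (by positivity)
      have := mul_pos haZ (mul_pos hv1 hNp)
      linarith
    · exact h
  rcases K.eq_empty_or_nonempty with hne | hne
  · refine ⟨1, one_pos, ?_⟩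
    intro Z v h1 h2 h3 h4 _
    by_contra hcon
    push Not at hcon
    have : ((Z, v) : ℝ × ℝ) ∈ K := ⟨h1, h2, h3, h4, hcon⟩
    rw [hne] at this
    exact this
  · obtain ⟨p0, hp0, hmin⟩ := hKc.exists_isMinOn hne hEc.continuousOn
    have hp := hKpos p0 hp0
    refine ⟨Ef a p0.1 p0.2 / 2, by positivity, ?_⟩
    intro Z v h1 h2 h3 h4 h6
    by_contra hcon
    push Not at hcon
    have hmem : ((Z, v) : ℝ × ℝ) ∈ K := ⟨h1, h2, h3, h4, hcon⟩
    have h7 : Ef a p0.1 p0.2 ≤ Ef a Z v := hmin hmem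
    linarith

lemma Nh_lt (m κ Z v : ℝ) (hκ : m < κ) (hv : 0 ≤ v) (hv1 : v < 1) (hm : 0 < m)
    (hN : 0 < Nh m κ Z v) : v < Z := by
  by_contra hcon
  push Not at hcon
  have h1 : Nh m κ Z v = Z * (m * (1 - v ^ 2) + κ * v ^ 2) - κ * v := by unfold Nh; ring
  have h2 : 0 < 1 - v ^ 2 := by nlinarith
  have h3 : 0 ≤ m * (1 - v ^ 2) + κ * v ^ 2 := by
    have : 0 < κ := by linarith
    positivity
  have h4 : Z * (m * (1 - v ^ 2) + κ * v ^ 2) ≤ v * (m * (1 - v ^ 2) + κ * v ^ 2) := by gcongr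
  have h5 : v * (m * (1 - v ^ 2) + κ * v ^ 2) - κ * v = -((κ - m) * v * (1 - v ^ 2)) := by ring
  have h6 : 0 ≤ (κ - m) * v * (1 - v ^ 2) := by
    have : 0 < κ - m := by linarith
    positivity
  linarith

lemma E2_pos (a Z v b : ℝ) (ha : 1 < a) (hb1 : b < 1) (hv : 0 ≤ v) (hvZ : v ≤ Z) (hZ : Z ≤ b) :
    0 < E2 a Z v := by
  unfold E2
  have h1 : Z * v < 1 := by nlinarith
  nlinarith

set_option maxHeartbeats 2000000 in
lemma ext_sol (m κ a b δ x₀ : ℝ) (hm : 0 < m) (ha : 1 < a) (hκ : m < κ) (hδ : 0 < δ)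
    (hδb : δ < b) (hb1 : b < 1) (hbZ : b * (a ^ 2 * (κ - m) + m) < κ * a)
    (hx0 : 0 < x₀) (hxδ : x₀ < δ) (hxN : 0 < Nh m κ δ x₀) (hxE : 0 < Ef a δ x₀) :
    ∃ w : ℝ → ℝ, w δ = x₀ ∧ ∀ Z ∈ Icc δ b,
      HasDerivWithinAt w (fld m (a ^ 2) κ Z (w Z)) (Icc δ b) Z ∧
      0 < w Z ∧ w Z < Z ∧ 0 < Nh m κ Z (w Z) ∧ 0 < Ef a Z (w Z) := by
  have hb : 0 < b := hδ.trans hδb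
  obtain ⟨η₀, hη₀, hg⟩ := eta_exists m κ a b hm ha hκ hb hb1 hbZ
  obtain ⟨η, hη, hη1, hη2, hη3⟩ : ∃ η > 0, η ≤ η₀ ∧ η < Ef a δ x₀ ∧ η ≤ 1 - b ^ 2 := by
    have h1 : 0 < 1 - b ^ 2 := by nlinarith
    refine ⟨min η₀ (min (Ef a δ x₀ / 2) (1 - b ^ 2)), by positivity, min_le_left _ _, ?_, ?_⟩
    · have := (min_le_right η₀ (min (Ef a δ x₀ / 2) (1 - b ^ 2))).trans (min_le_left _ _)
      linarith
    · exact (min_le_right η₀ (min (Ef a δ x₀ / 2) (1 - b ^ 2))).trans (min_le_right _ _)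
  -- the good compact set
  set K : Set (ℝ × ℝ) := {p | δ ≤ p.1 ∧ p.1 ≤ b ∧ 0 ≤ p.2 ∧ p.2 ≤ p.1 ∧ η ≤ Ef a p.1 p.2} with hK
  have hEc : Continuous (fun p : ℝ × ℝ => Ef a p.1 p.2) := by unfold Ef; fun_prop
  have hKcl : IsClosed K :=
    (isClosed_le continuous_const continuous_fst).inter
      ((isClosed_le continuous_fst continuous_const).inter
      ((isClosed_le continuous_const continuous_snd).inter
      ((isClosed_le continuous_snd continuous_fst).inter (isClosed_le continuous_const hEc))))
  have hKc : IsCompact K := by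
    refine (isCompact_Icc.prod isCompact_Icc :
      IsCompact (Icc (0 : ℝ) b ×ˢ Icc (0 : ℝ) b)).of_isClosed_subset hKcl ?_
    rintro ⟨Z, v⟩ ⟨h1, h2, h3, h4, -⟩
    simp only at h1 h2 h3 h4
    exact ⟨⟨by linarith, h2⟩, ⟨h3, by linarith⟩⟩
  have hKD : ∀ Z v, (Z, v) ∈ K → 0 < Dd (a ^ 2) Z v := by
    rintro Z v ⟨h1, h2, h3, h4, h5⟩
    simp only at h1 h2 h3 h4 h5
    rw [Dd_eq]
    exact mul_pos (by linarith) (E2_pos a Z v b ha hb1 h3 h4 h2)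
  have hKZ : ∀ Z v, (Z, v) ∈ K → 0 < Z := by
    rintro Z v ⟨h1, -⟩
    simp only at h1
    linarith
  have hfc : ContinuousOn (fun p : ℝ × ℝ => fld m (a ^ 2) κ p.1 p.2) K := by
    unfold fld
    apply ContinuousOn.div
    · unfold Deltav; fun_prop
    · unfold Dd; fun_prop
    · rintro ⟨Z, v⟩ hp
      exact (mul_pos (hKZ Z v hp) (hKD Z v hp)).ne'
  obtain ⟨L₀, hL₀⟩ := hKc.exists_bound_of_continuousOn hfc
  set K3 : Set (ℝ × ℝ × ℝ) := {p | (p.1, p.2.1) ∈ K ∧ (p.1, p.2.2) ∈ K} with hK3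
  have hK3c : IsCompact K3 := by
    have hcl : IsClosed K3 :=
      (hKcl.preimage (f := fun p : ℝ × ℝ × ℝ => (p.1, p.2.1)) (by fun_prop)).inter
        (hKcl.preimage (f := fun p : ℝ × ℝ × ℝ => (p.1, p.2.2)) (by fun_prop))
    refine (isCompact_Icc.prod (isCompact_Icc.prod isCompact_Icc) :
      IsCompact (Icc (0 : ℝ) b ×ˢ (Icc (0 : ℝ) b ×ˢ Icc (0 : ℝ) b))).of_isClosed_subset hcl ?_
    rintro ⟨Z, v, w⟩ ⟨⟨h1, h2, h3, h4, -⟩, ⟨-, -, h6, h7, -⟩⟩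
    simp only at h1 h2 h3 h4 h6 h7
    exact ⟨⟨by linarith, h2⟩, ⟨h3, by linarith⟩, ⟨h6, by linarith⟩⟩
  have hCc : ContinuousOn (fun p : ℝ × ℝ × ℝ => Cq m (a ^ 2) κ p.1 p.2.1 p.2.2 /
      (Dd (a ^ 2) p.1 p.2.1 * Dd (a ^ 2) p.1 p.2.2) / p.1) K3 := by
    apply ContinuousOn.div
    · apply ContinuousOn.div
      · unfold Cq Deltav Dd; fun_prop
      · unfold Dd; fun_prop
      · rintro ⟨Z, v, w⟩ hp
        exact (mul_pos (hKD Z v hp.1) (hKD Z w hp.2)).ne'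
    · fun_prop
    · rintro ⟨Z, v, w⟩ hp
      exact (hKZ Z v hp.1).ne'
  obtain ⟨C₀, hC₀⟩ := hK3c.exists_bound_of_continuousOn hCc
  -- clamping
  set lo : ℝ → ℝ := fun Z => max 0 ((a * Z - 1 + η) / (a - Z)) with hlo
  set cl : ℝ → ℝ → ℝ := fun Z v => max (lo Z) (min v Z) with hcl
  have hloZ : ∀ Z ∈ Icc δ b, lo Z ≤ Z := by
    intro Z hZ
    have haZ : 0 < a - Z := by linarith [hZ.2]
    apply max_le (by linarith [hZ.1])
    rw [div_le_iff₀ haZ]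
    have : 0 < Z := by linarith [hZ.1]
    nlinarith [hZ.2]
  have hclK : ∀ Z ∈ Icc δ b, ∀ v, (Z, cl Z v) ∈ K := by
    intro Z hZ v
    have haZ : 0 < a - Z := by linarith [hZ.2]
    refine ⟨hZ.1, hZ.2, ?_, ?_, ?_⟩
    · exact (le_max_left _ _).trans (le_max_left _ _)
    · exact max_le (hloZ Z hZ) (min_le_right _ _)
    · have h1 : (a * Z - 1 + η) / (a - Z) ≤ cl Z v := (le_max_right _ _).trans (le_max_left _ _)
      rw [div_le_iff₀ haZ] at h1
      simp only [Ef]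
      linarith
  have hclid : ∀ Z v, (Z, v) ∈ K → cl Z v = v := by
    rintro Z v ⟨h1, h2, h3, h4, h5⟩
    simp only [Ef] at h1 h2 h3 h4 h5
    have haZ : 0 < a - Z := by linarith
    simp only [hcl, min_eq_left h4]
    apply max_eq_right
    apply max_le h3
    rw [div_le_iff₀ haZ]
    linarith
  have hcllip : ∀ Z v w, |cl Z v - cl Z w| ≤ |v - w| := by
    intro Z v w
    simp only [hcl]
    refine (abs_max_sub_max_le_max _ _ _ _).trans ?_
    rw [sub_self, abs_zero]
    refine max_le (abs_nonneg _) ?_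
    refine (abs_min_sub_min_le_max _ _ _ _).trans ?_
    rw [sub_self, abs_zero]
    exact max_le le_rfl (abs_nonneg _)
  have hclc : ∀ v, ContinuousOn (fun Z => cl Z v) (Icc δ b) := by
    intro v
    simp only [hcl, hlo]
    have h1 : ContinuousOn (fun Z => (a * Z - 1 + η) / (a - Z)) (Icc δ b) := by
      apply ContinuousOn.div (by fun_prop) (by fun_prop)
      intro Z hZ
      have : 0 < a - Z := by linarith [hZ.2]
      exact this.ne'
    fun_prop
  set f : ℝ → ℝ → ℝ := fun Z v => fld m (a ^ 2) κ Z (cl Z v) with hf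
  have hPL : IsPicardLindelof f (⟨δ, le_rfl, hδb.le⟩ : Icc δ b) x₀
      (L₀.toNNReal * (b - δ).toNNReal) 0 L₀.toNNReal C₀.toNNReal := by
    constructor
    · intro Z hZ
      apply LipschitzOnWith.of_dist_le_mul
      intro v _ w _
      have hv := hclK Z hZ v
      have hw := hclK Z hZ w
      rw [Real.dist_eq, Real.dist_eq]
      simp only [hf]
      rw [fld_sub m (a ^ 2) κ Z _ _ (hKZ _ _ hv).ne' (hKD _ _ hv).ne' (hKD _ _ hw).ne', abs_mul]
      have h1 := hC₀ (Z, cl Z v, cl Z w) ⟨hv, hw⟩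
      rw [Real.norm_eq_abs] at h1
      exact mul_le_mul (h1.trans (Real.le_coe_toNNReal _)) (hcllip Z v w) (abs_nonneg _)
        (NNReal.coe_nonneg _)
    · intro v _
      exact ContinuousOn.comp (g := fun p : ℝ × ℝ => fld m (a ^ 2) κ p.1 p.2) (f := fun Z => (Z, cl Z v))
        hfc (continuousOn_id.prodMk (hclc v)) (fun Z hZ => hclK Z hZ v)
    · intro Z hZ v _
      exact (hL₀ _ (hclK Z hZ v)).trans (Real.le_coe_toNNReal _)
    · simp only [NNReal.coe_mul, NNReal.coe_zero, sub_zero, sub_self]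
      rw [max_eq_left (by linarith), Real.coe_toNNReal (b - δ) (by linarith)]
  obtain ⟨w, hw0, hw⟩ := hPL.exists_eq_forall_mem_Icc_hasDerivWithinAt₀
  simp only at hw0
  have hwc : ContinuousOn w (Icc δ b) := fun Z hZ => (hw Z hZ).continuousWithinAt
  -- the trapping region
  set good : Set ℝ := {Z | 0 < w Z ∧ w Z < Z ∧ 0 < Nh m κ Z (w Z) ∧ η < Ef a Z (w Z)} with hgood
  have hNc : ContinuousOn (fun Z => Nh m κ Z (w Z)) (Icc δ b) := by unfold Nh; fun_prop
  have hEwc : ContinuousOn (fun Z => Ef a Z (w Z)) (Icc δ b) := by unfold Ef; fun_prop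
  have hall : ∀ Z ∈ Icc δ b, Z ∈ good := by
    by_contra hcon
    push Not at hcon
    set bad : Set ℝ := {Z | Z ∈ Icc δ b ∧ w Z ≤ 0} ∪ ({Z | Z ∈ Icc δ b ∧ Z ≤ w Z} ∪
      ({Z | Z ∈ Icc δ b ∧ Nh m κ Z (w Z) ≤ 0} ∪ {Z | Z ∈ Icc δ b ∧ Ef a Z (w Z) ≤ η})) with hbad
    have hbadcl : IsClosed bad :=
      (isClosed_Icc.isClosed_le hwc continuousOn_const).union
        ((isClosed_Icc.isClosed_le continuousOn_id hwc).union
        ((isClosed_Icc.isClosed_le hNc continuousOn_const).union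
        (isClosed_Icc.isClosed_le hEwc continuousOn_const)))
    have hbadsub : bad ⊆ Icc δ b := by
      rintro Z (h | h | h | h) <;> exact h.1
    have hnb : ∀ Z ∈ Icc δ b, Z ∉ bad → Z ∈ good := by
      intro Z hZ hZb
      simp only [hbad, mem_union, Set.mem_ofPred_eq, not_or, not_and, not_le] at hZb
      exact ⟨hZb.1 hZ, hZb.2.1 hZ, hZb.2.2.1 hZ, hZb.2.2.2 hZ⟩
    have hbg : ∀ Z ∈ good, Z ∉ bad := by
      rintro Z ⟨h1, h2, h3, h4⟩ (h | h | h | h) <;> linarith [h.2]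
    have hne : bad.Nonempty := by
      obtain ⟨Z, hZ, hZg⟩ := hcon
      exact ⟨Z, by_contra fun h => hZg (hnb Z hZ h)⟩
    obtain ⟨T, hT⟩ := (isCompact_Icc.of_isClosed_subset hbadcl hbadsub).exists_isLeast hne
    have hTI := hbadsub hT.1
    have hδg : δ ∈ good := by
      simp only [hgood, Set.mem_ofPred_eq, hw0]; exact ⟨hx0, hxδ, hxN, hη2⟩
    have hδT : δ < T := by
      rcases hTI.1.eq_or_lt with h | h
      · exact absurd hT.1 (h ▸ hbg δ hδg)
      · exact h
    have hbefore : ∀ Z ∈ Ico δ T, Z ∈ good := by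
      intro Z hZ
      apply hnb Z ⟨hZ.1, hZ.2.le.trans hTI.2⟩
      intro hZb
      exact absurd (hT.2 hZb) (not_le.2 hZ.2)
    have hsub : Icc δ T ⊆ Icc δ b := Icc_subset_Icc_right hTI.2
    have hclos : ∀ φ : ℝ → ℝ, ContinuousOn φ (Icc δ b) → (∀ Z ∈ Ico δ T, 0 ≤ φ Z) → 0 ≤ φ T := by
      intro φ hφ hpos
      have h1 : Tendsto φ (𝓝[Ico δ T] T) (𝓝 (φ T)) :=
        (hφ T hTI).mono (Ico_subset_Icc_self.trans hsub)
      have : (𝓝[Ico δ T] T).NeBot := by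
        rw [nhdsWithin_Ico_eq_nhdsLT hδT]; infer_instance
      exact ge_of_tendsto h1 (eventually_nhdsWithin_of_forall hpos)
    have c1 : 0 ≤ w T := hclos w hwc fun Z hZ => (hbefore Z hZ).1.le
    have c2 : 0 ≤ T - w T := hclos (fun Z => Z - w Z) (continuousOn_id.sub hwc)
      fun Z hZ => sub_nonneg.2 (hbefore Z hZ).2.1.le
    have c3 : 0 ≤ Nh m κ T (w T) := hclos _ hNc fun Z hZ => (hbefore Z hZ).2.2.1.le
    have c4 : 0 ≤ Ef a T (w T) - η := hclos (fun Z => Ef a Z (w Z) - η)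
      (hEwc.sub continuousOn_const) fun Z hZ => sub_nonneg.2 (hbefore Z hZ).2.2.2.le
    have hTK : (T, w T) ∈ K := ⟨hTI.1, hTI.2, c1, by linarith, by linarith⟩
    have hT0 : 0 < T := hδ.trans hδT
    have hDT := hKD _ _ hTK
    have hder : HasDerivWithinAt w (fld m (a ^ 2) κ T (w T)) (Icc δ T) T := by
      have := (hw T hTI).mono hsub
      simp only [hf, hclid _ _ hTK] at this
      exact this
    have hwT1 : w T < 1 := by linarith [hTI.2]
    have g1 : 0 < w T := by
      refine touch w _ δ T hδT hder (fun Z hZ => (hbefore Z hZ).1) ?_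
      intro h
      have h0 : w T = 0 := le_antisymm h c1
      rw [h0] at hDT ⊢
      unfold fld
      apply div_pos
      · unfold Deltav; norm_num; positivity
      · positivity
    have hw2 : 0 < 1 - w T ^ 2 := by nlinarith
    have g3 : 0 < Nh m κ T (w T) := by
      have hid : HasDerivWithinAt (fun Z : ℝ => Z) 1 (Icc δ T) T := hasDerivWithinAt_id _ _
      have hd : HasDerivWithinAt (fun Z => Nh m κ Z (w Z))
          ((m * (1 - w T ^ 2) + κ * w T ^ 2)
            + (-2 * m * T * w T - κ + 2 * κ * w T * T) * fld m (a ^ 2) κ T (w T)) (Icc δ T) T := by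
        unfold Nh
        have := (((hder.pow 2).const_sub 1).const_mul m |>.mul hid).sub
          ((hder.const_mul κ).mul ((hder.mul hid).const_sub 1))
        refine this.congr_deriv ?_
        simp only [Pi.pow_apply, Pi.mul_apply]
        push_cast
        ring
      refine touch _ _ δ T hδT hd (fun Z hZ => (hbefore Z hZ).2.2.1) ?_
      intro h
      have h0 : Nh m κ T (w T) = 0 := le_antisymm h c3
      have h1 : fld m (a ^ 2) κ T (w T) = 0 := by
        unfold fld Deltav
        unfold Nh at h0
        rw [h0]; simp
      rw [h1, mul_zero, add_zero]
      have : 0 < κ := by linarith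
      positivity
    have g4 : 0 < Ef a T (w T) - η := by
      have hid : HasDerivWithinAt (fun Z : ℝ => Z) 1 (Icc δ T) T := hasDerivWithinAt_id _ _
      have hd : HasDerivWithinAt (fun Z => Ef a Z (w Z) - η)
          (-(a + w T) + (a - T) * fld m (a ^ 2) κ T (w T)) (Icc δ T) T := by
        unfold Ef
        have := (((hid.mul hder).const_sub 1).sub ((hid.sub hder).const_mul a)).sub_const η
        refine this.congr_deriv ?_
        ring
      refine touch _ _ δ T hδT hd (fun Z hZ => sub_pos.2 (hbefore Z hZ).2.2.2) ?_
      intro h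
      have hgT := hg T (w T) c1 (by linarith) hTI.2 (by linarith) (by linarith)
      have hTD : 0 < T * Dd (a ^ 2) T (w T) := mul_pos hT0 hDT
      have h1 : -(a + w T) + (a - T) * fld m (a ^ 2) κ T (w T)
        = ((a - T) * ((1 - w T ^ 2) * Nh m κ T (w T)) - T * (a + w T) *
            (E2 a T (w T) * Ef a T (w T))) / (T * Dd (a ^ 2) T (w T)) := by
        rw [eq_div_iff hTD.ne']
        have h2 : fld m (a ^ 2) κ T (w T) * (T * Dd (a ^ 2) T (w T))
            = (1 - w T ^ 2) * Nh m κ T (w T) := by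
          unfold fld
          rw [div_mul_cancel₀ _ hTD.ne']
          rfl
        have h3 := Dd_eq a T (w T)
        calc _ = -(a + w T) * (T * Dd (a ^ 2) T (w T)) +
              (a - T) * (fld m (a ^ 2) κ T (w T) * (T * Dd (a ^ 2) T (w T))) := by ring
          _ = _ := by rw [h2, h3]; ring
      rw [h1]
      exact div_pos hgT hTD
    have g2 := Nh_lt m κ T (w T) hκ c1 hwT1 hm g3
    exact hbg T ⟨g1, g2, g3, by linarith⟩ hT.1
  refine ⟨w, hw0, ?_⟩
  intro Z hZ
  obtain ⟨h1, h2, h3, h4⟩ := hall Z hZ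
  have hZK : (Z, w Z) ∈ K := ⟨hZ.1, hZ.2, h1.le, h2.le, h4.le⟩
  refine ⟨?_, h1, h2, h3, by linarith⟩
  have := hw Z hZ
  simp only [hf, hclid _ _ hZK] at this
  exact this

lemma local_good (m a : ℝ) (k : ℕ) (hk : 1 ≤ k) (hm : 0 < m) (hκ : m < k) :
    ∃ u : ℝ → ℝ, ContDiffAt ℝ (⊤ : ℕ∞) u 0 ∧ u 0 = 0 ∧ deriv u 0 = m / ((k : ℝ) + 1) ∧
      ∀ᶠ Z in 𝓝[>] (0 : ℝ), HasDerivAt u (fld m (a ^ 2) k Z (u Z)) Z ∧ 0 < u Z ∧ u Z < Z ∧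
        0 < Nh m k Z (u Z) ∧ 0 < Ef a Z (u Z) := by
  obtain ⟨u, huc, hu0, hud, hode⟩ := local_sol m (a ^ 2) k hk
  refine ⟨u, huc, hu0, hud, ?_⟩
  have hdu0 : HasDerivAt u (m / ((k : ℝ) + 1)) 0 := by
    rw [← hud]; exact (huc.differentiableAt (by simp)).hasDerivAt
  have hk0 : (0 : ℝ) < k := by linarith
  have hd0 : 0 < m / ((k : ℝ) + 1) := by positivity
  have hd1 : m / ((k : ℝ) + 1) < 1 := by rw [div_lt_one (by positivity)]; linarith
  have hle : 𝓝[>] (0 : ℝ) ≤ 𝓝[≠] 0 := nhdsWithin_mono 0 (fun x (hx : 0 < x) => hx.ne')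
  have hs := (hasDerivAt_iff_tendsto_slope.1 hdu0).mono_left hle
  have hN : HasDerivAt (fun Z => Nh m (k : ℝ) Z (u Z)) (m / ((k : ℝ) + 1)) 0 := by
    unfold Nh
    have := (((hdu0.pow 2).const_sub 1).const_mul m |>.mul (hasDerivAt_id (0 : ℝ))).sub
      ((hdu0.const_mul (k : ℝ)).mul ((hdu0.mul (hasDerivAt_id (0 : ℝ))).const_sub 1))
    refine this.congr_deriv ?_
    simp [hu0]
    field_simp
    ring
  have hsN := (hasDerivAt_iff_tendsto_slope.1 hN).mono_left hle
  have hcu : ContinuousAt u 0 := huc.continuousAt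
  have hE : ∀ᶠ Z in 𝓝[>] (0 : ℝ), 0 < Ef a Z (u Z) := by
    have hc : ContinuousAt (fun Z => Ef a Z (u Z)) 0 := by unfold Ef; fun_prop
    have : (0 : ℝ) < Ef a 0 (u 0) := by simp [Ef, hu0]
    exact nhdsWithin_le_nhds (hc.eventually (lt_mem_nhds this))
  have hE2 : ∀ᶠ Z in 𝓝[>] (0 : ℝ), 0 < E2 a Z (u Z) := by
    have hc : ContinuousAt (fun Z => E2 a Z (u Z)) 0 := by unfold E2; fun_prop
    have : (0 : ℝ) < E2 a 0 (u 0) := by simp [E2, hu0]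
    exact nhdsWithin_le_nhds (hc.eventually (lt_mem_nhds this))
  filter_upwards [hode, hE, hE2, hs.eventually (lt_mem_nhds hd0), hs.eventually (gt_mem_nhds hd1),
    hsN.eventually (lt_mem_nhds hd0), self_mem_nhdsWithin] with Z h1 h2 h3 h4 h5 h6 h7
  have h7 : 0 < Z := h7
  rw [slope_def_field, hu0, sub_zero, sub_zero] at h4 h5
  have hNh0 : Nh m (k : ℝ) 0 (u 0) = 0 := by simp [Nh, hu0]
  rw [slope_def_field, hNh0, sub_zero, sub_zero] at h6
  refine ⟨?_, ?_, ?_, ?_, h2⟩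
  · have hD : 0 < Z * Dd (a ^ 2) Z (u Z) := by rw [Dd_eq]; positivity
    have : deriv u Z = fld m (a ^ 2) k Z (u Z) := by
      unfold fld
      rw [eq_div_iff hD.ne', ← h1.2, DeltaZ, Dd]; ring
    rw [← this]
    exact h1.1.hasDerivAt
  · exact (div_pos_iff_of_pos_right h7).1 h4
  · exact (div_lt_one h7).1 h5
  · exact (div_pos_iff_of_pos_right h7).1 h6

lemma global_sol (m a Z₁ : ℝ) (k : ℕ) (hk : 1 ≤ k) (hm : 0 < m) (ha : 1 < a) (hκ : m < k)
    (hZ0 : 0 < Z₁) (hZ1 : Z₁ < 1) (hZ : Z₁ * (a ^ 2 * ((k : ℝ) - m) + m) = k * a) :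
    ∃ v : ℝ → ℝ, ContDiffAt ℝ (⊤ : ℕ∞) v 0 ∧ v 0 = 0 ∧ deriv v 0 = m / ((k : ℝ) + 1) ∧
      ∀ Z ∈ Ioo 0 Z₁, HasDerivAt v (fld m (a ^ 2) k Z (v Z)) Z ∧ 0 < v Z ∧ v Z < Z ∧
        0 < Nh m k Z (v Z) ∧ 0 < Ef a Z (v Z) := by
  obtain ⟨u, huc, hu0, hud, hev⟩ := local_good m a k hk hm hκ
  have hev2 := hev.and (nhdsWithin_le_nhds (Iio_mem_nhds hZ0))
  obtain ⟨δ', hδ', hδ'I⟩ := mem_nhdsGT_iff_exists_Ioo_subset.1 hev2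
  have hδ'0 : (0 : ℝ) < δ' := hδ'
  obtain ⟨δ, hδ, hδδ'⟩ := exists_between hδ'0
  have hloc : ∀ Z ∈ Ioc 0 δ, HasDerivAt u (fld m (a ^ 2) k Z (u Z)) Z ∧ 0 < u Z ∧ u Z < Z ∧
        0 < Nh m k Z (u Z) ∧ 0 < Ef a Z (u Z) := fun Z hZ =>
    (hδ'I ⟨hZ.1, lt_of_le_of_lt hZ.2 hδδ'⟩).1
  have hδZ : δ < Z₁ := (hδ'I (show δ ∈ Ioo 0 δ' from ⟨hδ, hδδ'⟩)).2
  have hS : 0 < a ^ 2 * ((k : ℝ) - m) + m := by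
    have : 0 < (k : ℝ) - m := by linarith
    positivity
  have hstep : ∀ b, ∃ V : ℝ → ℝ, (δ < b → b < Z₁ → (∀ Z ≤ δ, V Z = u Z) ∧
      ∀ Z ∈ Ioo 0 b, HasDerivAt V (fld m (a ^ 2) k Z (V Z)) Z ∧ 0 < V Z ∧ V Z < Z ∧
        0 < Nh m k Z (V Z) ∧ 0 < Ef a Z (V Z)) := by
    intro b
    by_cases hb : δ < b ∧ b < Z₁
    swap
    · exact ⟨u, fun h1 h2 => absurd ⟨h1, h2⟩ hb⟩
    obtain ⟨hb1, hb2⟩ := hb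
    have hl := hloc δ ⟨hδ, le_rfl⟩
    obtain ⟨w, hw0, hw⟩ := ext_sol m k a b δ (u δ) hm ha hκ hδ hb1 (hb2.trans hZ1)
      (by rw [← hZ]; exact mul_lt_mul_of_pos_right hb2 hS)
      hl.2.1 hl.2.2.1 hl.2.2.2.1 hl.2.2.2.2
    refine ⟨fun Z => if Z ≤ δ then u Z else w Z, fun _ _ => ⟨fun Z hZ => if_pos hZ, ?_⟩⟩
    intro Z hZ
    rcases lt_trichotomy Z δ with h | h | h
    · simp only [if_pos h.le]
      obtain ⟨h1, h2⟩ := hloc Z ⟨hZ.1, h.le⟩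
      refine ⟨h1.congr_of_eventuallyEq ?_, h2⟩
      filter_upwards [Iio_mem_nhds h] with x hx
      exact if_pos (le_of_lt hx)
    · subst h
      simp only [if_pos le_rfl]
      refine ⟨?_, hl.2⟩
      have h1 : HasDerivWithinAt (fun x => if x ≤ Z then u x else w x)
          (fld m (a ^ 2) k Z (u Z)) (Iic Z) Z := by
        refine hl.1.hasDerivWithinAt.congr_of_mem ?_ (mem_Iic.2 le_rfl)
        intro x hx
        exact if_pos hx
      have h2 : HasDerivWithinAt (fun x => if x ≤ Z then u x else w x)
          (fld m (a ^ 2) k Z (u Z)) (Icc Z b) Z := by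
        have h3 := (hw Z ⟨le_rfl, hb1.le⟩).1
        rw [hw0] at h3
        refine h3.congr_of_mem ?_ ⟨le_rfl, hb1.le⟩
        intro x hx
        by_cases hxZ : x ≤ Z
        · have : x = Z := le_antisymm hxZ hx.1
          subst this
          rw [if_pos le_rfl, hw0]
        · exact if_neg hxZ
      have h3 := h1.union h2
      refine h3.hasDerivAt ?_
      rw [Iic_union_Icc_eq_Iic hb1.le]
      exact Iic_mem_nhds hb1
    · simp only [if_neg (not_le.2 h)]
      obtain ⟨h1, h2⟩ := hw Z ⟨h.le, hZ.2.le⟩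
      refine ⟨(h1.hasDerivAt (Icc_mem_nhds h hZ.2)).congr_of_eventuallyEq ?_, h2⟩
      filter_upwards [Ioi_mem_nhds h] with x hx
      exact if_neg (not_le.2 hx)
  choose V hV using hstep
  have hk0 : (0 : ℝ) < k := by linarith
  -- consistency
  have hDpos : ∀ b, δ < b → b < Z₁ → ∀ Z ∈ Ioo 0 b, 0 < Dd (a ^ 2) Z (V b Z) := by
    intro b hb1 hb2 Z hZ
    obtain ⟨-, h2, h3, -, h5⟩ := (hV b hb1 hb2).2 Z hZ
    rw [Dd_eq]
    exact mul_pos h5 (E2_pos a Z _ b ha (hb2.trans hZ1) h2.le h3.le hZ.2.le)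
  have hVc : ∀ b, δ < b → b < Z₁ → ∀ B, B < b → ContinuousOn (V b) (Icc 0 B) := by
    intro b hb1 hb2 B hB Z hZ
    apply ContinuousAt.continuousWithinAt
    rcases hZ.1.eq_or_lt with h | h
    · subst h
      refine huc.continuousAt.congr ?_
      filter_upwards [Iio_mem_nhds hδ] with x hx
      exact ((hV b hb1 hb2).1 x (le_of_lt hx)).symm
    · exact ((hV b hb1 hb2).2 Z ⟨h, lt_of_le_of_lt hZ.2 hB⟩).1.continuousAt
  have hcons : ∀ b c, δ < b → b < Z₁ → δ < c → c < Z₁ → ∀ Z, 0 < Z → Z < b → Z < c →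
      V b Z = V c Z := by
    intro b c hb1 hb2 hc1 hc2 Z hZ hZb hZc
    apply unique_sol m (a ^ 2) k hk0 (V b) (V c) Z hZ (hVc b hb1 hb2 Z hZb)
      (by rw [(hV b hb1 hb2).1 0 hδ.le, hu0])
      (fun x hx => hDpos b hb1 hb2 x ⟨hx.1, lt_of_le_of_lt hx.2 hZb⟩)
      (fun x hx => ((hV b hb1 hb2).2 x ⟨hx.1, hx.2.trans hZb⟩).1)
      (hVc c hc1 hc2 Z hZc)
      (by rw [(hV c hc1 hc2).1 0 hδ.le, hu0])
      (fun x hx => hDpos c hc1 hc2 x ⟨hx.1, lt_of_le_of_lt hx.2 hZc⟩)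
      (fun x hx => ((hV c hc1 hc2).2 x ⟨hx.1, hx.2.trans hZc⟩).1)
  set v : ℝ → ℝ := fun Z => if Z ≤ δ then u Z else V ((Z + Z₁) / 2) Z with hv
  have hvu : v =ᶠ[𝓝 0] u := by
    filter_upwards [Iio_mem_nhds hδ] with x hx
    exact if_pos (le_of_lt hx)
  have hvV : ∀ b, δ < b → b < Z₁ → ∀ Z, 0 < Z → Z < b → v Z = V b Z := by
    intro b hb1 hb2 Z hZ hZb
    simp only [hv]
    split_ifs with h
    · exact ((hV b hb1 hb2).1 Z h).symm
    · push Not at h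
      exact hcons _ _ (by linarith) (by linarith) hb1 hb2 Z hZ (by linarith) hZb
  refine ⟨v, huc.congr_of_eventuallyEq hvu, by rw [hvu.self_of_nhds, hu0],
    by rw [hvu.deriv_eq, hud], ?_⟩
  intro Z hZ
  obtain ⟨b, hb1, hb2⟩ := exists_between (max_lt hδZ hZ.2)
  have hbδ := (le_max_left _ _).trans_lt hb1
  have hbZ := (le_max_right _ _).trans_lt hb1
  have hp := (hV b hbδ hb2).2 Z ⟨hZ.1, hbZ⟩
  rw [hvV b hbδ hb2 Z hZ.1 hbZ]
  refine ⟨hp.1.congr_of_eventuallyEq ?_, hp.2⟩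
  filter_upwards [Ioo_mem_nhds hZ.1 hbZ] with x hx
  exact hvV b hbδ hb2 x hx.1 hx.2

lemma smooth_sol (m ℓ κ Z₁ : ℝ) (v : ℝ → ℝ)
    (hD : ∀ Z ∈ Ioo 0 Z₁, 0 < Dd ℓ Z (v Z))
    (hv : ∀ Z ∈ Ioo 0 Z₁, HasDerivAt v (fld m ℓ κ Z (v Z)) Z) :
    ContDiffOn ℝ (⊤ : ℕ∞) v (Ioo 0 Z₁) := by
  rw [contDiffOn_infty]
  intro n
  induction n with
  | zero =>
    rw [Nat.cast_zero, contDiffOn_zero]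
    exact fun Z hZ => (hv Z hZ).continuousAt.continuousWithinAt
  | succ n ih =>
    rw [Nat.cast_succ, contDiffOn_succ_iff_deriv_of_isOpen isOpen_Ioo]
    refine ⟨fun Z hZ => (hv Z hZ).differentiableAt.differentiableWithinAt, by simp, ?_⟩
    have : ContDiffOn ℝ n (fun Z => fld m ℓ κ Z (v Z)) (Ioo 0 Z₁) := by
      unfold fld
      apply ContDiffOn.div
      · unfold Deltav; fun_prop
      · unfold Dd; fun_prop
      · intro Z hZ
        exact (mul_pos hZ.1 (hD Z hZ)).ne'
    exact this.congr fun Z hZ => (hv Z hZ).deriv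


/-- Existence and uniqueness of the smooth `P₀ – P₁` solution curve of the self-similar
relativistic Euler ODE on `[0, Z₁)`, together with its qualitative properties. -/
theorem P0_P1_curve (m ℓ : ℝ) (k : ℕ) (hm : 0 < m) (hℓ : 1 < ℓ) (hk : 1 ≤ k)
    (hkm : (k : ℝ) > m * (1 + 1 / Real.sqrt ℓ))
    (Z₁ v₁ : ℝ)
    (hZ₁ : Z₁ = (k : ℝ) * Real.sqrt ℓ / (ℓ * ((k : ℝ) - m) + m))
    (hv₁ : v₁ = m / (((k : ℝ) - m) * Real.sqrt ℓ)) :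
    ∃ v : ℝ → ℝ,
      (ContDiffOn ℝ (⊤ : ℕ∞) v (Ico 0 Z₁) ∧ v 0 = 0 ∧
        (∀ Z ∈ Ioo (0 : ℝ) Z₁, 0 < DeltaZ ℓ Z (v Z)) ∧
        (∀ Z ∈ Ico (0 : ℝ) Z₁, DeltaZ ℓ Z (v Z) * deriv v Z = Deltav m (k : ℝ) Z (v Z))) ∧
      (∀ w : ℝ → ℝ,
        (ContDiffOn ℝ (⊤ : ℕ∞) w (Ico 0 Z₁) ∧ w 0 = 0 ∧
          (∀ Z ∈ Ioo (0 : ℝ) Z₁, 0 < DeltaZ ℓ Z (w Z)) ∧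
          (∀ Z ∈ Ico (0 : ℝ) Z₁, DeltaZ ℓ Z (w Z) * deriv w Z = Deltav m (k : ℝ) Z (w Z))) →
        EqOn v w (Ico 0 Z₁)) ∧
      (∀ Z ∈ Ioo (0 : ℝ) Z₁,
        0 < Deltav m (k : ℝ) Z (v Z) ∧ 0 < v Z ∧ v Z < 1) ∧
      deriv v 0 = m / ((k : ℝ) + 1) ∧
      Tendsto v (𝓝[<] Z₁) (𝓝 v₁) := by
  set a := Real.sqrt ℓ with ha_def
  have hℓa : ℓ = a ^ 2 := (Real.sq_sqrt (by linarith)).symm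
  have ha : 1 < a := by
    rw [ha_def]; exact Real.lt_sqrt_of_sq_lt (by simpa using hℓ)
  have ha0 : 0 < a := by linarith
  have hka : m * (a + 1) < k * a := by
    have h1 : m * (1 + 1 / a) * a = m * (a + 1) := by field_simp
    rw [← h1]
    exact mul_lt_mul_of_pos_right hkm ha0
  have hκ : m < (k : ℝ) := by nlinarith
  have hκm : 0 < (k : ℝ) - m := by linarith
  have hk0 : (0 : ℝ) < k := by linarith
  have hS : 0 < a ^ 2 * ((k : ℝ) - m) + m := by positivity
  rw [hℓa] at hZ₁
  have hZS : Z₁ * (a ^ 2 * ((k : ℝ) - m) + m) = k * a := by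
    rw [hZ₁]; field_simp
  have hZ0 : 0 < Z₁ := by rw [hZ₁]; positivity
  have hZ1 : Z₁ < 1 := by
    rw [hZ₁, div_lt_one hS]
    nlinarith
  have hv0 : 0 < v₁ := by rw [hv₁]; positivity
  have hv1 : v₁ < 1 := by
    rw [hv₁, div_lt_one (by positivity)]; linarith
  have hvm : v₁ * (((k : ℝ) - m) * a) = m := by rw [hv₁]; field_simp
  obtain ⟨v, hc0, hv00, hvd, hv⟩ := global_sol m a Z₁ k hk hm ha hκ hZ0 hZ1 hZS
  have hD : ∀ Z ∈ Ioo 0 Z₁, 0 < Dd ℓ Z (v Z) := by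
    intro Z hZ
    obtain ⟨-, h2, h3, -, h5⟩ := hv Z hZ
    rw [hℓa, Dd_eq]
    exact mul_pos h5 (E2_pos a Z _ Z₁ ha hZ1 h2.le h3.le hZ.2.le)
  have hode : ∀ Z ∈ Ioo 0 Z₁, HasDerivAt v (fld m ℓ k Z (v Z)) Z := by
    intro Z hZ
    rw [hℓa]; exact (hv Z hZ).1
  have hsm := smooth_sol m ℓ k Z₁ v hD hode
  have hvcont : ∀ Z ∈ Ico 0 Z₁, ContinuousAt v Z := by
    intro Z hZ
    rcases hZ.1.eq_or_lt with h | h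
    · subst h; exact hc0.continuousAt
    · exact (hode Z ⟨h, hZ.2⟩).continuousAt
  refine ⟨v, ⟨?_, hv00, ?_, ?_⟩, ?_, ?_, hvd, ?_⟩
  · intro Z hZ
    rcases hZ.1.eq_or_lt with h | h
    · subst h; exact hc0.contDiffWithinAt
    · exact (hsm.contDiffAt (Ioo_mem_nhds h hZ.2)).contDiffWithinAt
  · intro Z hZ
    exact mul_pos hZ.1 (hD Z hZ)
  · intro Z hZ
    rcases hZ.1.eq_or_lt with h | h
    · subst h; simp [DeltaZ, Deltav, hv00]
    · have hpos : 0 < Z * Dd ℓ Z (v Z) := mul_pos h (hD Z ⟨h, hZ.2⟩)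
      rw [(hode Z ⟨h, hZ.2⟩).deriv, fld]
      exact mul_div_cancel₀ _ hpos.ne'
  · rintro w ⟨hwc, hw0, hwD, hwo⟩ Z hZ
    rcases hZ.1.eq_or_lt with h | h
    · subst h; rw [hv00, hw0]
    have hwDd : ∀ x ∈ Ioo 0 Z₁, 0 < Dd ℓ x (w x) := by
      intro x hx
      exact (pos_iff_pos_of_mul_pos (hwD x hx)).1 hx.1
    have hwd : ∀ x ∈ Ioo 0 Z₁, HasDerivAt w (fld m ℓ k x (w x)) x := by
      intro x hx
      have hda : DifferentiableAt ℝ w x :=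
        ((hwc.contDiffAt (Ico_mem_nhds hx.1 hx.2)).differentiableAt (by simp))
      have : deriv w x = fld m ℓ k x (w x) := by
        have hpos : 0 < x * Dd ℓ x (w x) := hwD x hx
        unfold fld
        rw [eq_div_iff hpos.ne', ← hwo x ⟨hx.1.le, hx.2⟩, DeltaZ, Dd]; ring
      rw [← this]; exact hda.hasDerivAt
    refine unique_sol m ℓ k hk0 v w Z h ?_ hv00 ?_ ?_ ?_ hw0 ?_ ?_
    · exact fun x hx => (hvcont x ⟨hx.1, hx.2.trans_lt hZ.2⟩).continuousWithinAt
    · exact fun x hx => hD x ⟨hx.1, hx.2.trans_lt hZ.2⟩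
    · exact fun x hx => hode x ⟨hx.1, hx.2.trans hZ.2⟩
    · exact hwc.continuousOn.mono fun x hx => ⟨hx.1, hx.2.trans_lt hZ.2⟩
    · exact fun x hx => hwDd x ⟨hx.1, hx.2.trans_lt hZ.2⟩
    · exact fun x hx => hwd x ⟨hx.1, hx.2.trans hZ.2⟩
  · intro Z hZ
    obtain ⟨-, h2, h3, h4, -⟩ := hv Z hZ
    have h5 : v Z < 1 := by linarith [hZ.2]
    refine ⟨?_, h2, h5⟩
    have h6 : 0 < 1 - v Z ^ 2 := by nlinarith
    exact mul_pos h6 h4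
  · -- squeeze between the sonic line and the value `v₁`
    have hupper : ∀ Z ∈ Ioo 0 Z₁, v Z ≤ v₁ := by
      intro Z hZ
      by_contra hcon
      push Not at hcon
      have hcont : ContinuousOn v (Icc 0 Z) := fun x hx =>
        (hvcont x ⟨hx.1, hx.2.trans_lt hZ.2⟩).continuousWithinAt
      obtain ⟨x, hx, hxv⟩ := intermediate_value_Icc hZ.1.le hcont
        (show v₁ ∈ Icc (v 0) (v Z) from ⟨by rw [hv00]; exact hv0.le, hcon.le⟩)
      have hx0 : 0 < x := by
        rcases hx.1.eq_or_lt with h | h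
        · subst h; rw [hv00] at hxv; linarith
        · exact h
      have hN := (hv x ⟨hx0, hx.2.trans_lt hZ.2⟩).2.2.2.1
      rw [hxv] at hN
      have h1 : Nh m k x v₁ = x * (m * (1 - v₁ ^ 2) + k * v₁ ^ 2) - k * v₁ := by unfold Nh; ring
      have hv2 : 0 < 1 - v₁ ^ 2 := by nlinarith
      have h2 : 0 < m * (1 - v₁ ^ 2) + k * v₁ ^ 2 := by positivity
      have h3 : Z₁ * (m * (1 - v₁ ^ 2) + k * v₁ ^ 2) = k * v₁ := by
        rw [hZ₁, hv₁]; field_simp; ring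
      have h4 : x * (m * (1 - v₁ ^ 2) + k * v₁ ^ 2) < Z₁ * (m * (1 - v₁ ^ 2) + k * v₁ ^ 2) :=
        mul_lt_mul_of_pos_right (hx.2.trans_lt hZ.2) h2
      linarith
    have hlower : ∀ Z ∈ Ioo 0 Z₁, (a * Z - 1) / (a - Z) ≤ v Z := by
      intro Z hZ
      have haZ : 0 < a - Z := by linarith [hZ.2]
      have h5 := (hv Z hZ).2.2.2.2
      unfold Ef at h5
      rw [div_le_iff₀ haZ]
      linarith
    have haZ1 : 0 < a - Z₁ := by linarith
    have hlim : Tendsto (fun Z => (a * Z - 1) / (a - Z)) (𝓝[<] Z₁) (𝓝 v₁) := by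
      have hca : ContinuousAt (fun Z => (a * Z - 1) / (a - Z)) Z₁ := by
        apply ContinuousAt.div (by fun_prop) (by fun_prop) haZ1.ne'
      have hval : (a * Z₁ - 1) / (a - Z₁) = v₁ := by
        rw [div_eq_iff haZ1.ne', hv₁, div_mul_eq_mul_div, eq_div_iff (by positivity)]
        apply mul_right_cancel₀ hS.ne'
        linear_combination ((a * ((k : ℝ) - m) * a) + m) * hZS
      have := hca.tendsto.mono_left (nhdsWithin_le_nhds (s := Iio Z₁))
      rwa [hval] at this
    have hmem : Ioo 0 Z₁ ∈ 𝓝[<] Z₁ := Ioo_mem_nhdsLT hZ0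
    refine tendsto_of_tendsto_of_tendsto_of_le_of_le' hlim tendsto_const_nhds ?_ ?_
    · filter_upwards [hmem] with Z hZ using hlower Z hZ
    · filter_upwards [hmem] with Z hZ using hupper Z hZ
end

section
/- Let γ > 0 be a real number. Define Ψ(Z, v) := (z, u) with z := ((1 + γv²)Z − (1+γ)v)/(Z(1 − v²)) and u := (1+γ)²(1 − Zv)²/(Z²(1 − v²)), and define Θ(z, u) := ((1+γ)·√(u + (1−z)²)/(u + (1+γ)(1−z)), (1−z)/√(u + (1−z)²)). Let R₀ := {(Z, v) ∈ ℝ² : 0 < v < 1 and 0 < Zv < 1} and D₀ := {(z, u) ∈ ℝ² : u > 0 and z < 1}. Then Ψ maps R₀ bijectively onto D₀, and Θ is its inverse: Θ(Ψ(Z, v)) = (Z, v) for all (Z, v) ∈ R₀ and Ψ(Θ(z, u)) = (z, u) for all (z, u) ∈ D₀. -/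
open Set

/-- The renormalization map `Ψ : (Z, v) ↦ (z, u)`. -/
noncomputable def PsiMap (γ : ℝ) (p : ℝ × ℝ) : ℝ × ℝ :=
  (((1 + γ * p.2 ^ 2) * p.1 - (1 + γ) * p.2) / (p.1 * (1 - p.2 ^ 2)),
   (1 + γ) ^ 2 * (1 - p.1 * p.2) ^ 2 / (p.1 ^ 2 * (1 - p.2 ^ 2)))

/-- The inverse renormalization map `Θ : (z, u) ↦ (Z, v)`. -/
noncomputable def ThetaMap (γ : ℝ) (q : ℝ × ℝ) : ℝ × ℝ :=
  ((1 + γ) * Real.sqrt (q.2 + (1 - q.1) ^ 2) / (q.2 + (1 + γ) * (1 - q.1)),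
   (1 - q.1) / Real.sqrt (q.2 + (1 - q.1) ^ 2))

lemma Theta_Psi_aux (γ : ℝ) (hγ : 0 < γ) (Z v : ℝ) (hv : 0 < v) (hv1 : v < 1)
    (h0 : 0 < Z * v) (h1 : Z * v < 1) :
    (0 < (PsiMap γ (Z, v)).2 ∧ (PsiMap γ (Z, v)).1 < 1) ∧
      ThetaMap γ (PsiMap γ (Z, v)) = (Z, v) := by
  have hZ : 0 < Z := pos_of_mul_pos_left h0 hv.le
  have hw : 0 < 1 - v ^ 2 := by nlinarith
  have hg : 0 < 1 + γ := by linarith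
  have hq : 0 < 1 - Z * v := by linarith
  obtain ⟨A, hA⟩ : ∃ A, A = (1 + γ) * (1 - Z * v) / (Z * (1 - v ^ 2)) := ⟨_, rfl⟩
  have hAp : 0 < A := by rw [hA]; positivity
  have e1 : (PsiMap γ (Z, v)).1 = 1 - A * v := by
    simp only [PsiMap, hA]; field_simp; ring
  have e2 : (PsiMap γ (Z, v)).2 = A ^ 2 * (1 - v ^ 2) := by
    simp only [PsiMap, hA]; field_simp
  have hs : Real.sqrt (A ^ 2 * (1 - v ^ 2) + (1 - (1 - A * v)) ^ 2) = A := by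
    rw [show A ^ 2 * (1 - v ^ 2) + (1 - (1 - A * v)) ^ 2 = A ^ 2 by ring]
    exact Real.sqrt_sq hAp.le
  have hAZ : A * (Z * (1 - v ^ 2)) = (1 + γ) * (1 - Z * v) := by
    rw [hA]; field_simp
  refine ⟨⟨by rw [e2]; positivity, by rw [e1]; nlinarith [mul_pos hAp hv]⟩, ?_⟩
  unfold ThetaMap
  rw [e1, e2, hs]
  have hd : 0 < A ^ 2 * (1 - v ^ 2) + (1 + γ) * (1 - (1 - A * v)) := by
    have := mul_pos hg (mul_pos hAp hv)
    have : 0 < A ^ 2 * (1 - v ^ 2) := by positivity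
    nlinarith
  refine Prod.ext ?_ ?_
  · simp only
    rw [div_eq_iff hd.ne']
    linear_combination (-A) * hAZ
  · simp only
    rw [div_eq_iff hAp.ne']
    ring

lemma Psi_Theta_aux (γ : ℝ) (hγ : 0 < γ) (z u : ℝ) (hu : 0 < u) (hz : z < 1) :
    (0 < (ThetaMap γ (z, u)).2 ∧ (ThetaMap γ (z, u)).2 < 1 ∧
      0 < (ThetaMap γ (z, u)).1 * (ThetaMap γ (z, u)).2 ∧
      (ThetaMap γ (z, u)).1 * (ThetaMap γ (z, u)).2 < 1) ∧
      PsiMap γ (ThetaMap γ (z, u)) = (z, u) := by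
  have hg : 0 < 1 + γ := by linarith
  obtain ⟨w, hw⟩ : ∃ w, w = 1 - z := ⟨_, rfl⟩
  have hwp : 0 < w := by linarith
  obtain ⟨s, hs⟩ : ∃ s, s = Real.sqrt (u + w ^ 2) := ⟨_, rfl⟩
  have hsp : 0 < s := by rw [hs]; positivity
  have hs2 : s ^ 2 = u + w ^ 2 := by rw [hs]; exact Real.sq_sqrt (by positivity)
  have hws : w < s := by nlinarith
  have hd : 0 < u + (1 + γ) * w := by positivity
  have e1 : (ThetaMap γ (z, u)).1 = (1 + γ) * s / (u + (1 + γ) * w) := by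
    simp only [ThetaMap, ← hw, ← hs]
  have e2 : (ThetaMap γ (z, u)).2 = w / s := by
    simp only [ThetaMap, ← hw, ← hs]
  have e3 : (1 + γ) * s / (u + (1 + γ) * w) * (w / s) = (1 + γ) * w / (u + (1 + γ) * w) := by
    field_simp
  have e4 : 1 - (w / s) ^ 2 = u / s ^ 2 := by
    field_simp; linarith
  have e5 : 1 - (1 + γ) * w / (u + (1 + γ) * w) = u / (u + (1 + γ) * w) := by
    field_simp; ring
  refine ⟨?_, ?_⟩
  · rw [e1, e2, e3]
    refine ⟨by positivity, (div_lt_one hsp).2 hws, by positivity, (div_lt_one hd).2 (by linarith)⟩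
  · unfold PsiMap
    rw [e1, e2, e3, e4, e5]
    have hz' : z = 1 - w := by linarith
    refine Prod.ext ?_ ?_
    · simp only
      rw [hz', div_eq_iff (by positivity)]
      field_simp
      rw [hs2]
      ring
    · simp only
      field_simp

/-- `Ψ` maps `R₀` bijectively onto `D₀`, with inverse `Θ`. -/
theorem PsiMap_bijOn_inverse (γ : ℝ) (hγ : 0 < γ) :
    Set.BijOn (PsiMap γ)
      {p : ℝ × ℝ | 0 < p.2 ∧ p.2 < 1 ∧ 0 < p.1 * p.2 ∧ p.1 * p.2 < 1}
      {q : ℝ × ℝ | 0 < q.2 ∧ q.1 < 1} ∧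
    (∀ p ∈ {p : ℝ × ℝ | 0 < p.2 ∧ p.2 < 1 ∧ 0 < p.1 * p.2 ∧ p.1 * p.2 < 1},
      ThetaMap γ (PsiMap γ p) = p) ∧
    (∀ q ∈ {q : ℝ × ℝ | 0 < q.2 ∧ q.1 < 1}, PsiMap γ (ThetaMap γ q) = q) := by
  have hA : ∀ p ∈ {p : ℝ × ℝ | 0 < p.2 ∧ p.2 < 1 ∧ 0 < p.1 * p.2 ∧ p.1 * p.2 < 1},
      ThetaMap γ (PsiMap γ p) = p := by
    rintro ⟨Z, v⟩ ⟨h1, h2, h3, h4⟩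
    exact (Theta_Psi_aux γ hγ Z v h1 h2 h3 h4).2
  have hB : ∀ q ∈ {q : ℝ × ℝ | 0 < q.2 ∧ q.1 < 1}, PsiMap γ (ThetaMap γ q) = q := by
    rintro ⟨z, u⟩ ⟨h1, h2⟩
    exact (Psi_Theta_aux γ hγ z u h1 h2).2
  refine ⟨Set.InvOn.bijOn (f' := ThetaMap γ) ⟨hA, hB⟩ ?_ ?_, hA, hB⟩
  · rintro ⟨Z, v⟩ ⟨h1, h2, h3, h4⟩
    exact (Theta_Psi_aux γ hγ Z v h1 h2 h3 h4).1
  · rintro ⟨z, u⟩ ⟨h1, h2⟩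
    exact (Psi_Theta_aux γ hγ z u h1 h2).1
end

section
/- Assume k is a positive integer, ℓ > 1 and γ > 1/√ℓ are reals; set ε := ℓγ² − 1, A := k + 2 − (k − 2ℓ)γ, B := 2k + 1 − ℓ, u_p(z) := (k − B)z² + (A − k)z + ε, u_b(z) := (ε + (A − ε)z − (A + B)z² + Bz³)/(1 − (k+1)z) and u_g(z) := ℓ(z + γ)² − (1 − z)². Then u_p(z) < u_g(z) < u_b(z) for every z ∈ (0, 1/(k+1)); in fact u_p(z) − u_g(z) = −kz(z + γ) for all real z. -/
open Set

/-- Relative positions of the curves `u_p`, `u_g`, `u_b` in the renormalized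
`(z, u)` plane on the interval `(0, 1/(k+1))`. -/
theorem up_lt_ug_lt_ub (k : ℕ) (hk : 1 ≤ k) (ℓ γ : ℝ) (hℓ : 1 < ℓ)
    (hγ : 1 / Real.sqrt ℓ < γ)
    (ε A B : ℝ)
    (hε : ε = ℓ * γ ^ 2 - 1)
    (hA : A = (k : ℝ) + 2 - ((k : ℝ) - 2 * ℓ) * γ)
    (hB : B = 2 * (k : ℝ) + 1 - ℓ) :
    (∀ z ∈ Ioo (0 : ℝ) (1 / ((k : ℝ) + 1)),
      ((k : ℝ) - B) * z ^ 2 + (A - (k : ℝ)) * z + ε < ℓ * (z + γ) ^ 2 - (1 - z) ^ 2 ∧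
      ℓ * (z + γ) ^ 2 - (1 - z) ^ 2
        < (ε + (A - ε) * z - (A + B) * z ^ 2 + B * z ^ 3) / (1 - ((k : ℝ) + 1) * z)) ∧
    (∀ z : ℝ,
      (((k : ℝ) - B) * z ^ 2 + (A - (k : ℝ)) * z + ε) - (ℓ * (z + γ) ^ 2 - (1 - z) ^ 2)
        = -((k : ℝ) * z * (z + γ))) := by
  have hs : 1 < Real.sqrt ℓ := by
    rw [Real.lt_sqrt (by norm_num)]
    simpa using hℓ
  have hs0 : 0 < Real.sqrt ℓ := by linarith
  have hγ0 : 0 < γ := lt_trans (by positivity) hγ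
  have hss : Real.sqrt ℓ * Real.sqrt ℓ = ℓ := Real.mul_self_sqrt (by linarith)
  have hγs : 1 < γ * Real.sqrt ℓ := (div_lt_iff₀ hs0).mp hγ
  have hℓγ : 1 < ℓ * γ := by
    rw [← hss]
    nlinarith
  have hk0 : (0 : ℝ) < k := by exact_mod_cast hk
  have key : ∀ z : ℝ,
      (((k : ℝ) - B) * z ^ 2 + (A - (k : ℝ)) * z + ε) - (ℓ * (z + γ) ^ 2 - (1 - z) ^ 2)
        = -((k : ℝ) * z * (z + γ)) := by
    intro z
    subst hε hA hB
    ring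
  refine ⟨?_, key⟩
  rintro z ⟨hz0, hz1⟩
  have hd : 0 < 1 - ((k : ℝ) + 1) * z := by
    rw [lt_div_iff₀ (by positivity)] at hz1
    linarith
  constructor
  · have h1 := key z
    have h2 : 0 < (k : ℝ) * z * (z + γ) := by positivity
    linarith
  · rw [lt_div_iff₀ hd]
    have h1 : 0 < ℓ * (z + γ) - (1 - z) := by
      have : 0 < ℓ * z := by positivity
      linarith
    have h2 : 0 < (k : ℝ) * z * ((z + γ) * (ℓ * (z + γ) - (1 - z))) := by positivity
    have h3 : (ε + (A - ε) * z - (A + B) * z ^ 2 + B * z ^ 3)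
        - (ℓ * (z + γ) ^ 2 - (1 - z) ^ 2) * (1 - ((k : ℝ) + 1) * z)
        = (k : ℝ) * z * ((z + γ) * (ℓ * (z + γ) - (1 - z))) := by
      subst hε hA hB
      ring
    linarith
end

section
/- Assume k is a positive integer, ℓ > 1 and γ > 1/√ℓ are reals; set ε := ℓγ² − 1, A := k + 2 − (k − 2ℓ)γ and p₀(x) := x² − ((k−2)ε + A)x + 2(k − A)ε. Then: (i) for every real s, p₀(2(1 + sγ)) = 2(2s + k)(s − ℓ)γ² + 2(k − 2ℓ − (k−2)s)·ℓγ³; (ii) p₀(2(1 + ℓγ)) = 2kℓγ³(1 − ℓ) < 0; consequently p₀ has two distinct real roots, and its larger root a₁ satisfies a₁ > 2(1 + ℓγ) > 4. -/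
open Set

/-- Values of the slope polynomial `p₀` at the sonic point: the key identity, negativity at
`2(1 + ℓγ)`, and consequently `p₀` has two distinct real roots with the larger root
`a₁ > 2(1 + ℓγ) > 4`. -/
theorem slope_polynomial_roots (k : ℕ) (hk : 1 ≤ k) (ℓ γ : ℝ) (hℓ : 1 < ℓ)
    (hγ : 1 / Real.sqrt ℓ < γ)
    (ε A : ℝ)
    (hε : ε = ℓ * γ ^ 2 - 1)
    (hA : A = (k : ℝ) + 2 - ((k : ℝ) - 2 * ℓ) * γ)
    (p₀ : ℝ → ℝ)
    (hp₀ : ∀ x : ℝ, p₀ x = x ^ 2 - (((k : ℝ) - 2) * ε + A) * x + 2 * ((k : ℝ) - A) * ε) :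
    (∀ s : ℝ, p₀ (2 * (1 + s * γ))
        = 2 * (2 * s + (k : ℝ)) * (s - ℓ) * γ ^ 2
          + 2 * ((k : ℝ) - 2 * ℓ - ((k : ℝ) - 2) * s) * ℓ * γ ^ 3) ∧
    (p₀ (2 * (1 + ℓ * γ)) = 2 * (k : ℝ) * ℓ * γ ^ 3 * (1 - ℓ) ∧
      2 * (k : ℝ) * ℓ * γ ^ 3 * (1 - ℓ) < 0) ∧
    (∃ a₁ : ℝ, p₀ a₁ = 0 ∧ (∃ x : ℝ, p₀ x = 0 ∧ x < a₁) ∧ (∀ x : ℝ, p₀ x = 0 → x ≤ a₁) ∧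
      2 * (1 + ℓ * γ) < a₁ ∧ (4 : ℝ) < 2 * (1 + ℓ * γ)) := by
  have hkr : (1 : ℝ) ≤ (k : ℝ) := by exact_mod_cast hk
  have hℓ0 : 0 < ℓ := by linarith
  have hs0 : 0 < Real.sqrt ℓ := Real.sqrt_pos.mpr hℓ0
  have hss : Real.sqrt ℓ * Real.sqrt ℓ = ℓ := Real.mul_self_sqrt hℓ0.le
  have hs1 : 1 < Real.sqrt ℓ := by nlinarith
  have hγ0 : 0 < γ := lt_trans (by positivity) hγ
  have h1 : 1 < γ * Real.sqrt ℓ := (div_lt_iff₀ hs0).mp hγ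
  have hℓγ : 1 < ℓ * γ := by
    have h2 : ℓ * γ = Real.sqrt ℓ * (γ * Real.sqrt ℓ) := by
      nth_rewrite 1 [← hss]
      ring
    rw [h2]
    nlinarith
  have hid : ∀ s : ℝ, p₀ (2 * (1 + s * γ))
        = 2 * (2 * s + (k : ℝ)) * (s - ℓ) * γ ^ 2
          + 2 * ((k : ℝ) - 2 * ℓ - ((k : ℝ) - 2) * s) * ℓ * γ ^ 3 := by
    intro s
    rw [hp₀, hA, hε]
    ring
  have hval : p₀ (2 * (1 + ℓ * γ)) = 2 * (k : ℝ) * ℓ * γ ^ 3 * (1 - ℓ) := by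
    rw [hid]
    ring
  have hneg : 2 * (k : ℝ) * ℓ * γ ^ 3 * (1 - ℓ) < 0 :=
    mul_neg_of_pos_of_neg (by positivity) (by linarith)
  refine ⟨hid, ⟨hval, hneg⟩, ?_⟩
  have hlt : p₀ (2 * (1 + ℓ * γ)) < 0 := hval ▸ hneg
  rw [hp₀] at hlt
  have h4 : (4 : ℝ) < 2 * (1 + ℓ * γ) := by linarith
  clear hval hid
  generalize 2 * (1 + ℓ * γ) = y at *
  generalize ((k : ℝ) - 2) * ε + A = b at *
  generalize 2 * ((k : ℝ) - A) * ε = c at *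
  have hD : (2 * y - b) ^ 2 < b ^ 2 - 4 * c := by nlinarith
  have hDpos : 0 < b ^ 2 - 4 * c := lt_of_le_of_lt (sq_nonneg _) hD
  have hr0 : 0 < Real.sqrt (b ^ 2 - 4 * c) := Real.sqrt_pos.mpr hDpos
  have hrr : Real.sqrt (b ^ 2 - 4 * c) ^ 2 = b ^ 2 - 4 * c := Real.sq_sqrt hDpos.le
  have hry : 2 * y - b < Real.sqrt (b ^ 2 - 4 * c) := Real.lt_sqrt_of_sq_lt hD
  generalize Real.sqrt (b ^ 2 - 4 * c) = r at *
  refine ⟨(b + r) / 2, ?_, ⟨(b - r) / 2, ?_, by linarith⟩, ?_, by linarith, h4⟩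
  · rw [hp₀]
    linarith
  · rw [hp₀]
    linarith
  · intro x hx
    rw [hp₀] at hx
    have : (2 * x - b) ^ 2 = r ^ 2 := by linarith
    have := abs_le_of_sq_le_sq this.le hr0.le
    linarith [le_abs_self (2 * x - b)]
end

section
/- Assume k is a positive integer, ℓ > 1 and γ > 1/√ℓ are reals; set ε := ℓγ² − 1 and A := k + 2 − (k − 2ℓ)γ. Then the quadratic λ² − ((k+2)ε + A)λ + 2kε(ε + 1) has two distinct real roots λ₋ < λ₊, both positive, and with R := λ₊/λ₋ one has (R + 1)²/R = ((k+2)ℓγ − (k − 2ℓ))²/(2kℓ(ℓγ² − 1)). -/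
open Set

/-- The characteristic polynomial of the linearization at the sonic point has two distinct
positive roots `λ₋ < λ₊`, and the ratio `R = λ₊/λ₋` satisfies the stated identity. -/
theorem eigenvalue_ratio_identity (k : ℕ) (hk : 1 ≤ k) (ℓ γ : ℝ) (hℓ : 1 < ℓ)
    (hγ : 1 / Real.sqrt ℓ < γ)
    (ε A : ℝ)
    (hε : ε = ℓ * γ ^ 2 - 1)
    (hA : A = (k : ℝ) + 2 - ((k : ℝ) - 2 * ℓ) * γ) :
    ∃ lm lp : ℝ, 0 < lm ∧ lm < lp ∧
      lm ^ 2 - (((k : ℝ) + 2) * ε + A) * lm + 2 * (k : ℝ) * ε * (ε + 1) = 0 ∧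
      lp ^ 2 - (((k : ℝ) + 2) * ε + A) * lp + 2 * (k : ℝ) * ε * (ε + 1) = 0 ∧
      (∀ x : ℝ, x ^ 2 - (((k : ℝ) + 2) * ε + A) * x + 2 * (k : ℝ) * ε * (ε + 1) = 0 →
        x = lm ∨ x = lp) ∧
      (lp / lm + 1) ^ 2 / (lp / lm)
        = (((k : ℝ) + 2) * ℓ * γ - ((k : ℝ) - 2 * ℓ)) ^ 2 / (2 * (k : ℝ) * ℓ * (ℓ * γ ^ 2 - 1)) := by
  have hk' : (1 : ℝ) ≤ k := by exact_mod_cast hk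
  have hl0 : 0 < ℓ := by linarith
  have hs : 0 < Real.sqrt ℓ := Real.sqrt_pos.mpr hl0
  have hsq : Real.sqrt ℓ ^ 2 = ℓ := Real.sq_sqrt hl0.le
  have hγ0 : 0 < γ := lt_trans (by positivity) hγ
  have h1 : 1 < γ * Real.sqrt ℓ := (div_lt_iff₀ hs).mp hγ
  have he : 0 < ℓ * γ ^ 2 - 1 := by
    have h2 : ℓ * γ ^ 2 = (γ * Real.sqrt ℓ) ^ 2 := by rw [mul_pow, hsq]; ring
    rw [h2]; nlinarith
  have hg : 1 < ℓ * γ := by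
    have h3 : 1 < (ℓ * γ) ^ 2 := by
      have : (ℓ * γ) ^ 2 = ℓ * (ℓ * γ ^ 2 - 1) + ℓ := by ring
      rw [this]; nlinarith [mul_pos hl0 he]
    nlinarith [mul_pos hl0 hγ0]
  obtain ⟨K, hK⟩ : ∃ K : ℝ, K = k := ⟨_, rfl⟩
  rw [← hK] at hk' hA ⊢
  obtain ⟨S, hS⟩ : ∃ S : ℝ, S = (K + 2) * ℓ * γ - (K - 2 * ℓ) := ⟨_, rfl⟩
  have hS0 : 0 < S := by
    have : S = K * (ℓ * γ - 1) + 2 * (ℓ * γ + ℓ) := by rw [hS]; ring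
    rw [this]
    have := mul_pos (show 0 < K by linarith) (sub_pos.mpr hg)
    linarith
  have hD : 0 < S ^ 2 - 8 * K * ℓ * (ℓ * γ ^ 2 - 1) := by
    have : S ^ 2 - 8 * K * ℓ * (ℓ * γ ^ 2 - 1) =
        (K * (ℓ * γ - 1) - 2 * (ℓ * γ + ℓ)) ^ 2 + 8 * (K * ((ℓ * γ) * (ℓ - 1))) := by
      rw [hS]; ring
    rw [this]
    have : 0 < K * ((ℓ * γ) * (ℓ - 1)) :=
      mul_pos (by linarith) (mul_pos (by linarith) (by linarith))
    positivity
  obtain ⟨d, hd⟩ : ∃ d : ℝ, d = Real.sqrt (S ^ 2 - 8 * K * ℓ * (ℓ * γ ^ 2 - 1)) := ⟨_, rfl⟩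
  have hd0 : 0 < d := by rw [hd]; exact Real.sqrt_pos.mpr hD
  have hd2 : d ^ 2 = S ^ 2 - 8 * K * ℓ * (ℓ * γ ^ 2 - 1) := by rw [hd]; exact Real.sq_sqrt hD.le
  have hP : 0 < K * ℓ * (ℓ * γ ^ 2 - 1) := mul_pos (mul_pos (by linarith) hl0) he
  have hdS : d < S := by nlinarith
  have hT : (K + 2) * ε + A = γ * S := by rw [hε, hA, hS]; ring
  have hQ : 2 * K * ε * (ε + 1) = γ * (S - d) / 2 * (γ * (S + d) / 2) := by
    rw [hε]; linear_combination (γ ^ 2 / 4) * hd2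
  have hm : 0 < γ * (S - d) / 2 := by have := mul_pos hγ0 (sub_pos.mpr hdS); linarith
  have hp : 0 < γ * (S + d) / 2 := by positivity
  rw [hT, hQ, ← hS]
  refine ⟨γ * (S - d) / 2, γ * (S + d) / 2, hm, ?_, by ring, by ring, ?_, ?_⟩
  · nlinarith [mul_pos hγ0 hd0]
  · intro x hx
    have : (x - γ * (S - d) / 2) * (x - γ * (S + d) / 2) = 0 := by linear_combination hx
    rcases mul_eq_zero.mp this with h | h
    · left; linarith
    · right; linarith
  · have hden : 2 * K * ℓ * (ℓ * γ ^ 2 - 1) = (S - d) * (S + d) / 4 := by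
      linear_combination (1 / 4) * hd2
    rw [hden]
    have a1 : S - d ≠ 0 := (sub_pos.mpr hdS).ne'
    have a2 : S + d ≠ 0 := by positivity
    field_simp
    ring
end

section
/- Under the standard sonic-point setup, put B₀ := (k−2)a₁ + 2A − 4k and f(z) := −ε − Az + Bz². Then: B₀ > 0; f(−ε/a₁)·a₁²/ε² = −B₀ + 1 − ℓ, which is negative; the quantity (ℓ−1)R + B₀R − ε·B₀/δ is positive; and (k−1)a₁² − (B − A + 2k)a₁ + 2(k − B)ε = ((ℓ−1)R + B₀R − ε·B₀/δ)·δ, so that when R ≠ 2 the coefficient a₂ := ((k−1)a₁² − (B − A + 2k)a₁ + 2(k − B)ε)/((R−2)δ) satisfies (R−2)a₂ = (ℓ−1)R + B₀R − ε·B₀/δ > 0. -/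
open Set

/-- Positivity of `B₀` and the formula for the second Taylor coefficient `a₂` at the
sonic point. -/
theorem a2_positive
    (k : ℕ) (hk : 1 ≤ k) (ℓ γ ε A B a₁ δ R : ℝ)
    (hℓ : 1 < ℓ) (hγ : 1 / Real.sqrt ℓ < γ)
    (hε : ε = ℓ * γ ^ 2 - 1) (hεpos : 0 < ε)
    (hA : A = (k : ℝ) + 2 - ((k : ℝ) - 2 * ℓ) * γ)
    (hB : B = 2 * (k : ℝ) + 1 - ℓ)
    (hdisc : 0 < (((k : ℝ) - 2) * ε + A) ^ 2 - 8 * ((k : ℝ) - A) * ε)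
    (ha₁ : a₁ = ((((k : ℝ) - 2) * ε + A)
        + Real.sqrt ((((k : ℝ) - 2) * ε + A) ^ 2 - 8 * ((k : ℝ) - A) * ε)) / 2)
    (hδ : δ = A + (k : ℝ) * ε - a₁) (hδpos : 0 < δ)
    (hR : R = (a₁ + 2 * ε) / δ) (hR1 : 1 < R)
    (hRδ : R * δ = a₁ + 2 * ε)
    (hR1δ : (R + 1) * δ = ((k : ℝ) + 2) * ε + A)
    (hRδ2 : R * δ ^ 2 = 2 * (k : ℝ) * ε * (1 + ε))
    (B₀ a₂ : ℝ)
    (hB₀ : B₀ = ((k : ℝ) - 2) * a₁ + 2 * A - 4 * (k : ℝ))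
    (ha₂ : a₂ = (((k : ℝ) - 1) * a₁ ^ 2 - (B - A + 2 * (k : ℝ)) * a₁ + 2 * ((k : ℝ) - B) * ε)
        / ((R - 2) * δ)) :
    0 < B₀ ∧
    (-ε - A * (-ε / a₁) + B * (-ε / a₁) ^ 2) * a₁ ^ 2 / ε ^ 2 = -B₀ + 1 - ℓ ∧
    -B₀ + 1 - ℓ < 0 ∧
    0 < (ℓ - 1) * R + B₀ * R - ε * B₀ / δ ∧
    ((k : ℝ) - 1) * a₁ ^ 2 - (B - A + 2 * (k : ℝ)) * a₁ + 2 * ((k : ℝ) - B) * ε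
      = ((ℓ - 1) * R + B₀ * R - ε * B₀ / δ) * δ ∧
    (R ≠ 2 →
      (R - 2) * a₂ = (ℓ - 1) * R + B₀ * R - ε * B₀ / δ ∧ 0 < (R - 2) * a₂) := by
  have hl0 : 0 < ℓ := by linarith
  have hγ0 : 0 < γ := lt_trans (by positivity) hγ
  have hk1 : (1 : ℝ) ≤ k := by exact_mod_cast hk
  have hkc : k = 1 ∨ k = 2 ∨ (3 : ℝ) ≤ k := by
    rcases Nat.lt_or_ge k 3 with h | h
    · have : k = 1 ∨ k = 2 := by omega
      tauto
    · right; right; exact_mod_cast h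
  obtain ⟨S, hS⟩ : ∃ S, S = Real.sqrt ((((k : ℝ) - 2) * ε + A) ^ 2 - 8 * ((k : ℝ) - A) * ε) :=
    ⟨_, rfl⟩
  have hSpos : 0 < S := by rw [hS]; exact Real.sqrt_pos.mpr hdisc
  have hSsq : S ^ 2 = (((k : ℝ) - 2) * ε + A) ^ 2 - 8 * ((k : ℝ) - A) * ε := by
    rw [hS]; exact Real.sq_sqrt hdisc.le
  rw [← hS] at ha₁
  have hroot : a₁ ^ 2 - (((k : ℝ) - 2) * ε + A) * a₁ + 2 * ((k : ℝ) - A) * ε = 0 := by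
    rw [ha₁]; linear_combination hSsq / 4
  have hBe : B₀ * ε = a₁ ^ 2 - A * a₁ - 2 * k * ε := by
    rw [hB₀]; linear_combination -hroot
  obtain ⟨V, hV⟩ : ∃ V, V = ((k : ℝ) - 2) ^ 2 * (1 + ε) + (k + 2) * (2 * ℓ - k) * γ := ⟨_, rfl⟩
  have hquad : B₀ * (V - B₀) = 2 * k * γ ^ 2 * (ℓ - 1) * (4 * ℓ - (k : ℝ) ^ 2) := by
    have h1 : B₀ * (V - B₀) = 2 * k * ((((k : ℝ) - 2 * ℓ) * γ) ^ 2 - (1 + ε) * ((k : ℝ) - 2) ^ 2) := by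
      rw [hV, hB₀]
      have hA' : ((k : ℝ) - 2 * ℓ) * γ = k + 2 - A := by linarith
      have hA2 : ((k : ℝ) + 2) * (2 * ℓ - k) * γ = (k + 2) * (A - k - 2) := by
        linear_combination (-(k : ℝ) - 2) * hA'
      rw [hA', hA2]
      linear_combination (-((k : ℝ) - 2) ^ 2) * hroot
    rw [h1, hε]; ring
  have hsum : 2 * B₀ = ((k : ℝ) - 2) * S + V := by
    rw [hV, hB₀, ha₁, hA]; ring
  have hBpos : 0 < B₀ := by
    rcases hkc with h | h | h
    · have hkr : (k : ℝ) = 1 := by rw [h]; norm_num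
      rw [hkr] at hquad hV
      have hVp : 0 < V := by
        have : 0 < (2 * ℓ - 1) * γ := mul_pos (by linarith) hγ0
        rw [hV]; linarith
      have hC : 0 < B₀ * (V - B₀) := by
        rw [hquad]
        have h1 : 0 < ℓ - 1 := by linarith
        have h2 : 0 < 4 * ℓ - 1 ^ 2 := by linarith
        positivity
      by_contra hn
      push Not at hn
      exact absurd hC (not_lt.mpr (mul_nonpos_of_nonpos_of_nonneg hn (by linarith)))
    · have hkr : (k : ℝ) = 2 := by rw [h]; norm_num
      rw [hkr] at hsum hV
      have : 0 < (2 * ℓ - 2) * γ := mul_pos (by linarith) hγ0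
      linarith
    · have hm : 0 < ((k : ℝ) - 2) * S := mul_pos (by linarith) hSpos
      rcases le_or_gt ((k : ℝ) ^ 2) (4 * ℓ) with hc | hc
      · have h1 : 0 ≤ 2 * ℓ - k := by
          have : 0 ≤ (k : ℝ) * (k - 2) := mul_nonneg (by linarith) (by linarith)
          linarith
        have hVp : 0 ≤ V := by rw [hV]; positivity
        linarith
      · have hC : B₀ * (V - B₀) < 0 := by
          rw [hquad]
          have h1 : 0 < ℓ - 1 := by linarith
          exact mul_neg_of_pos_of_neg (by positivity) (by linarith)
        by_contra hn
        push Not at hn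
        have : V - B₀ ≤ 0 := by linarith
        linarith [mul_nonneg_of_nonpos_of_nonpos hn this]
  have ha0 : a₁ ≠ 0 := by
    intro h
    rw [h] at hBe
    have : 0 < B₀ * ε := by positivity
    have : 0 < 2 * (k : ℝ) * ε := by positivity
    linarith
  have hR0 : 0 < R := by linarith
  have hRe : ε < R * δ := by
    by_contra hn
    push Not at hn
    have h1 : 0 < R * δ := by positivity
    have h2 : (R * δ) ^ 2 ≤ ε ^ 2 := by gcongr
    have h3 : R * δ ^ 2 < (R * δ) ^ 2 := by
      have : 0 < (R - 1) * (R * δ ^ 2) := mul_pos (by linarith) (by positivity)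
      linarith
    have h4 : ε * (1 + ε) ≤ (k : ℝ) * (ε * (1 + ε)) :=
      le_mul_of_one_le_left (by positivity) hk1
    have h5 : 0 < ε ^ 2 := by positivity
    linarith
  have hQ : 0 < (ℓ - 1) * R + B₀ * R - ε * B₀ / δ := by
    have h1 : 0 < (ℓ - 1) * R := mul_pos (by linarith) hR0
    have h2 : ε * B₀ / δ < B₀ * R := by
      rw [div_lt_iff₀ hδpos]
      linarith [mul_lt_mul_of_pos_right hRe hBpos]
    linarith
  have hid : ((k : ℝ) - 1) * a₁ ^ 2 - (B - A + 2 * (k : ℝ)) * a₁ + 2 * ((k : ℝ) - B) * ε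
      = ((ℓ - 1) * R + B₀ * R - ε * B₀ / δ) * δ := by
    have h1 : ((ℓ - 1) * R + B₀ * R - ε * B₀ / δ) * δ
        = (ℓ - 1 + B₀) * (R * δ) - ε * B₀ := by
      field_simp
    rw [h1, hRδ, hB]
    linear_combination (-1 : ℝ) * hBe - a₁ * hB₀
  refine ⟨hBpos, ?_, by linarith, hQ, hid, ?_⟩
  · have : (-ε - A * (-ε / a₁) + B * (-ε / a₁) ^ 2) * a₁ ^ 2 / ε ^ 2
        = (-(a₁ ^ 2 - A * a₁) + B * ε) / ε := by
      field_simp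
      ring
    rw [this, div_eq_iff hεpos.ne', hB]
    linear_combination hBe
  · intro h2
    have h3 : R - 2 ≠ 0 := sub_ne_zero.mpr h2
    have h4 : (R - 2) * a₂ = (ℓ - 1) * R + B₀ * R - ε * B₀ / δ := by
      rw [ha₂, hid, mul_div_mul_right _ _ hδpos.ne', mul_div_cancel₀ _ h3]
    exact ⟨h4, h4 ▸ hQ⟩
end

section
/- Under the standard sonic-point setup with higher Taylor coefficients, assume R ≠ 2. Then (R−2)a₂ = ((k−3)R + 1)a₁ + 3AR − (2k + B)R, (R−2)B₁ = ((k+5)R − 6k)a₁ − 6AR + 2kR + 4k + 4B, and (R−2)B₂ = −((k−15)R + 8k + 5)a₁ − (16R − 2)A + 2(4k + B)R + 4k + 6B. -/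
open Set

/-- Explicit expressions for `(R-2)a₂`, `(R-2)B₁` and `(R-2)B₂` in terms of `a₁`, `A`, `B`. -/
theorem taylor_coefficient_identities
    (k : ℕ) (hk : 1 ≤ k) (ℓ γ ε A B a₁ δ R : ℝ)
    (hℓ : 1 < ℓ) (hγ : 1 / Real.sqrt ℓ < γ)
    (hε : ε = ℓ * γ ^ 2 - 1) (hεpos : 0 < ε)
    (hA : A = (k : ℝ) + 2 - ((k : ℝ) - 2 * ℓ) * γ)
    (hB : B = 2 * (k : ℝ) + 1 - ℓ)
    (hdisc : 0 < (((k : ℝ) - 2) * ε + A) ^ 2 - 8 * ((k : ℝ) - A) * ε)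
    (ha₁ : a₁ = ((((k : ℝ) - 2) * ε + A)
        + Real.sqrt ((((k : ℝ) - 2) * ε + A) ^ 2 - 8 * ((k : ℝ) - A) * ε)) / 2)
    (hδ : δ = A + (k : ℝ) * ε - a₁) (hδpos : 0 < δ)
    (hR : R = (a₁ + 2 * ε) / δ) (hR1 : 1 < R)
    (hRδ : R * δ = a₁ + 2 * ε)
    (hR1δ : (R + 1) * δ = ((k : ℝ) + 2) * ε + A)
    (hRδ2 : R * δ ^ 2 = 2 * (k : ℝ) * ε * (1 + ε))
    (a₂ B₁ B₂ : ℝ)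
    (ha₂ : a₂ = (((k : ℝ) - 1) * a₁ ^ 2 - (B - A + 2 * (k : ℝ)) * a₁ + 2 * ((k : ℝ) - B) * ε)
        / ((R - 2) * δ))
    (hB₁ : B₁ = (3 * (k : ℝ) - 1) * a₁ - 2 * a₂ - 2 * ((k : ℝ) + B))
    (hB₂ : B₂ = -5 * a₂ + 4 * (k : ℝ) * a₁ - (2 * (k : ℝ) + A + 3 * B))
    (hR2 : R ≠ 2) :
    (R - 2) * a₂ = (((k : ℝ) - 3) * R + 1) * a₁ + 3 * A * R - (2 * (k : ℝ) + B) * R ∧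
    (R - 2) * B₁ = (((k : ℝ) + 5) * R - 6 * (k : ℝ)) * a₁ - 6 * A * R
        + 2 * (k : ℝ) * R + 4 * (k : ℝ) + 4 * B ∧
    (R - 2) * B₂ = -((((k : ℝ) - 15) * R + 8 * (k : ℝ) + 5) * a₁) - (16 * R - 2) * A
        + 2 * (4 * (k : ℝ) + B) * R + 4 * (k : ℝ) + 6 * B := by
  have hp : a₁ ^ 2 - (((k : ℝ) - 2) * ε + A) * a₁ + 2 * ((k : ℝ) - A) * ε = 0 := by
    have hs := Real.sq_sqrt hdisc.le
    rw [ha₁]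
    linear_combination hs / 4
  have hR2' : R - 2 ≠ 0 := sub_ne_zero.mpr hR2
  have hδ0 : δ ≠ 0 := hδpos.ne'
  have h2 : (R - 2) * a₂ =
      (((k : ℝ) - 3) * R + 1) * a₁ + 3 * A * R - (2 * (k : ℝ) + B) * R := by
    have h3 : a₂ * ((R - 2) * δ) = ((k : ℝ) - 1) * a₁ ^ 2 - (B - A + 2 * (k : ℝ)) * a₁
        + 2 * ((k : ℝ) - B) * ε := by
      rw [ha₂]
      exact div_mul_cancel₀ _ (mul_ne_zero hR2' hδ0)
    apply mul_right_cancel₀ hδ0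
    linear_combination h3 + 3 * hp - a₁ * hδ
      - (((k : ℝ) - 3) * a₁ + 3 * A - 2 * (k : ℝ) - B) * hRδ
  refine ⟨h2, ?_, ?_⟩
  · rw [hB₁]
    linear_combination (-2) * h2
  · rw [hB₂]
    linear_combination (-5) * h2
end

section
/- Under the standard sonic-point setup with higher Taylor coefficients, assume k ≥ 3 and R ≠ 2. Then 5·(B₁ − (kR/2 − 1)δ) − 2B₂ = (k−3)a₁ + (7/2)·((k−2)a₁ + 2A − 4k) + 4(ℓ−1), and this quantity is positive. -/
open Set

/-- For `k ≥ 3`, the combination `5(B₁ − (kR/2 − 1)δ) − 2B₂` is positive. -/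
theorem combination_positive_k_ge_three
    (k : ℕ) (hk : 1 ≤ k) (ℓ γ ε A B a₁ δ R : ℝ)
    (hℓ : 1 < ℓ) (hγ : 1 / Real.sqrt ℓ < γ)
    (hε : ε = ℓ * γ ^ 2 - 1) (hεpos : 0 < ε)
    (hA : A = (k : ℝ) + 2 - ((k : ℝ) - 2 * ℓ) * γ)
    (hB : B = 2 * (k : ℝ) + 1 - ℓ)
    (hdisc : 0 < (((k : ℝ) - 2) * ε + A) ^ 2 - 8 * ((k : ℝ) - A) * ε)
    (ha₁ : a₁ = ((((k : ℝ) - 2) * ε + A)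
        + Real.sqrt ((((k : ℝ) - 2) * ε + A) ^ 2 - 8 * ((k : ℝ) - A) * ε)) / 2)
    (hδ : δ = A + (k : ℝ) * ε - a₁) (hδpos : 0 < δ)
    (hR : R = (a₁ + 2 * ε) / δ) (hR1 : 1 < R)
    (hRδ : R * δ = a₁ + 2 * ε)
    (hR1δ : (R + 1) * δ = ((k : ℝ) + 2) * ε + A)
    (hRδ2 : R * δ ^ 2 = 2 * (k : ℝ) * ε * (1 + ε))
    (a₂ B₁ B₂ : ℝ)
    (ha₂ : a₂ = (((k : ℝ) - 1) * a₁ ^ 2 - (B - A + 2 * (k : ℝ)) * a₁ + 2 * ((k : ℝ) - B) * ε)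
        / ((R - 2) * δ))
    (hB₁ : B₁ = (3 * (k : ℝ) - 1) * a₁ - 2 * a₂ - 2 * ((k : ℝ) + B))
    (hB₂ : B₂ = -5 * a₂ + 4 * (k : ℝ) * a₁ - (2 * (k : ℝ) + A + 3 * B))
    (hk3 : 3 ≤ k) (hR2 : R ≠ 2) :
    5 * (B₁ - ((k : ℝ) * R / 2 - 1) * δ) - 2 * B₂
      = ((k : ℝ) - 3) * a₁ + (7 / 2) * (((k : ℝ) - 2) * a₁ + 2 * A - 4 * (k : ℝ))
        + 4 * (ℓ - 1) ∧
    0 < 5 * (B₁ - ((k : ℝ) * R / 2 - 1) * δ) - 2 * B₂ := by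
  have hid : 5 * (B₁ - ((k : ℝ) * R / 2 - 1) * δ) - 2 * B₂
      = ((k : ℝ) - 3) * a₁ + (7 / 2) * (((k : ℝ) - 2) * a₁ + 2 * A - 4 * (k : ℝ))
        + 4 * (ℓ - 1) := by
    have h1 : ((k : ℝ) * R / 2 - 1) * δ = (k : ℝ) / 2 * (a₁ + 2 * ε) - δ := by
      rw [← hRδ]; ring
    rw [h1, hB₁, hB₂, hδ, hB]; ring
  refine ⟨hid, ?_⟩
  rw [hid]
  have hK : (3 : ℝ) ≤ k := by exact_mod_cast hk3
  clear ha₂ hB₁ hB₂ hid hR hR1 hRδ hR1δ hRδ2 hR2 hδ hδpos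
  generalize (k : ℝ) = K at *
  have hγ0 : 0 < γ := lt_trans (by positivity) hγ
  -- any point where p₀ is negative lies below a₁
  have H : ∀ x : ℝ, x ^ 2 - ((K - 2) * ε + A) * x + 2 * (K - A) * ε < 0 → x < a₁ := by
    intro x hx
    have h2 : (2 * x - ((K - 2) * ε + A)) < Real.sqrt (((K - 2) * ε + A) ^ 2 - 8 * (K - A) * ε) := by
      apply Real.lt_sqrt_of_sq_lt
      nlinarith
    rw [ha₁]; linarith
  have key : 0 < a₁ ∧ 0 < (K - 2) * a₁ + 2 * A - 4 * K := by
    rcases lt_or_ge (2 * K) A with hA2 | hA2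
    · have h0 : 0 < a₁ := by
        apply H
        have : 0 < (A - K) * ε := mul_pos (by linarith) hεpos
        linarith
      have : 0 < (K - 2) * a₁ := mul_pos (by linarith) h0
      exact ⟨h0, by linarith⟩
    · have hK2 : 0 < K - 2 := by linarith
      have hP : (2 * K - A) * (4 - A) < (K - 2) ^ 2 * ε := by
        rcases lt_or_ge (4 * ℓ) (K ^ 2) with h | h
        · have e : (K - 2) ^ 2 * ε - (2 * K - A) * (4 - A)
              = γ ^ 2 * ((ℓ - 1) * (K ^ 2 - 4 * ℓ)) := by
            rw [hA, hε]; ring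
          have : 0 < γ ^ 2 * ((ℓ - 1) * (K ^ 2 - 4 * ℓ)) :=
            mul_pos (by positivity) (mul_pos (by linarith) (by linarith))
          linarith
        · have h3 : 0 ≤ (2 * ℓ - K) * γ := mul_nonneg (by nlinarith) hγ0.le
          have h4 : 4 < A := by rw [hA]; linarith
          have h5 : 0 ≤ (2 * K - A) * (A - 4) := mul_nonneg (by linarith) (by linarith)
          have h6 : 0 < (K - 2) ^ 2 * ε := by positivity
          linarith
      have hx : (4 * K - 2 * A) / (K - 2) < a₁ := by
        apply H
        have e : ((4 * K - 2 * A) / (K - 2)) ^ 2 - ((K - 2) * ε + A) * ((4 * K - 2 * A) / (K - 2))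
            + 2 * (K - A) * ε
            = 2 * K * ((2 * K - A) * (4 - A) - (K - 2) ^ 2 * ε) / (K - 2) ^ 2 := by
          field_simp
          ring
        rw [e]
        apply div_neg_of_neg_of_pos _ (by positivity)
        exact mul_neg_of_pos_of_neg (by linarith) (by linarith)
      have h0 : 0 ≤ (4 * K - 2 * A) / (K - 2) := div_nonneg (by linarith) hK2.le
      have ha0 : 0 < a₁ := lt_of_le_of_lt h0 hx
      rw [div_lt_iff₀ hK2] at hx
      exact ⟨ha0, by linarith⟩
  have : 0 ≤ (K - 3) * a₁ := mul_nonneg (by linarith) key.1.le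
  linarith [key.2]
end

section
/- Under the standard sonic-point setup, let μ := (k+2)² − (k−2ℓ)²/ℓ and assume kR > 2. Then (2R + k + 4)·A = (2 − k/R)·(R + 1)·a₁ + μ. -/
open Set

/-- The identity `(2R + k + 4) A = (2 − k/R)(R + 1) a₁ + μ`. -/
theorem A_a1_mu_identity
    (k : ℕ) (hk : 1 ≤ k) (ℓ γ ε A B a₁ δ R : ℝ)
    (hℓ : 1 < ℓ) (hγ : 1 / Real.sqrt ℓ < γ)
    (hε : ε = ℓ * γ ^ 2 - 1) (hεpos : 0 < ε)
    (hA : A = (k : ℝ) + 2 - ((k : ℝ) - 2 * ℓ) * γ)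
    (hB : B = 2 * (k : ℝ) + 1 - ℓ)
    (hdisc : 0 < (((k : ℝ) - 2) * ε + A) ^ 2 - 8 * ((k : ℝ) - A) * ε)
    (ha₁ : a₁ = ((((k : ℝ) - 2) * ε + A)
        + Real.sqrt ((((k : ℝ) - 2) * ε + A) ^ 2 - 8 * ((k : ℝ) - A) * ε)) / 2)
    (hδ : δ = A + (k : ℝ) * ε - a₁) (hδpos : 0 < δ)
    (hR : R = (a₁ + 2 * ε) / δ) (hR1 : 1 < R)
    (hRδ : R * δ = a₁ + 2 * ε)
    (hR1δ : (R + 1) * δ = ((k : ℝ) + 2) * ε + A)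
    (hRδ2 : R * δ ^ 2 = 2 * (k : ℝ) * ε * (1 + ε))
    (μ : ℝ)
    (hμ : μ = ((k : ℝ) + 2) ^ 2 - ((k : ℝ) - 2 * ℓ) ^ 2 / ℓ)
    (hkR : 2 < (k : ℝ) * R) :
    (2 * R + (k : ℝ) + 4) * A = (2 - (k : ℝ) / R) * (R + 1) * a₁ + μ := by
  have hRpos : 0 < R := by linarith
  have hE : (1 + ε) ≠ 0 := by positivity
  have hl : ℓ ≠ 0 := by positivity
  have ha : a₁ = R * δ - 2 * ε := by linarith
  have hA' : A = (R + 1) * δ - ((k : ℝ) + 2) * ε := by linarith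
  have h1 : μ * (1 + ε) = ((k : ℝ) + 2) ^ 2 * (1 + ε) - (A - (k + 2)) ^ 2 := by
    rw [hμ, hA, hε]
    field_simp
    ring
  have hd : δ ^ 2 = 2 * (k : ℝ) * ε * (1 + ε) / R := by
    rw [eq_div_iff hRpos.ne']
    linarith
  have h2 : μ = -((k : ℝ) + 2) ^ 2 * ε - 2 * k * ε * (R + 1) ^ 2 / R
      + 2 * (R + 1) * (k + 2) * δ := by
    apply mul_right_cancel₀ hE
    rw [h1, hA']
    linear_combination (-(R + 1) ^ 2) * hd
  rw [h2, hA', ha]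
  field_simp
  ring
end

section
/- Under the standard sonic-point setup with higher Taylor coefficients, assume k = 1 or k = 2, and 3 ≤ R ≤ 4. Then (R−2)·B₁ > (R−3)·(kR−2)·δ. -/
lemma poly_one (R t : ℝ) (h3 : 3 ≤ R) (h4 : R ≤ 4) (ht : 0 < t) (hz : 2 < R * t ^ 2)
    (hm : 3 * R * t < 2 * (R + 1)) :
    0 < R * (t * (R - 2) * 2 * (R * t - 2) - 8 * t * (R - 2) * ((R * t ^ 2 - 2) / 2)
      - 2 * (((R + 1) * t - 3) * (R * t - 2))
      + 2 * ((R * t ^ 2 - 2) / 2) * (5 * (R * t - 2) + 4) - (R - 3) * (R - 2) * t ^ 2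
      - 4 * t * ((R * t ^ 2 - 2) / 2))
      - t * 2 * (R + 1 - 3 * R * t / 2) ^ 2 := by
  have hτ : 883 / 10000 * (12 - R) ≤ t := by
    by_contra hc
    push Not at hc
    have h1 : t ^ 2 < (883 / 10000 * (12 - R)) ^ 2 := by gcongr
    have h2 : R * (883 / 10000 * (12 - R)) ^ 2 ≤ 2 := by
      nlinarith [mul_nonneg (sub_nonneg.2 h3) (sub_nonneg.2 h4),
        mul_nonneg (by linarith : (0 : ℝ) ≤ R) (sq_nonneg (R - 4)), sq_nonneg (R - 4),
        mul_nonneg (sub_nonneg.2 h4) (sq_nonneg (R - 4))]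
    nlinarith
  obtain ⟨h, hh, rfl⟩ : ∃ h, 0 ≤ h ∧ t = 883 / 10000 * (12 - R) + h :=
    ⟨t - 883 / 10000 * (12 - R), by linarith, by ring⟩
  set τ := 883 / 10000 * (12 - R) with hτd
  have hQ0 : 0 < R ^ 2 * (R + 3 / 2) * τ ^ 2 - R ^ 2 * (R + 1) * τ + 2 * R ^ 2 - 4 * R - 2 := by
    obtain ⟨x, hx, hx1, rfl⟩ : ∃ x, 0 ≤ x ∧ x ≤ 1 ∧ R = 4 - x :=
      ⟨4 - R, by linarith, by linarith, by ring⟩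
    rw [hτd]
    have hy : 0 ≤ 1 - x := by linarith
    nlinarith [mul_nonneg hx hy, mul_nonneg (mul_nonneg hx hx) hy,
      mul_nonneg (mul_nonneg hx hy) hy, mul_nonneg (mul_nonneg hx hx) (mul_nonneg hx hy),
      mul_nonneg (mul_nonneg hx hx) (mul_nonneg hx (mul_nonneg hx hy)), mul_nonneg (mul_nonneg hx hx) (mul_nonneg hy hy)]
  have hQ1 : 0 ≤ 2 * (R + 3 / 2) * τ - (R + 1) := by nlinarith
  have hQ : 0 < R ^ 2 * (R + 3 / 2) * (τ + h) ^ 2 - R ^ 2 * (R + 1) * (τ + h)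
      + 2 * R ^ 2 - 4 * R - 2 := by
    have h5 : 0 ≤ R ^ 2 * h * (2 * (R + 3 / 2) * τ - (R + 1)) := by positivity
    have h6 : 0 ≤ R ^ 2 * (R + 3 / 2) * h ^ 2 := by positivity
    nlinarith
  have := mul_pos ht hQ
  nlinarith

lemma poly_two (R t : ℝ) (h3 : 3 ≤ R) (h4 : R ≤ 4) (ht : 0 < t) (h : 4 < R * t ^ 2)
    (hm : R * t < R + 1) :
    0 < R * (t * (R - 2) * 5 * (R * t - 2) - 14 * t * (R - 2) * ((R * t ^ 2 - 4) / 4)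
      - 2 * ((R * t - 2) ^ 2 + ((R + 1) * t - 4) * (R * t - 2))
      + 2 * ((R * t ^ 2 - 4) / 4) * (9 * (R * t - 2) + 6) - (R - 3) * (2 * R - 2) * t ^ 2
      - 8 * t * ((R * t ^ 2 - 4) / 4))
      - t * 4 * (R + 1 - R * t) ^ 2 := by
  nlinarith [mul_pos ht (sub_pos.2 h), mul_nonneg (sub_nonneg.2 h3) (sub_nonneg.2 h4)]



open Set

/-- For `k ∈ {1, 2}` and `R ∈ [3, 4]`, one has `(R−2) B₁ > (R−3)(kR−2) δ`. -/
theorem B1_lower_bound_k_le_two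
    (k : ℕ) (hk : 1 ≤ k) (ℓ γ ε A B a₁ δ R : ℝ)
    (hℓ : 1 < ℓ) (hγ : 1 / Real.sqrt ℓ < γ)
    (hε : ε = ℓ * γ ^ 2 - 1) (hεpos : 0 < ε)
    (hA : A = (k : ℝ) + 2 - ((k : ℝ) - 2 * ℓ) * γ)
    (hB : B = 2 * (k : ℝ) + 1 - ℓ)
    (hdisc : 0 < (((k : ℝ) - 2) * ε + A) ^ 2 - 8 * ((k : ℝ) - A) * ε)
    (ha₁ : a₁ = ((((k : ℝ) - 2) * ε + A)
        + Real.sqrt ((((k : ℝ) - 2) * ε + A) ^ 2 - 8 * ((k : ℝ) - A) * ε)) / 2)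
    (hδ : δ = A + (k : ℝ) * ε - a₁) (hδpos : 0 < δ)
    (hR : R = (a₁ + 2 * ε) / δ) (hR1 : 1 < R)
    (hRδ : R * δ = a₁ + 2 * ε)
    (hR1δ : (R + 1) * δ = ((k : ℝ) + 2) * ε + A)
    (hRδ2 : R * δ ^ 2 = 2 * (k : ℝ) * ε * (1 + ε))
    (a₂ B₁ : ℝ)
    (ha₂ : a₂ = (((k : ℝ) - 1) * a₁ ^ 2 - (B - A + 2 * (k : ℝ)) * a₁ + 2 * ((k : ℝ) - B) * ε)
        / ((R - 2) * δ))
    (hB₁ : B₁ = (3 * (k : ℝ) - 1) * a₁ - 2 * a₂ - 2 * ((k : ℝ) + B))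
    (hk12 : k = 1 ∨ k = 2) (hR3 : 3 ≤ R) (hR4 : R ≤ 4) :
    (R - 2) * B₁ > (R - 3) * ((k : ℝ) * R - 2) * δ := by
  have hγpos : 0 < γ := lt_trans (by positivity) hγ
  obtain ⟨t, rfl⟩ : ∃ t, δ = ε * t := ⟨δ / ε, by field_simp⟩
  have ht : 0 < t := (mul_pos_iff_of_pos_left hεpos).1 hδpos
  clear hdisc hR hR1 hγ
  have ha : a₁ = R * (ε * t) - 2 * ε := by linarith
  have hN : (R - 2) * (ε * t) * a₂ = ((k : ℝ) - 1) * a₁ ^ 2 - (B - A + 2 * (k : ℝ)) * a₁ + 2 * ((k : ℝ) - B) * ε := by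
    rw [ha₂]
    have : R - 2 ≠ 0 := by linarith
    field_simp
  clear ha₂ ha₁
  rcases hk12 with hkk | hkk
  · subst hkk
    norm_num at *
    have e1 : R * t ^ 2 * ε = 2 * (1 + ε) := by
      apply mul_left_cancel₀ hεpos.ne'
      linear_combination hRδ2
    have hm : ε * ((R * t ^ 2 - 2) / 2) = 1 := by linarith
    have hA2 : (2 * ℓ - 1) * γ = ε * t * (R + 1 - 3 * R * t / 2) := by
      linarith
    have hbr : 0 < (R + 1 - 3 * R * t / 2) := by
      have : 0 < (2 * ℓ - 1) * γ := mul_pos (by linarith) hγpos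
      rw [hA2] at this
      exact (pos_iff_pos_of_mul_pos this).1 (by positivity)
    have hz : 2 < R * t ^ 2 := by
      by_contra hcon
      have : ε * (R * t ^ 2 - 2) ≤ 0 := mul_nonpos_of_nonneg_of_nonpos hεpos.le (by linarith)
      linarith
    have hp := poly_one R t hR3 hR4 ht hz (by linarith)
    have hl : (2 * ℓ - 1) ^ 2 * R = 2 * ℓ * ε * (R + 1 - 3 * R * t / 2) ^ 2 := by
      have hne : ε * t ^ 2 ≠ 0 := by positivity
      apply mul_left_cancel₀ hne
      have hsq : ((2 * ℓ - 1) * γ) ^ 2 = (ε * t * (R + 1 - 3 * R * t / 2)) ^ 2 := by rw [hA2]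
      have : ℓ * ((2 * ℓ - 1) * γ) ^ 2 = (1 + ε) * (2 * ℓ - 1) ^ 2 := by rw [hε]; ring
      rw [hsq] at this
      linear_combination (2 * ℓ - 1) ^ 2 * e1 - 2 * this
    have hl2 : (4 * ℓ - 4) * R < 2 * ε * (R + 1 - 3 * R * t / 2) ^ 2 := by
      have hl0 : 0 < ℓ := by linarith
      have : ℓ * ((4 * ℓ - 4) * R) < ℓ * (2 * ε * (R + 1 - 3 * R * t / 2) ^ 2) := by
        nlinarith
      exact lt_of_mul_lt_mul_left this hl0.le
    have key : t * ((R - 2) * B₁ - (R - 3) * (R - 2) * (ε * t)) = ε * (t * (R - 2) * 2 * (R * t - 2) - 8 * t * (R - 2) * ((R * t ^ 2 - 2) / 2)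
      - 2 * (((R + 1) * t - 3) * (R * t - 2))
      + 2 * ((R * t ^ 2 - 2) / 2) * (5 * (R * t - 2) + 4) - (R - 3) * (R - 2) * t ^ 2) - 4 * ℓ * t := by
      have hN' : (R - 2) * t * a₂ = -(3 + 2 - ℓ - ((R + 1) * (ε * t) - 3 * ε)) * (R * t - 2) + 2 * (ℓ - 2) := by
        apply mul_left_cancel₀ hεpos.ne'
        have hA' : A = (R + 1) * (ε * t) - 3 * ε := by linarith
        rw [ha, hA', hB] at hN
        linear_combination hN
      rw [hB₁, ha, hB]
      linear_combination (-2) * hN' + (8 * t * (R - 2) - 2 * (5 * (R * t - 2) + 4)) * hm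
    have hfin : 0 < R * (t * ((R - 2) * B₁ - (R - 3) * (R - 2) * (ε * t))) := by
      rw [key]
      have h1 := mul_pos hεpos hp
      have h2 := mul_lt_mul_of_pos_left hl2 ht
      linear_combination h1 + h2 - 4 * t * R * hm
    have hRt : 0 < R * t := by positivity
    have := (mul_pos_iff_of_pos_left hRt).1 (by linarith : 0 < (R * t) * ((R - 2) * B₁ - (R - 3) * (R - 2) * (ε * t)))
    linarith
  · subst hkk
    norm_num at *
    have e1 : R * t ^ 2 * ε = 4 * (1 + ε) := by
      apply mul_left_cancel₀ hεpos.ne'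
      linear_combination hRδ2
    have hm : ε * ((R * t ^ 2 - 4) / 4) = 1 := by linarith
    have hA2 : (2 * ℓ - 2) * γ = ε * t * (R + 1 - R * t) := by
      linarith
    have hbr : 0 < (R + 1 - R * t) := by
      have : 0 < (2 * ℓ - 2) * γ := mul_pos (by linarith) hγpos
      rw [hA2] at this
      exact (pos_iff_pos_of_mul_pos this).1 (by positivity)
    have hz : 4 < R * t ^ 2 := by
      by_contra hcon
      have : ε * (R * t ^ 2 - 4) ≤ 0 := mul_nonpos_of_nonneg_of_nonpos hεpos.le (by linarith)
      linarith
    have hp := poly_two R t hR3 hR4 ht hz (by linarith)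
    have hl : (2 * ℓ - 2) ^ 2 * R = 4 * ℓ * ε * (R + 1 - R * t) ^ 2 := by
      have hne : ε * t ^ 2 ≠ 0 := by positivity
      apply mul_left_cancel₀ hne
      have hsq : ((2 * ℓ - 2) * γ) ^ 2 = (ε * t * (R + 1 - R * t)) ^ 2 := by rw [hA2]
      have : ℓ * ((2 * ℓ - 2) * γ) ^ 2 = (1 + ε) * (2 * ℓ - 2) ^ 2 := by rw [hε]; ring
      rw [hsq] at this
      linear_combination (2 * ℓ - 2) ^ 2 * e1 - 4 * this
    have hl2 : (4 * ℓ - 8) * R < 4 * ε * (R + 1 - R * t) ^ 2 := by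
      have hl0 : 0 < ℓ := by linarith
      have : ℓ * ((4 * ℓ - 8) * R) < ℓ * (4 * ε * (R + 1 - R * t) ^ 2) := by
        nlinarith
      exact lt_of_mul_lt_mul_left this hl0.le
    have key : t * ((R - 2) * B₁ - (R - 3) * (2 * R - 2) * (ε * t)) = ε * (t * (R - 2) * 5 * (R * t - 2) - 14 * t * (R - 2) * ((R * t ^ 2 - 4) / 4)
      - 2 * ((R * t - 2) ^ 2 + ((R + 1) * t - 4) * (R * t - 2))
      + 2 * ((R * t ^ 2 - 4) / 4) * (9 * (R * t - 2) + 6) - (R - 3) * (2 * R - 2) * t ^ 2) - 4 * ℓ * t := by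
      have hN' : (R - 2) * t * a₂ = ε * (R * t - 2) ^ 2 - (9 - ℓ - ((R + 1) * (ε * t) - 4 * ε)) * (R * t - 2) + 2 * (ℓ - 3) := by
        apply mul_left_cancel₀ hεpos.ne'
        have hA' : A = (R + 1) * (ε * t) - 4 * ε := by linarith
        rw [ha, hA', hB] at hN
        linear_combination hN
      rw [hB₁, ha, hB]
      linear_combination (-2) * hN' + (14 * t * (R - 2) - 2 * (9 * (R * t - 2) + 6)) * hm
    have hfin : 0 < R * (t * ((R - 2) * B₁ - (R - 3) * (2 * R - 2) * (ε * t))) := by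
      rw [key]
      have h1 := mul_pos hεpos hp
      have h2 := mul_lt_mul_of_pos_left hl2 ht
      linear_combination h1 + h2 - 8 * t * R * hm
    have hRt : 0 < R * t := by positivity
    have := (mul_pos_iff_of_pos_left hRt).1 (by linarith : 0 < (R * t) * ((R - 2) * B₁ - (R - 3) * (2 * R - 2) * (ε * t)))
    linarith
end

section
/- Under the standard sonic-point setup, let f(z) := −ε − Az + Bz². Then f(z) < 0 for every z ∈ [−ε/a₁, 0]. -/
open Set

set_option maxHeartbeats 2000000 in
/-- Negativity of `f(z) = −ε − Az + Bz²` on the interval `[−ε/a₁, 0]`. -/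
theorem f_neg_on_interval
    (k : ℕ) (hk : 1 ≤ k) (ℓ γ ε A B a₁ δ R : ℝ)
    (hℓ : 1 < ℓ) (hγ : 1 / Real.sqrt ℓ < γ)
    (hε : ε = ℓ * γ ^ 2 - 1) (hεpos : 0 < ε)
    (hA : A = (k : ℝ) + 2 - ((k : ℝ) - 2 * ℓ) * γ)
    (hB : B = 2 * (k : ℝ) + 1 - ℓ)
    (hdisc : 0 < (((k : ℝ) - 2) * ε + A) ^ 2 - 8 * ((k : ℝ) - A) * ε)
    (ha₁ : a₁ = ((((k : ℝ) - 2) * ε + A)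
        + Real.sqrt ((((k : ℝ) - 2) * ε + A) ^ 2 - 8 * ((k : ℝ) - A) * ε)) / 2)
    (hδ : δ = A + (k : ℝ) * ε - a₁) (hδpos : 0 < δ)
    (hR : R = (a₁ + 2 * ε) / δ) (hR1 : 1 < R)
    (hRδ : R * δ = a₁ + 2 * ε)
    (hR1δ : (R + 1) * δ = ((k : ℝ) + 2) * ε + A)
    (hRδ2 : R * δ ^ 2 = 2 * (k : ℝ) * ε * (1 + ε))
    : ∀ z ∈ Icc (-(ε / a₁)) (0 : ℝ), -ε - A * z + B * z ^ 2 < 0 := by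
  have hg : 0 < γ := lt_trans (by positivity) hγ
  have hk1 : (1 : ℝ) ≤ (k : ℝ) := by exact_mod_cast hk
  have hcases : (k : ℝ) = 1 ∨ (k : ℝ) = 2 ∨ (3 : ℝ) ≤ (k : ℝ) := by
    have : k = 1 ∨ k = 2 ∨ 3 ≤ k := by omega
    rcases this with h | h | h
    · left; exact_mod_cast h
    · right; left; exact_mod_cast h
    · right; right; exact_mod_cast h
  generalize (k : ℝ) = K at *
  clear hRδ hR1δ hRδ2 hR hR1 hδ hδpos hγ
  have hsq := Real.sq_sqrt hdisc.le
  have hs0 := Real.sqrt_nonneg (((K - 2) * ε + A) ^ 2 - 8 * (K - A) * ε)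
  generalize Real.sqrt (((K - 2) * ε + A) ^ 2 - 8 * (K - A) * ε) = s at *
  have hmid : (K - 2) * ε + A ≤ 2 * a₁ := by linarith
  have hp : a₁ ^ 2 - ((K - 2) * ε + A) * a₁ + 2 * (K - A) * ε = 0 := by
    rw [ha₁]; linear_combination hsq / 4
  clear ha₁ hsq hs0 hdisc
  have low : ∀ x, x ^ 2 - ((K - 2) * ε + A) * x + 2 * (K - A) * ε < 0 → x < a₁ := by
    intro x hx
    by_contra hc
    push Not at hc
    nlinarith [mul_nonneg (sub_nonneg.2 hc) (by linarith : 0 ≤ x + a₁ - ((K - 2) * ε + A))]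
  have high : ∀ x, 0 < x ^ 2 - ((K - 2) * ε + A) * x + 2 * (K - A) * ε →
      (K - 2) * ε + A < 2 * x → a₁ < x := by
    intro x hx hm
    by_contra hc
    push Not at hc
    nlinarith [mul_nonneg (sub_nonneg.2 hc) (by linarith : 0 ≤ x + a₁ - ((K - 2) * ε + A))]
  rintro z ⟨hz1, hz0⟩
  rcases le_or_gt a₁ 0 with ha | ha
  · have h1 : ε / a₁ ≤ 0 := div_nonpos_of_nonneg_of_nonpos hεpos.le ha
    have h2 : z = 0 := by linarith
    subst h2; simp; exact hεpos
  obtain ⟨w, rfl⟩ : ∃ w, z = -w := ⟨-z, by ring⟩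
  have hw0 : 0 ≤ w := by linarith
  have hw1 : a₁ * w ≤ ε := by
    have : w ≤ ε / a₁ := by linarith
    rw [le_div_iff₀ ha] at this
    linarith
  rcases hw0.eq_or_lt with hw | hw
  · rw [← hw]; simp; exact hεpos
  rcases le_or_gt B 0 with hB0 | hB0
  · have hA2 : 2 < A := by
      have : 0 < (2 * ℓ - K) * γ := mul_pos (by linarith) hg
      nlinarith
    have hAa : A < a₁ := by
      apply low
      nlinarith [mul_pos (mul_pos (by linarith : 0 < K) hεpos) (by linarith : 0 < A - 2)]
    nlinarith [mul_pos (sub_pos.2 hAa) hw, mul_nonneg (neg_nonneg.2 hB0) (sq_nonneg w)]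
  have key : 4 * K + 1 - ℓ - 2 * A < (K - 2) * a₁ := by
    rcases hcases with h | h | h
    · subst h
      have : a₁ < 2 * A + ℓ - 5 := by
        have e1 : 0 < (2 * ℓ - 1) * γ := mul_pos (by linarith) hg
        apply high
        · have h1 : 0 < (9 * ℓ - 2) * (ℓ - 1) * γ ^ 2 :=
            mul_pos (mul_pos (by linarith) (by linarith)) (by positivity)
          have h2 : 0 < (ℓ - 1) * ((2 * ℓ - 1) * γ) := mul_pos (by linarith) e1
          have h3 : 0 < (ℓ - 1) ^ 2 := pow_pos (by linarith) 2
          have : (2 * A + ℓ - 5) ^ 2 - ((1 - 2) * ε + A) * (2 * A + ℓ - 5) + 2 * (1 - A) * ε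
            = (9 * ℓ - 2) * (ℓ - 1) * γ ^ 2 + 3 * ((ℓ - 1) * ((2 * ℓ - 1) * γ)) + (ℓ - 1) ^ 2 := by
            rw [hA, hε]; ring
          linarith
        · nlinarith
      linarith
    · subst h
      have : 0 < (ℓ - 1) * γ := mul_pos (by linarith) hg
      nlinarith
    · have hc : 0 < K - 2 := by linarith
      obtain ⟨N, hN⟩ : ∃ N, N = 4 * K + 1 - ℓ - 2 * A := ⟨_, rfl⟩
      obtain ⟨M, hM⟩ : ∃ M, M = 4 * K + 1 - ℓ - K * A := ⟨_, rfl⟩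
      rw [← hN]
      rcases le_or_gt N 0 with hN0 | hN0
      · exact lt_of_le_of_lt hN0 (mul_pos hc ha)
      have main : N * M < ε * (K - 2) ^ 2 * B := by
        rcases le_or_gt M 0 with hM0 | hM0
        · have : 0 < ε * (K - 2) ^ 2 * B := by positivity
          nlinarith [mul_nonneg hN0.le (neg_nonneg.2 hM0)]
        have hM' : M = K * ((K - 2 * ℓ) * γ) - (K ^ 2 - 2 * K - 1 + ℓ) := by
          rw [hM, hA]; ring
        have hN' : N = 2 * ((K - 2 * ℓ) * γ) + (2 * K - 3 - ℓ) := by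
          rw [hN, hA]; ring
        have hKl : 0 < K - 2 * ℓ := by
          by_contra hcon
          push Not at hcon
          have : 0 ≤ K * ((2 * ℓ - K) * γ) :=
            mul_nonneg (by linarith) (mul_nonneg (by linarith) hg.le)
          nlinarith
        have b1 : M ≤ K * ((K - 2 * ℓ) * γ - (K - 2)) := by rw [hM']; nlinarith
        have b2 : N ≤ 2 * ((K - 2 * ℓ) * γ + (K - 2)) := by rw [hN']; nlinarith
        have b3 : N * M ≤ 2 * ((K - 2 * ℓ) * γ + (K - 2)) * (K * ((K - 2 * ℓ) * γ - (K - 2))) :=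
          mul_le_mul b2 b1 hM0.le (by linarith)
        have b4 : (K - 2 * ℓ) ^ 2 ≤ (K - 2) ^ 2 := by nlinarith
        have b5 : 2 * K * γ ^ 2 * (K - 2 * ℓ) ^ 2 ≤ 2 * K * γ ^ 2 * (K - 2) ^ 2 :=
          mul_le_mul_of_nonneg_left b4 (by positivity)
        have b6 : 2 * K ≤ ℓ * B := by
          rw [hB]; nlinarith [mul_nonneg (by linarith : 0 ≤ ℓ - 1) (by linarith : 0 ≤ 2 * K - ℓ)]
        have b7 : 2 * K * γ ^ 2 - 2 * K < ε * B := by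
          have := mul_le_mul_of_nonneg_right b6 (sq_nonneg γ)
          have hB2 : B < 2 * K := by linarith
          have hexp : ε * B = ℓ * B * γ ^ 2 - B := by rw [hε]; ring
          linarith
        have b8 := mul_lt_mul_of_pos_right b7 (pow_pos hc 2)
        nlinarith
      have : N / (K - 2) < a₁ := by
        apply low
        have e : (N / (K - 2)) ^ 2 - ((K - 2) * ε + A) * (N / (K - 2)) + 2 * (K - A) * ε
            = (N * M - ε * (K - 2) ^ 2 * B) / (K - 2) ^ 2 := by
          have hc' := hc.ne'
          have hMN : M = N - (K - 2) * A := by rw [hM, hN]; ring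
          field_simp
          rw [hMN, hN, hB]; ring
        rw [e]
        exact div_neg_of_neg_of_pos (by linarith) (by positivity)
      rw [div_lt_iff₀ hc] at this
      linarith
  have hQ : B * ε < a₁ ^ 2 - A * a₁ := by
    have := mul_pos (sub_pos.2 key) hεpos
    rw [hB]; nlinarith
  have hAa : A < a₁ := by
    have := mul_pos hB0 hεpos
    by_contra hcon
    push Not at hcon
    nlinarith
  have h1 : 0 ≤ (ε - a₁ * w) * (ε + (a₁ - A) * w) :=
    mul_nonneg (by linarith) (add_nonneg hεpos.le (mul_nonneg (by linarith) hw.le))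
  have h2 := mul_lt_mul_of_pos_right hQ (pow_pos hw 2)
  have h3 : ε * (-ε - A * (-w) + B * (-w) ^ 2) < 0 := by nlinarith
  by_contra hcon
  push Not at hcon
  have := mul_nonneg hεpos.le hcon
  linarith
end

section
/- Let k > 0, ℓ > 1 and γ > 1/√ℓ be reals; set ε := ℓγ² − 1, A := k + 2 − (k − 2ℓ)γ, B := 2k + 1 − ℓ, u_g(z) := ℓ(z + γ)² − (1 − z)² and z_g := (1 − √ℓ·γ)/(√ℓ + 1). Then for every real z: −Δ_z(z, u_g(z)) = −kz(z + γ)·((ℓ+1)z + ℓγ − 1) and 𝓛(u_g)(z) = 2kℓ(1 − ℓ)·z·(z + γ)³; consequently 𝓛(u_g)(z) > 0 and Δ_z(z, u_g(z)) < 0 for every z ∈ [z_g, 0). -/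
open Set

/-- The barrier computation on the sonic curve `u = u_g(z)`: explicit formulas for
`−Δ_z(z, u_g(z))` and `𝓛(u_g)(z)`, and the resulting signs on `[z_g, 0)`. -/
theorem ug_barrier_computation (k ℓ γ : ℝ) (hk : 0 < k) (hℓ : 1 < ℓ)
    (hγ : 1 / Real.sqrt ℓ < γ)
    (ε A B zg : ℝ)
    (hε : ε = ℓ * γ ^ 2 - 1)
    (hA : A = k + 2 - (k - 2 * ℓ) * γ)
    (hB : B = 2 * k + 1 - ℓ)
    (hzg : zg = (1 - Real.sqrt ℓ * γ) / (Real.sqrt ℓ + 1))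
    (f ug : ℝ → ℝ)
    (hf : ∀ z : ℝ, f z = -ε - A * z + B * z ^ 2)
    (hug : ∀ z : ℝ, ug z = ℓ * (z + γ) ^ 2 - (1 - z) ^ 2)
    (Δz Δu : ℝ → ℝ → ℝ)
    (hΔz : ∀ z u : ℝ, Δz z u = ((k + 1) * z - 1) * u + (z - 1) * f z)
    (hΔu : ∀ z u : ℝ, Δu z u = 2 * u * (u + f z + k * z * (1 - z)))
    (L : ℝ → ℝ)
    (hL : ∀ z : ℝ, L z = -(Δz z (ug z)) * deriv ug z + Δu z (ug z)) :
    (∀ z : ℝ,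
      -(Δz z (ug z)) = -(k * z * (z + γ) * ((ℓ + 1) * z + ℓ * γ - 1)) ∧
      L z = 2 * k * ℓ * (1 - ℓ) * z * (z + γ) ^ 3) ∧
    (∀ z ∈ Ico zg (0 : ℝ), 0 < L z ∧ Δz z (ug z) < 0) := by
  have hder : ∀ z : ℝ, deriv ug z = 2 * ℓ * (z + γ) + 2 * (1 - z) := by
    intro z
    have hfun : ug = fun z => ℓ * (z + γ) ^ 2 - (1 - z) ^ 2 := funext hug
    rw [hfun]
    have h1 : HasDerivAt (fun z : ℝ => z + γ) 1 z := (hasDerivAt_id z).add_const γ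
    have h2 : HasDerivAt (fun z : ℝ => 1 - z) (-1) z := (hasDerivAt_id z).const_sub 1
    have h3 := ((h1.pow 2).const_mul ℓ).sub (h2.pow 2)
    refine (h3.congr_deriv ?_).deriv
    push_cast
    ring
  have hmain : ∀ z : ℝ,
      -(Δz z (ug z)) = -(k * z * (z + γ) * ((ℓ + 1) * z + ℓ * γ - 1)) ∧
      L z = 2 * k * ℓ * (1 - ℓ) * z * (z + γ) ^ 3 := by
    intro z
    constructor
    · rw [hΔz, hf, hug, hε, hA, hB]
      ring
    · rw [hL, hder, hΔz, hΔu, hf, hug, hε, hA, hB]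
      ring
  refine ⟨hmain, ?_⟩
  rintro z ⟨hz1, hz0⟩
  obtain ⟨e1, e2⟩ := hmain z
  have hs1 : 1 < Real.sqrt ℓ := by
    rw [Real.lt_sqrt (by norm_num)]
    linarith
  have hss : Real.sqrt ℓ * Real.sqrt ℓ = ℓ := Real.mul_self_sqrt (by linarith)
  rw [hzg, div_le_iff₀ (by linarith)] at hz1
  have hw1 : 1 - z ≤ Real.sqrt ℓ * (z + γ) := by linarith
  have hw : 0 < z + γ := by
    by_contra h
    push Not at h
    nlinarith
  have hq : 0 < (ℓ + 1) * z + ℓ * γ - 1 := by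
    have : Real.sqrt ℓ * (z + γ) < ℓ * (z + γ) :=
      mul_lt_mul_of_pos_right (by nlinarith) hw
    linarith
  constructor
  · rw [e2]
    have : 0 < 2 * k * ℓ * (ℓ - 1) * (-z) * (z + γ) ^ 3 := by
      have h1 : 0 < ℓ - 1 := by linarith
      have h2 : 0 < -z := by linarith
      have h3 : 0 < ℓ := by linarith
      positivity
    linarith
  · have : 0 < k * (-z) * (z + γ) * ((ℓ + 1) * z + ℓ * γ - 1) := by
      have h2 : 0 < -z := by linarith
      exact mul_pos (mul_pos (mul_pos hk h2) hw) hq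
    linarith
end

section
/- Under the standard sonic-point setup with higher Taylor coefficients, let u_g(z) := ℓ(z + γ)² − (1 − z)² and z_g := (1 − √ℓ·γ)/(√ℓ + 1). Then: (i) u_g(z) > ε + a₁z for every z < 0; (ii) −γ < z_g < −ε/a₁; (iii) if a₂ > 0 and a₃ > 0, then ε + a₁z < ε + a₁z + a₂z² + a₃z³ for every z ∈ (−a₂/a₃, 0), and ε + a₁z ≥ ε + a₁z + a₂z² + a₃z³ for every z ≤ −a₂/a₃. -/
open Set

/-- Relative positions of the barrier functions: `u_g` lies above `u_(1)(z) = ε + a₁z`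
for `z < 0`, the location of `z_g`, and comparison of `u_(1)` with `u_(3)`. -/
theorem relative_positions_barriers
    (k : ℕ) (hk : 1 ≤ k) (ℓ γ ε A B a₁ δ R : ℝ)
    (hℓ : 1 < ℓ) (hγ : 1 / Real.sqrt ℓ < γ)
    (hε : ε = ℓ * γ ^ 2 - 1) (hεpos : 0 < ε)
    (hA : A = (k : ℝ) + 2 - ((k : ℝ) - 2 * ℓ) * γ)
    (hB : B = 2 * (k : ℝ) + 1 - ℓ)
    (hdisc : 0 < (((k : ℝ) - 2) * ε + A) ^ 2 - 8 * ((k : ℝ) - A) * ε)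
    (ha₁ : a₁ = ((((k : ℝ) - 2) * ε + A)
        + Real.sqrt ((((k : ℝ) - 2) * ε + A) ^ 2 - 8 * ((k : ℝ) - A) * ε)) / 2)
    (hδ : δ = A + (k : ℝ) * ε - a₁) (hδpos : 0 < δ)
    (hR : R = (a₁ + 2 * ε) / δ) (hR1 : 1 < R)
    (hRδ : R * δ = a₁ + 2 * ε)
    (hR1δ : (R + 1) * δ = ((k : ℝ) + 2) * ε + A)
    (hRδ2 : R * δ ^ 2 = 2 * (k : ℝ) * ε * (1 + ε))
    (a₂ B₁ a₃ : ℝ)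
    (ha₂ : a₂ = (((k : ℝ) - 1) * a₁ ^ 2 - (B - A + 2 * (k : ℝ)) * a₁ + 2 * ((k : ℝ) - B) * ε)
        / ((R - 2) * δ))
    (hB₁ : B₁ = (3 * (k : ℝ) - 1) * a₁ - 2 * a₂ - 2 * ((k : ℝ) + B))
    (ha₃ : a₃ = (B₁ * a₂ + (ℓ - 1) * a₁) / ((R - 3) * δ))
    (zg : ℝ) (hzg : zg = (1 - Real.sqrt ℓ * γ) / (Real.sqrt ℓ + 1)) :
    (∀ z : ℝ, z < 0 → ε + a₁ * z < ℓ * (z + γ) ^ 2 - (1 - z) ^ 2) ∧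
    (-γ < zg ∧ zg < -(ε / a₁)) ∧
    (0 < a₂ → 0 < a₃ →
      (∀ z ∈ Ioo (-(a₂ / a₃)) (0 : ℝ),
        ε + a₁ * z < ε + a₁ * z + a₂ * z ^ 2 + a₃ * z ^ 3) ∧
      (∀ z : ℝ, z ≤ -(a₂ / a₃) →
        ε + a₁ * z + a₂ * z ^ 2 + a₃ * z ^ 3 ≤ ε + a₁ * z)) := by
  have hs0 : 0 < Real.sqrt ℓ := Real.sqrt_pos.mpr (by linarith)
  have hγ0 : 0 < γ := lt_trans (by positivity) hγ
  have hk0 : (0 : ℝ) < k := by exact_mod_cast hk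
  have hm : 2 * ℓ * γ + 2 < a₁ := by
    have h1 : 2 * (2 * ℓ * γ + 2) - (((k : ℝ) - 2) * ε + A)
        < Real.sqrt ((((k : ℝ) - 2) * ε + A) ^ 2 - 8 * ((k : ℝ) - A) * ε) := by
      apply Real.lt_sqrt_of_sq_lt
      have h2 : (((k : ℝ) - 2) * ε + A) ^ 2 - 8 * ((k : ℝ) - A) * ε
          - (2 * (2 * ℓ * γ + 2) - (((k : ℝ) - 2) * ε + A)) ^ 2
          = 8 * (k : ℝ) * γ * (ℓ * γ ^ 2 * (ℓ - 1)) := by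
        rw [hA, hε]; ring
      have h3 : 0 < 8 * (k : ℝ) * γ * (ℓ * γ ^ 2 * (ℓ - 1)) := by
        have h4 : 0 < ℓ - 1 := by linarith
        have h5 : 0 < ℓ := by linarith
        positivity
      linarith
    linarith
  have hss : Real.sqrt ℓ ^ 2 = ℓ := Real.sq_sqrt (by linarith)
  have hs1 : 1 < Real.sqrt ℓ := by
    rw [Real.lt_sqrt (by norm_num)]; linarith
  have hsγ : 1 < Real.sqrt ℓ * γ := by
    rw [div_lt_iff₀ hs0] at hγ; linarith
  have ha0 : 0 < a₁ := by
    have : 0 < ℓ * γ := mul_pos (by linarith) hγ0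
    linarith
  refine ⟨?_, ⟨?_, ?_⟩, ?_⟩
  · intro z hz
    have h1 : 0 < (-z) * (a₁ - (2 * ℓ * γ + 2)) := mul_pos (by linarith) (by linarith)
    have h2 : 0 ≤ (ℓ - 1) * z ^ 2 := mul_nonneg (by linarith) (sq_nonneg z)
    rw [hε]; linarith
  · rw [hzg, lt_div_iff₀ (by linarith)]
    linarith
  · rw [hzg, ← neg_div, div_lt_div_iff₀ (by linarith) ha0]
    have hfac : ε = (Real.sqrt ℓ * γ - 1) * (Real.sqrt ℓ * γ + 1) := by
      rw [hε]; linear_combination (-γ ^ 2) * hss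
    have h1 : 0 < (Real.sqrt ℓ * γ - 1) * (Real.sqrt ℓ - 1) :=
      mul_pos (by linarith) (by linarith)
    have h2 : (Real.sqrt ℓ + 1) * (Real.sqrt ℓ * γ + 1) < a₁ := by
      have h0 : Real.sqrt ℓ ^ 2 * γ = ℓ * γ := by rw [hss]
      nlinarith
    have h3 : 0 < (Real.sqrt ℓ * γ - 1) * (a₁ - (Real.sqrt ℓ + 1) * (Real.sqrt ℓ * γ + 1)) :=
      mul_pos (by linarith) (by linarith)
    rw [hfac]; linarith
  · intro h2 h3
    refine ⟨?_, ?_⟩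
    · rintro z ⟨hz1, hz2⟩
      rw [← neg_div, div_lt_iff₀ h3] at hz1
      have : 0 < z ^ 2 * (a₂ + a₃ * z) := mul_pos (by nlinarith) (by linarith)
      linarith
    · intro z hz
      rw [← neg_div, le_div_iff₀ h3] at hz
      have : 0 ≤ z ^ 2 * (-(a₂ + a₃ * z)) := mul_nonneg (sq_nonneg z) (by linarith)
      linarith
end

section
/- Under the standard sonic-point setup with higher Taylor coefficients, assume k = 1 and 3 ≤ R ≤ 4. Then B₂ > 0. -/
open Set

lemma aux_c (R : ℝ) (hR3 : 3 ≤ R) : 0 < R ^ 3 - 3 * R ^ 2 + 3 * R + 3 := by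
  have : 0 ≤ R ^ 2 * (R - 3) := mul_nonneg (sq_nonneg R) (by linarith)
  linarith

lemma aux_P (R : ℝ) (hR3 : 3 ≤ R) (hR4 : R ≤ 4) :
    0 < -R ^ 3 + 21 / 2 * R ^ 2 - R / 2 - 3 := by
  have : 0 ≤ R ^ 2 * (4 - R) := mul_nonneg (sq_nonneg R) (by linarith)
  nlinarith

lemma aux_P2 (R : ℝ) (hR3 : 3 ≤ R) (hR4 : R ≤ 4) :
    2 * R * (15 * R - 11 - R ^ 2) ^ 2 < (-R ^ 3 + 21 / 2 * R ^ 2 - R / 2 - 3) ^ 2 := by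
  obtain ⟨u, rfl⟩ : ∃ u, R = 3 + u := ⟨R - 3, by ring⟩
  have hu0 : 0 ≤ u := by linarith
  have hu1 : u ≤ 1 := by linarith
  have h4 : u ^ 4 ≤ u ^ 2 := pow_le_pow_of_le_one hu0 hu1 (by norm_num)
  have h5 : u ^ 5 ≤ u ^ 2 := pow_le_pow_of_le_one hu0 hu1 (by norm_num)
  have h2 : 0 ≤ u ^ 2 := by positivity
  have h3 : 0 ≤ u ^ 3 := by positivity
  have h6 : 0 ≤ u ^ 6 := by positivity
  linarith

/-- For `k = 1` and `R ∈ [3, 4]`, the coefficient `B₂` is positive. -/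
theorem B2_pos_k_eq_one
    (k : ℕ) (hk : 1 ≤ k) (ℓ γ ε A B a₁ δ R : ℝ)
    (hℓ : 1 < ℓ) (hγ : 1 / Real.sqrt ℓ < γ)
    (hε : ε = ℓ * γ ^ 2 - 1) (hεpos : 0 < ε)
    (hA : A = (k : ℝ) + 2 - ((k : ℝ) - 2 * ℓ) * γ)
    (hB : B = 2 * (k : ℝ) + 1 - ℓ)
    (hdisc : 0 < (((k : ℝ) - 2) * ε + A) ^ 2 - 8 * ((k : ℝ) - A) * ε)
    (ha₁ : a₁ = ((((k : ℝ) - 2) * ε + A)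
        + Real.sqrt ((((k : ℝ) - 2) * ε + A) ^ 2 - 8 * ((k : ℝ) - A) * ε)) / 2)
    (hδ : δ = A + (k : ℝ) * ε - a₁) (hδpos : 0 < δ)
    (hR : R = (a₁ + 2 * ε) / δ) (hR1 : 1 < R)
    (hRδ : R * δ = a₁ + 2 * ε)
    (hR1δ : (R + 1) * δ = ((k : ℝ) + 2) * ε + A)
    (hRδ2 : R * δ ^ 2 = 2 * (k : ℝ) * ε * (1 + ε))
    (a₂ B₂ : ℝ)
    (ha₂ : a₂ = (((k : ℝ) - 1) * a₁ ^ 2 - (B - A + 2 * (k : ℝ)) * a₁ + 2 * ((k : ℝ) - B) * ε)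
        / ((R - 2) * δ))
    (hB₂ : B₂ = -5 * a₂ + 4 * (k : ℝ) * a₁ - (2 * (k : ℝ) + A + 3 * B))
    (hk1 : k = 1) (hR3 : 3 ≤ R) (hR4 : R ≤ 4) :
    0 < B₂ := by
  subst hk1
  norm_num at hA hB hR1δ hRδ2 ha₂ hB₂ hRδ
  obtain ⟨E, hE⟩ : ∃ E, E = 1 + ε := ⟨_, rfl⟩
  have hEpos : 0 < E := by linarith
  obtain rfl : ε = E - 1 := by linarith
  have hRpos : 0 < R := by linarith
  have hW : (R + 1) * δ - 3 * E = (2 * ℓ - 1) * γ := by rw [hR1δ, hA]; ring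
  have hEl : E = ℓ * γ ^ 2 := by linarith
  have hδ2 : R * δ ^ 2 = 2 * E * (E - 1) := by rw [hRδ2]; ring
  have hlE : 4 * (ℓ - 1) * E ≤ ((R + 1) * δ - 3 * E) ^ 2 := by
    rw [hW, hEl]; linarith [sq_nonneg γ]
  have hb : 0 < 15 * R - 11 - R ^ 2 := by
    linarith [mul_nonneg (sub_nonneg.2 hR3) (sub_nonneg.2 hR4)]
  have hc := aux_c R hR3
  have hP := aux_P R hR3 hR4
  have hP2 := aux_P2 R hR3 hR4
  have hlt : R * δ ^ 2 < 2 * E ^ 2 := by linarith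
  have h1 : R * ((15 * R - 11 - R ^ 2) * δ) < (-R ^ 3 + 21 / 2 * R ^ 2 - R / 2 - 3) * E := by
    apply lt_of_pow_lt_pow_left₀ 2 (by positivity)
    calc (R * ((15 * R - 11 - R ^ 2) * δ)) ^ 2
        = R * (15 * R - 11 - R ^ 2) ^ 2 * (R * δ ^ 2) := by ring
      _ ≤ R * (15 * R - 11 - R ^ 2) ^ 2 * (2 * E ^ 2) := by gcongr
      _ = 2 * R * (15 * R - 11 - R ^ 2) ^ 2 * E ^ 2 := by ring
      _ < (-R ^ 3 + 21 / 2 * R ^ 2 - R / 2 - 3) ^ 2 * E ^ 2 := by gcongr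
      _ = _ := by ring
  have h2 : (R ^ 3 - 3 * R ^ 2 + 3 * R + 3) * (R * δ ^ 2)
      < (R ^ 3 - 3 * R ^ 2 + 3 * R + 3) * (2 * E ^ 2) := by gcongr
  have hG : 0 < (15 / 2 * R + 5 / 2) * E ^ 2 - (15 * R - 11 - R ^ 2) * E * δ
      - (R ^ 3 - 3 * R ^ 2 + 3 * R + 3) / 2 * δ ^ 2 := by
    refine pos_of_mul_pos_right (a := R) ?_ hRpos.le
    have h3 := mul_lt_mul_of_pos_right h1 hEpos
    linarith
  have hF : 0 < 14 * R + 22 + 20 * (R + 1) * (E - 1) - (2 * R ^ 2 + 27 * R - 2) * δ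
      - (2 * R + 6) * ℓ := by
    refine pos_of_mul_pos_right (a := E) ?_ hEpos.le
    have h4 := mul_le_mul_of_nonneg_left hlE (by linarith : 0 ≤ (R + 3) / 2)
    refine lt_of_lt_of_le hG ?_
    linear_combination h4 + (10 * (R + 1) - (6 * R + 8)) * hδ2
  have hD : 0 < (R - 2) * δ := mul_pos (by linarith) hδpos
  refine pos_of_mul_pos_right (a := (R - 2) * δ) ?_ hD.le
  have ha : a₂ * ((R - 2) * δ) = -(B - A + 2) * a₁ + 2 * (1 - B) * (E - 1) := by
    rw [ha₂, div_mul_cancel₀ _ hD.ne']; ring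
  obtain rfl : a₁ = R * δ - 2 * (E - 1) := by linarith
  obtain rfl : A = (R + 1) * δ - 3 * (E - 1) := by linarith
  subst hB
  have hfin : (R - 2) * δ * B₂ = δ * (14 * R + 22 + 20 * (R + 1) * (E - 1)
      - (2 * R ^ 2 + 27 * R - 2) * δ - (2 * R + 6) * ℓ) := by
    rw [hB₂]
    linear_combination -5 * ha + 15 * hδ2
  rw [hfin]
  exact mul_pos hδpos hF
end

section
/- Let k ≥ 2 be an integer and let ℓ be a real number with 1 < ℓ < k; set B := 2k + 1 − ℓ and μ := (k+2)² − (k−2ℓ)²/ℓ. Define, for R > 0, g_k(R) := 2(k+1)R + k² − 11k − 22 + (8k² + 23k + 16)/R + 2k/R², h_{k,ℓ}(R) := 2(4k + B)R + 4k(k+5) + (k+10)B − 8μ + ((k+4)(2k+3B) + μ)/R, and h*_{k,ℓ}(R) := h_{k,ℓ}(R) − 2g_k(R). Then for every R ∈ [3, 4]: the derivative g_k′(R) ≤ 0, g_k(R) > 0, and the derivative (h*_{k,ℓ})′(R) > 0. -/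
open Set

/-- Monotonicity properties on `[3, 4]` of the rational functions `g_k`, `h_{k,ℓ}` and
`h*_{k,ℓ} = h_{k,ℓ} − 2 g_k` arising in the expansion of `B₂`. -/
theorem g_h_monotonicity (k : ℕ) (hk : 2 ≤ k) (ℓ : ℝ) (hℓ : 1 < ℓ) (hℓk : ℓ < (k : ℝ))
    (B μ : ℝ)
    (hB : B = 2 * (k : ℝ) + 1 - ℓ)
    (hμ : μ = ((k : ℝ) + 2) ^ 2 - ((k : ℝ) - 2 * ℓ) ^ 2 / ℓ)
    (g h hstar : ℝ → ℝ)
    (hg : ∀ R : ℝ, g R = 2 * ((k : ℝ) + 1) * R + (k : ℝ) ^ 2 - 11 * (k : ℝ) - 22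
        + (8 * (k : ℝ) ^ 2 + 23 * (k : ℝ) + 16) / R + 2 * (k : ℝ) / R ^ 2)
    (hh : ∀ R : ℝ, h R = 2 * (4 * (k : ℝ) + B) * R + 4 * (k : ℝ) * ((k : ℝ) + 5)
        + ((k : ℝ) + 10) * B - 8 * μ + (((k : ℝ) + 4) * (2 * (k : ℝ) + 3 * B) + μ) / R)
    (hhstar : ∀ R : ℝ, hstar R = h R - 2 * g R) :
    ∀ R ∈ Icc (3 : ℝ) 4, deriv g R ≤ 0 ∧ 0 < g R ∧ 0 < deriv hstar R := by
  intro R hR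
  obtain ⟨h3, h4⟩ := hR
  have hR0 : 0 < R := by linarith
  have hRne : R ≠ 0 := hR0.ne'
  have hk2 : (2 : ℝ) ≤ (k : ℝ) := by exact_mod_cast hk
  generalize (k : ℝ) = x at *
  -- general derivative computation
  have key : ∀ a b c d : ℝ, HasDerivAt (fun y : ℝ => a * y + b + c / y + d / y ^ 2)
      (a - c / R ^ 2 - 2 * d / R ^ 3) R := by
    intro a b c d
    have h1 : HasDerivAt (fun y : ℝ => a * y + b) a R := by
      simpa using ((hasDerivAt_id R).const_mul a).add_const b
    have h2 := (hasDerivAt_const R c).div (hasDerivAt_id R) hRne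
    have h5 := (hasDerivAt_const R d).div (hasDerivAt_pow 2 R) (pow_ne_zero 2 hRne)
    refine ((h1.add h2).add h5).congr_deriv ?_
    simp only [id]
    field_simp
    push_cast
    ring
  have hgd : deriv g R = 2 * (x + 1) - (8 * x ^ 2 + 23 * x + 16) / R ^ 2
      - 2 * (2 * x) / R ^ 3 := by
    rw [← (key (2 * (x + 1)) (x ^ 2 - 11 * x - 22) (8 * x ^ 2 + 23 * x + 16) (2 * x)).deriv]
    congr 1
    funext y
    rw [hg]
    ring
  have hsd : deriv hstar R = (2 * (4 * x + B) - 4 * (x + 1))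
      - (((x + 4) * (2 * x + 3 * B) + μ) - 2 * (8 * x ^ 2 + 23 * x + 16)) / R ^ 2
      - 2 * (-(4 * x)) / R ^ 3 := by
    rw [← (key (2 * (4 * x + B) - 4 * (x + 1))
      (4 * x * (x + 5) + (x + 10) * B - 8 * μ - 2 * (x ^ 2 - 11 * x - 22))
      (((x + 4) * (2 * x + 3 * B) + μ) - 2 * (8 * x ^ 2 + 23 * x + 16)) (-(4 * x))).deriv]
    congr 1
    funext y
    rw [hhstar, hh, hg]
    ring
  refine ⟨?_, ?_, ?_⟩
  · rw [hgd]
    have e : 2 * (x + 1) - (8 * x ^ 2 + 23 * x + 16) / R ^ 2 - 2 * (2 * x) / R ^ 3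
        = (2 * (x + 1) * R ^ 3 - (8 * x ^ 2 + 23 * x + 16) * R - 4 * x) / R ^ 3 := by
      field_simp
      ring
    rw [e]
    apply div_nonpos_of_nonpos_of_nonneg _ (by positivity)
    have a1 : R ^ 2 ≤ 16 := by nlinarith
    have a2 : 0 ≤ (x + 1) * R * (16 - R ^ 2) :=
      mul_nonneg (by positivity) (by linarith)
    have a3 : 0 ≤ (x - 2) * (x + 1) * R :=
      mul_nonneg (mul_nonneg (by linarith) (by linarith)) hR0.le
    have a4 : 0 ≤ x * (4 - R) := mul_nonneg (by linarith) (by linarith)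
    linarith
  · have e : g R = ((2 * (x + 1) * R ^ 2 + (x ^ 2 - 11 * x - 22) * R
        + (8 * x ^ 2 + 23 * x + 16)) * R + 2 * x) / R ^ 2 := by
      rw [hg]
      field_simp
      ring
    rw [e]
    apply div_pos _ (by positivity)
    have a1 : 0 ≤ (x - 2) ^ 2 * (R + 8) := by positivity
    have a2 : 0 ≤ (x - 2) * (2 * R ^ 2 - 7 * R + 55) :=
      mul_nonneg (by linarith) (by nlinarith)
    have a3 : 0 < 6 * R ^ 2 - 40 * R + 94 := by nlinarith [sq_nonneg (3 * R - 10)]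
    have a4 : 0 < 2 * (x + 1) * R ^ 2 + (x ^ 2 - 11 * x - 22) * R
        + (8 * x ^ 2 + 23 * x + 16) := by linarith
    have a5 := mul_pos a4 hR0
    linarith
  · rw [hsd]
    have m : μ ≤ (x + 2) ^ 2 := by
      have : 0 ≤ (x - 2 * ℓ) ^ 2 / ℓ := by positivity
      linarith
    have c1 : 0 < 2 * (4 * x + B) - 4 * (x + 1) := by rw [hB]; linarith
    have c2 : 0 ≤ 2 * (8 * x ^ 2 + 23 * x + 16) - ((x + 4) * (2 * x + 3 * B) + μ) := by
      rw [hB]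
      have : 0 ≤ x * ℓ := by positivity
      nlinarith
    have c3 := div_nonneg c2 (sq_nonneg R)
    have c4 : 0 ≤ 8 * x / R ^ 3 := by positivity
    have e : (2 * (4 * x + B) - 4 * (x + 1))
      - (((x + 4) * (2 * x + 3 * B) + μ) - 2 * (8 * x ^ 2 + 23 * x + 16)) / R ^ 2
      - 2 * (-(4 * x)) / R ^ 3 = (2 * (4 * x + B) - 4 * (x + 1))
      + (2 * (8 * x ^ 2 + 23 * x + 16) - ((x + 4) * (2 * x + 3 * B) + μ)) / R ^ 2
      + 8 * x / R ^ 3 := by ring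
    rw [e]
    linarith
end

section
/- For every integer k ≥ 2, the function ε ↦ (68k + 12)·ε − (33k + 64)·√(2k/3)·√(ε(1 + ε)) is strictly decreasing on (0, ∞). -/
open Set

/-- For every integer `k ≥ 2`, the function
`ε ↦ (68k + 12) ε − (33k + 64) √(2k/3) √(ε(1 + ε))` is strictly decreasing on `(0, ∞)`. -/
theorem f3_strictAntiOn (k : ℕ) (hk : 2 ≤ k) :
    StrictAntiOn
      (fun ε : ℝ =>
        (68 * (k : ℝ) + 12) * ε
          - (33 * (k : ℝ) + 64) * Real.sqrt (2 * (k : ℝ) / 3) * Real.sqrt (ε * (1 + ε)))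
      (Ioi (0 : ℝ)) := by
  intro a ha b hb hab
  simp only [mem_Ioi] at ha hb
  have hk' : (2 : ℝ) ≤ k := by exact_mod_cast hk
  generalize (k : ℝ) = x at hk'
  have hC : 68 * x + 12 ≤ (33 * x + 64) * Real.sqrt (2 * x / 3) := by
    refine abs_le_of_sq_le_sq' ?_ (by positivity) |>.2
    rw [mul_pow, Real.sq_sqrt (by positivity)]
    obtain ⟨t, rfl⟩ : ∃ t, x = 2 + t := ⟨x - 2, by ring⟩
    have ht : 0 ≤ t := by linarith
    have h2 := pow_nonneg ht 2
    have h3 := pow_nonneg ht 3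
    nlinarith
  have hs : Real.sqrt (a * (1 + a)) < a + 1 / 2 := by
    rw [Real.sqrt_lt' (by positivity)]
    nlinarith
  have hd : b - a + Real.sqrt (a * (1 + a)) < Real.sqrt (b * (1 + b)) := by
    have h0 := Real.sqrt_nonneg (a * (1 + a))
    have h1 : Real.sqrt (a * (1 + a)) ^ 2 = a * (1 + a) := Real.sq_sqrt (by positivity)
    apply Real.lt_sqrt_of_sq_lt
    nlinarith [mul_pos (sub_pos.2 hab) (sub_pos.2 hs)]
  show _ < _
  beta_reduce
  have hpos : 0 < 68 * x + 12 := by linarith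
  generalize (33 * x + 64) * Real.sqrt (2 * x / 3) = C at *
  nlinarith [mul_pos (lt_of_lt_of_le hpos hC) (sub_pos.2 hd),
    mul_nonneg (sub_nonneg.2 hC) (sub_pos.2 hab).le]
end

section
/- Let k > 0, m > 0 and ℓ > 1 be reals, and let v : [0,∞) → ℝ be infinitely differentiable with |v(Z)| < 1 for all Z ≥ 0 and Δ_Z(Z, v(Z))·v′(Z) = Δ_v(Z, v(Z)) for all Z ≥ 0. Then v(Z) converges as Z → +∞ to a limit v_∞ with −1 < v_∞ < 1, and the function ṽ : [0,∞) → ℝ defined by ṽ(W) := v(1/W) for W > 0 and ṽ(0) := v_∞ is infinitely differentiable on [0,∞). -/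
open Real Set Filter Topology

/-- Right-hand side of the ODE in the variable `W = 1 / Z`. -/
noncomputable def rhsF (k m ℓ W x : ℝ) : ℝ :=
  (1 - x ^ 2) * (m * (1 - x ^ 2) - k * x * (W - x)) / (ℓ * (1 - x * W) ^ 2 - (W - x) ^ 2)

lemma denom_lower (ℓ W x : ℝ) (hℓ : 1 < ℓ) (hW0 : 0 ≤ W) (hW : W < 1 / 2) (hx : |x| < 1) :
    (ℓ - 1) / 4 ≤ ℓ * (1 - x * W) ^ 2 - (W - x) ^ 2 := by
  obtain ⟨h1, h2⟩ := abs_lt.mp hx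
  have h3 : (1 / 2 : ℝ) ≤ 1 - x * W := by nlinarith
  have h4 : (1 / 4 : ℝ) ≤ (1 - x * W) ^ 2 := by nlinarith
  have h5 : 0 ≤ (1 - x ^ 2) * (1 - W ^ 2) := by
    apply mul_nonneg <;> nlinarith
  nlinarith

lemma hasDeriv_w (k m ℓ : ℝ) (hℓ : 1 < ℓ) (v : ℝ → ℝ)
    (hv : ContDiffOn ℝ (⊤ : ℕ∞) v (Ici 0))
    (hbound : ∀ Z : ℝ, 0 ≤ Z → |v Z| < 1)
    (hode : ∀ Z : ℝ, 0 ≤ Z → DeltaZ ℓ Z (v Z) * deriv v Z = Deltav m k Z (v Z))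
    (W : ℝ) (hW0 : 0 < W) (hW : W < 1 / 2) :
    HasDerivAt (fun W => v (1 / W)) (rhsF k m ℓ W (v (1 / W))) W := by
  have hZ : 0 < 1 / W := by positivity
  have hd : HasDerivAt v (deriv v (1 / W)) (1 / W) := by
    have := (hv.contDiffAt (Ici_mem_nhds hZ)).differentiableAt (by simp)
    exact this.hasDerivAt
  have hi : HasDerivAt (fun W : ℝ => 1 / W) (-(W ^ 2)⁻¹) W := by
    simpa using hasDerivAt_inv hW0.ne'
  have hc := hd.comp W hi
  have hD := denom_lower ℓ W (v (1 / W)) hℓ hW0.le hW (hbound _ hZ.le)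
  have ho := hode (1 / W) hZ.le
  refine hc.congr_deriv (Eq.symm ?_)
  have hD0 : ℓ * (1 - v (1 / W) * W) ^ 2 - (W - v (1 / W)) ^ 2 ≠ 0 := by
    have : 0 < (ℓ - 1) / 4 := by linarith
    linarith
  unfold rhsF
  unfold DeltaZ Deltav at ho
  generalize v (1 / W) = x at *
  generalize deriv v (1 / W) = d at *
  rw [div_eq_iff hD0]
  have hW1 := hW0.ne'
  field_simp at ho ⊢
  linear_combination (-1) * ho

theorem smooth_at_infinity (k m ℓ : ℝ) (hk : 0 < k) (hm : 0 < m) (hℓ : 1 < ℓ)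
    (v : ℝ → ℝ)
    (hv : ContDiffOn ℝ (⊤ : ℕ∞) v (Ici 0))
    (hbound : ∀ Z : ℝ, 0 ≤ Z → |v Z| < 1)
    (hode : ∀ Z : ℝ, 0 ≤ Z → DeltaZ ℓ Z (v Z) * deriv v Z = Deltav m k Z (v Z)) :
    ∃ vinf : ℝ, -1 < vinf ∧ vinf < 1 ∧
      Tendsto v atTop (𝓝 vinf) ∧
      ContDiffOn ℝ (⊤ : ℕ∞) (fun W : ℝ => if W = 0 then vinf else v (1 / W)) (Ici 0) := by
  have hder := hasDeriv_w k m ℓ hℓ v hv hbound hode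
  have hb : ∀ W : ℝ, 0 < W → -1 < v (1 / W) ∧ v (1 / W) < 1 := fun W hW =>
    abs_lt.mp (hbound _ (by positivity))
  -- the hyperbolic angle
  set u : ℝ → ℝ := fun W => Real.log (1 + v (1 / W)) - Real.log (1 - v (1 / W)) with hu
  have hu' : ∀ W ∈ Ioo (0 : ℝ) (1 / 2), HasDerivAt u
      (rhsF k m ℓ W (v (1 / W)) / (1 + v (1 / W)) + rhsF k m ℓ W (v (1 / W)) / (1 - v (1 / W))) W := by
    rintro W ⟨h0, h1⟩
    obtain ⟨hb1, hb2⟩ := hb W h0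
    have e1 := ((hder W h0 h1).const_add 1).log (by linarith)
    have e2 := ((hder W h0 h1).const_sub 1).log (by linarith)
    refine (e1.sub e2).congr_deriv ?_
    rw [neg_div, sub_neg_eq_add]
  set C : ℝ := 8 * (m + 2 * k) / (ℓ - 1) with hC
  have hC0 : 0 ≤ C := by
    have : 0 < ℓ - 1 := by linarith
    positivity
  have hbd : ∀ W ∈ Ioo (0 : ℝ) (1 / 2), 
      |rhsF k m ℓ W (v (1 / W)) / (1 + v (1 / W)) + rhsF k m ℓ W (v (1 / W)) / (1 - v (1 / W))| ≤ C := by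
    rintro W ⟨h0, h1⟩
    obtain ⟨hb1, hb2⟩ := hb W h0
    have hD := denom_lower ℓ W (v (1 / W)) hℓ h0.le h1 (abs_lt.mpr ⟨hb1, hb2⟩)
    unfold rhsF
    generalize v (1 / W) = x at *
    have hl : 0 < ℓ - 1 := by linarith
    have hD0 : 0 < ℓ * (1 - x * W) ^ 2 - (W - x) ^ 2 := by linarith
    generalize ℓ * (1 - x * W) ^ 2 - (W - x) ^ 2 = D at *
    have hx1 : 1 + x ≠ 0 := by linarith
    have hx2 : 1 - x ≠ 0 := by linarith
    have e : (1 - x ^ 2) * (m * (1 - x ^ 2) - k * x * (W - x)) / D / (1 + x) +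
        (1 - x ^ 2) * (m * (1 - x ^ 2) - k * x * (W - x)) / D / (1 - x)
        = 2 * (m * (1 - x ^ 2) - k * x * (W - x)) / D := by
      field_simp
      ring
    have hN : |2 * (m * (1 - x ^ 2) - k * x * (W - x))| ≤ 2 * (m + 2 * k) := by
      have hxx : x ^ 2 ≤ 1 := by nlinarith
      have hq : |x * (W - x)| ≤ 2 := by
        rw [abs_mul]
        have a1 : |x| ≤ 1 := abs_le.mpr ⟨by linarith, by linarith⟩
        have a2 : |W - x| ≤ 2 := abs_le.mpr ⟨by linarith, by linarith⟩
        nlinarith [abs_nonneg x, abs_nonneg (W - x)]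
      obtain ⟨q1, q2⟩ := abs_le.mp hq
      rw [abs_le]
      constructor <;> nlinarith [sq_nonneg x, mul_nonneg hm.le (sq_nonneg x),
        mul_nonneg hm.le (sub_nonneg.mpr hxx), mul_le_mul_of_nonneg_left q1 hk.le,
        mul_le_mul_of_nonneg_left q2 hk.le]
    rw [e, abs_div, abs_of_pos hD0, hC, div_le_div_iff₀ hD0 hl]
    nlinarith [mul_le_mul_of_nonneg_right hN hl.le,
      mul_le_mul_of_nonneg_left hD (by positivity : 0 ≤ 8 * (m + 2 * k))]
  have hLip : LipschitzOnWith C.toNNReal u (Ioo 0 (1 / 2)) := by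
    apply (convex_Ioo (0 : ℝ) (1 / 2)).lipschitzOnWith_of_nnnorm_hasDerivWithin_le
      (fun W hW => (hu' W hW).hasDerivWithinAt)
    intro W hW
    rw [← NNReal.coe_le_coe, coe_nnnorm, Real.coe_toNNReal _ hC0]
    exact hbd W hW
  obtain ⟨g, hg, hgu⟩ := hLip.extend_real
  have hgc : Continuous g := hg.continuous
  set G : ℝ → ℝ := fun W => (Real.exp (g W) - 1) / (Real.exp (g W) + 1) with hG
  have hGc : Continuous G := by
    apply Continuous.div (by fun_prop) (by fun_prop)
    intro W
    positivity
  have hGw : ∀ W ∈ Ioo (0 : ℝ) (1 / 2), v (1 / W) = G W := by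
    intro W hW
    obtain ⟨hb1, hb2⟩ := hb W hW.1
    simp only [hG]
    rw [← hgu hW, hu]
    simp only
    rw [Real.exp_sub, Real.exp_log (by linarith), Real.exp_log (by linarith)]
    have : 1 - v (1 / W) ≠ 0 := by linarith
    field_simp
    ring
  have hGb : |G 0| < 1 := by
    have := Real.exp_pos (g 0)
    simp only [hG]
    rw [abs_lt, lt_div_iff₀ (by linarith), div_lt_iff₀ (by linarith)]
    constructor <;> linarith
  set w : ℝ → ℝ := fun W => if W = 0 then G 0 else v (1 / W) with hw
  have hwG : EqOn w G (Ico 0 (1 / 2)) := by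
    intro W hW
    rcases eq_or_lt_of_le hW.1 with h | h
    · simp [hw, ← h]
    · simp only [hw, h.ne', if_false]
      exact hGw W ⟨h, hW.2⟩
  have hwb : ∀ W, 0 ≤ W → |w W| < 1 := by
    intro W hW
    by_cases h : W = 0
    · simp only [hw, h, if_true]; exact hGb
    · simp only [hw, h, if_false]; exact hbound _ (by positivity)
  have hwc : ContinuousOn w (Ico 0 (1 / 2)) := hGc.continuousOn.congr hwG
  have hF : ∀ n : ℕ∞, ContDiffOn ℝ n w (Ico 0 (1 / 2)) →
      ContDiffOn ℝ n (fun W => rhsF k m ℓ W (w W)) (Ico 0 (1 / 2)) := by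
    intro n hn
    unfold rhsF
    apply ContDiffOn.div
    · fun_prop
    · fun_prop
    · intro W hW
      have := denom_lower ℓ W (w W) hℓ hW.1 hW.2 (hwb W hW.1)
      have : 0 < (ℓ - 1) / 4 := by linarith
      linarith
  have hFc : ContinuousOn (fun W => rhsF k m ℓ W (w W)) (Ico 0 (1 / 2)) := by
    have h0 := hF 0 (contDiffOn_zero.mpr hwc)
    exact h0.continuousOn
  have hwd0 : ∀ W ∈ Ioo (0 : ℝ) (1 / 2), HasDerivAt w (rhsF k m ℓ W (w W)) W := by
    intro W hW
    have h1 : w W = v (1 / W) := by simp [hw, hW.1.ne']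
    rw [h1]
    apply (hder W hW.1 hW.2).congr_of_eventuallyEq
    filter_upwards [Ioi_mem_nhds hW.1] with y hy
    simp [hw, (show (0 : ℝ) < y from hy).ne']
  have hIoo : Ioo (0 : ℝ) (1 / 2) ∈ 𝓝[>] (0 : ℝ) := Ioo_mem_nhdsGT (by norm_num)
  have hwd : ∀ W ∈ Ico (0 : ℝ) (1 / 2),
      HasDerivWithinAt w (rhsF k m ℓ W (w W)) (Ico 0 (1 / 2)) W := by
    intro W hW
    rcases eq_or_lt_of_le hW.1 with h | h
    · subst h
      have : HasDerivWithinAt w (rhsF k m ℓ 0 (w 0)) (Ici 0) 0 := by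
        apply hasDerivWithinAt_Ici_of_tendsto_deriv (s := Ioo 0 (1 / 2))
        · intro y hy
          exact (hwd0 y hy).differentiableAt.differentiableWithinAt
        · exact (hwc 0 hW).mono Ioo_subset_Ico_self
        · exact hIoo
        · have h2 : Tendsto (fun W => rhsF k m ℓ W (w W)) (𝓝[>] 0) (𝓝 (rhsF k m ℓ 0 (w 0))) := by
            have := (hFc 0 hW).mono Ioo_subset_Ico_self
            rwa [ContinuousWithinAt, nhdsWithin_Ioo_eq_nhdsGT (by norm_num)] at this
          apply h2.congr'
          filter_upwards [hIoo] with y hy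
          exact (hwd0 y hy).deriv.symm
      exact this.mono Ico_subset_Ici_self
    · exact (hwd0 W ⟨h, hW.2⟩).hasDerivWithinAt
  have hsm : ∀ n : ℕ, ContDiffOn ℝ n w (Ico 0 (1 / 2)) := by
    intro n
    induction n with
    | zero => exact contDiffOn_zero.mpr hwc
    | succ n ih =>
      push_cast
      rw [contDiffOn_succ_iff_derivWithin (uniqueDiffOn_Ico _ _)]
      refine ⟨fun W hW => (hwd W hW).differentiableWithinAt, by simp, ?_⟩
      apply (hF n ih).congr
      intro W hW
      exact (hwd W hW).derivWithin (uniqueDiffOn_Ico _ _ W hW)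
  have hsmt : ContDiffOn ℝ (⊤ : ℕ∞) w (Ico 0 (1 / 2)) := contDiffOn_infty.mpr hsm
  refine ⟨G 0, (abs_lt.mp hGb).1, (abs_lt.mp hGb).2, ?_, ?_⟩
  · have h1 : Tendsto (fun Z : ℝ => G (Z⁻¹)) atTop (𝓝 (G 0)) :=
      (hGc.tendsto 0).comp tendsto_inv_atTop_zero
    apply h1.congr'
    filter_upwards [eventually_gt_atTop 2] with Z hZ
    have hZ0 : 0 < Z := by linarith
    rw [← hGw Z⁻¹ ⟨by positivity, by rw [one_div]; exact inv_strictAnti₀ (by norm_num) hZ⟩]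
    simp
  · intro W hW
    rcases eq_or_lt_of_le (show (0 : ℝ) ≤ W from hW) with h | h
    · subst h
      have := hsmt 0 ⟨le_rfl, by norm_num⟩
      exact this.mono_of_mem_nhdsWithin (Ico_mem_nhdsGE (by norm_num))
    · have h1 : ContDiffAt ℝ (⊤ : ℕ∞) (fun W : ℝ => v (1 / W)) W := by
        have hZ : 0 < 1 / W := by positivity
        apply (hv.contDiffAt (Ici_mem_nhds hZ)).comp W
        exact contDiffAt_const.div contDiffAt_id h.ne'
      apply ContDiffAt.contDiffWithinAt
      apply h1.congr_of_eventuallyEq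
      filter_upwards [Ioi_mem_nhds h] with y hy
      simp [hw, (show (0 : ℝ) < y from hy).ne']
end
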